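/- Let 0 < θ < θ' ≤ π/2 be fixed angles. Then M(n,θ) ≤ (1+o(1))·e^{−1}·M_Lev(n−1,θ')/μ_n(θ,θ') as n → ∞; equivalently, limsup_{n→∞} M(n,θ)·μ_n(θ,θ')/M_Lev(n−1,θ') ≤ 1/e. -/

import Mathlib

open MeasureTheory Filter Real
open scoped RealInnerProductSpace

noncomputable section

/-- Generalized binomial coefficient `C(a, k)` for real `a`. -/
def genBinom (a : ℝ) (k : ℕ) : ℝ := (∏ i ∈ Finset.range k, (a - i)) / (Nat.factorial k : ℝ)

/-- The Jacobi polynomial `p_d^{α,β}`, via the standard explicit formula; it is the degree-`d`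
polynomial orthogonal to lower degrees for the weight `(1-t)^α (1+t)^β` on `[-1,1]`,
normalized by `p_d^{α,β}(1) = Γ(d+α+1)/(Γ(α+1)Γ(d+1))`. -/
def jacobiP (α β : ℝ) (d : ℕ) (x : ℝ) : ℝ :=
  ∑ s ∈ Finset.range (d + 1),
    genBinom ((d : ℝ) + α) (d - s) * genBinom ((d : ℝ) + β) s *
      ((x - 1) / 2) ^ s * ((x + 1) / 2) ^ (d - s)

/-- The largest root `t_{1,d}^{α,β}` of the Jacobi polynomial `p_d^{α,β}`. -/
def maxRoot (α β : ℝ) (d : ℕ) : ℝ := sSup {x : ℝ | jacobiP α β d x = 0}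

/-- The degree `d = d(n, θ')` determined by `t_{1,d-1}^{α+1,α+1} < cos θ' ≤ t_{1,d}^{α+1,α+1}`,
where `α = (n-3)/2`. -/
def levD (n : ℕ) (θ' : ℝ) : ℕ :=
  sInf {d : ℕ | 1 ≤ d ∧
    Real.cos θ' ≤ maxRoot (((n : ℝ) - 3) / 2 + 1) (((n : ℝ) - 3) / 2 + 1) d}

/-- Levenshtein's bound `M_Lev(n, θ')` on the size of `θ'`-spherical codes in `S^{n-1}`. -/
def MLev (n : ℕ) (θ' : ℝ) : ℝ :=
  if maxRoot (((n : ℝ) - 3) / 2 + 1) (((n : ℝ) - 3) / 2) (levD n θ') < Real.cos θ' then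
    2 * (Nat.choose (levD n θ' + n - 1) (n - 1) : ℝ)
  else
    (Nat.choose (levD n θ' + n - 1) (n - 1) : ℝ) + (Nat.choose (levD n θ' + n - 2) (n - 1) : ℝ)

/-- The maximal size `M(n, θ)` of a `θ`-spherical code in `S^{n-1}`. -/
def Mcode (n : ℕ) (θ : ℝ) : ℕ :=
  sSup {N : ℕ | ∃ A : Finset (EuclideanSpace ℝ (Fin n)), A.card = N ∧
    (∀ x ∈ A, ‖x‖ = 1) ∧ ∀ x ∈ A, ∀ y ∈ A, x ≠ y → ⟪x, y⟫ ≤ Real.cos θ}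

/-- The mass `μ_n(θ, θ')` of the spherical cap of radius `sin(θ/2)/sin(θ'/2)` in `S^{n-1}`. -/
def capMass (n : ℕ) (θ θ' : ℝ) : ℝ :=
  (∫ t in Real.sqrt ((Real.cos θ - Real.cos θ') / (1 - Real.cos θ'))..1,
      (1 - t ^ 2) ^ (((n : ℝ) - 3) / 2)) /
    (∫ t in (-1 : ℝ)..1, (1 - t ^ 2) ^ (((n : ℝ) - 3) / 2))

section
open Polynomial in
/-- Gegenbauer polynomials `C_k^{(μ)}`. -/
def gU (μ : ℝ) : ℕ → Polynomial ℝ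
  | 0 => 1
  | 1 => C (2 * μ) * X
  | (k + 2) => C (1 / ((k : ℝ) + 2)) *
      (C (2 * ((k : ℝ) + 1 + μ)) * X * gU μ (k + 1) - C ((k : ℝ) + 2 * μ) * gU μ k)

def gV (μ : ℝ) : ℕ → Polynomial ℝ
  | 0 => 1
  | (k + 1) => gU μ (k + 1) + gU μ k

def gZ (μ : ℝ) : ℕ → Polynomial ℝ
  | 0 => 1
  | 1 => gU μ 1
  | (k + 2) => gU μ (k + 2) - gU μ k

open Polynomial

lemma gU_rec (μ : ℝ) (k : ℕ) : C ((k : ℝ) + 2) * gU μ (k + 2) =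
    C (2 * ((k : ℝ) + 1 + μ)) * X * gU μ (k + 1) - C ((k : ℝ) + 2 * μ) * gU μ k := by
  rw [gU, ← mul_assoc, ← C_mul, mul_one_div_cancel (by positivity), C_1, one_mul]

lemma C_mul_cancel {c : ℝ} (hc : c ≠ 0) {p q : Polynomial ℝ} (h : C c * p = C c * q) : p = q :=
  mul_left_cancel₀ (C_ne_zero.mpr hc) h

/-- the two derivative identities -/
lemma gU_deriv (μ : ℝ) (k : ℕ) :
    derivative (gU μ (k + 1)) = X * derivative (gU μ k) + C ((k : ℝ) + 2 * μ) * gU μ k ∧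
    X * derivative (gU μ (k + 1)) - derivative (gU μ k) = C ((k : ℝ) + 1) * gU μ (k + 1) := by
  induction k with
  | zero =>
    simp [gU]
    ring
  | succ k ih =>
    obtain ⟨h1, h2⟩ := ih
    have hr := gU_rec μ k
    have hd := congrArg derivative hr
    simp only [derivative_mul, derivative_sub, derivative_C, derivative_X, zero_mul, zero_add,
      mul_one] at hd
    have hA : derivative (gU μ (k + 2)) = X * derivative (gU μ (k + 1)) +
        C (((k + 1 : ℕ) : ℝ) + 2 * μ) * gU μ (k + 1) := by
      apply C_mul_cancel (c := (k : ℝ) + 2) (by positivity)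
      rw [hd]
      push_cast
      simp only [C_add, C_mul, C_1, C_ofNat] at *
      linear_combination (C (k : ℝ) + 2 * C μ) * h2
    refine ⟨hA, ?_⟩
    apply C_mul_cancel (c := (k : ℝ) + 2) (by positivity)
    have e : C ((k : ℝ) + 2) * (C (((k + 1 : ℕ) : ℝ) + 1) * gU μ (k + 1 + 1)) =
      C ((k : ℝ) + 2) * (C ((k : ℝ) + 2) * gU μ (k + 2)) := by push_cast; ring_nf
    rw [e, hr, hA]
    push_cast
    simp only [C_add, C_mul, C_1, C_ofNat] at *
    linear_combination (C (k : ℝ) + 2) * (X * h2) - (C (k : ℝ) + 2) * h1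

/-- Gegenbauer ODE. -/
lemma gU_ode (μ : ℝ) (k : ℕ) :
    (1 - X ^ 2) * derivative (derivative (gU μ k)) - C (2 * μ + 1) * X * derivative (gU μ k)
      + C ((k : ℝ) * (k + 2 * μ)) * gU μ k = 0 := by
  cases k with
  | zero => simp [gU]
  | succ k =>
    obtain ⟨h1, h2⟩ := gU_deriv μ k
    have d1 := congrArg derivative h1
    have d2 := congrArg derivative h2
    simp only [derivative_mul, derivative_sub, derivative_add, derivative_C, derivative_X, zero_mul, zero_add,
      mul_one, one_mul] at d1 d2
    push_cast
    simp only [C_add, C_mul, C_1, C_ofNat] at *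
    linear_combination d1 - X * d2 - (C (k : ℝ) + 2 * C μ + 1) * h2

lemma gU_deriv_sub (μ : ℝ) (k : ℕ) :
    derivative (gU μ (k + 2)) - derivative (gU μ k) = C (2 * ((k : ℝ) + 1 + μ)) * gU μ (k + 1) := by
  have h1 := (gU_deriv μ (k + 1)).1
  have h2 := (gU_deriv μ k).2
  push_cast at h1
  simp only [C_add, C_mul, C_1, C_ofNat] at *
  linear_combination h1 + h2

lemma gZ_ode (μ : ℝ) (k : ℕ) :
    (1 - X ^ 2) * derivative (derivative (gZ μ k)) - C (2 * μ - 1) * X * derivative (gZ μ k)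
      + C ((k : ℝ) * (k + 2 * μ - 2)) * gZ μ k = 0 := by
  rcases k with _ | _ | k
  · simp [gZ]
  · simp [gZ, gU, C_ofNat]; ring
  · have h := gU_deriv_sub μ k
    have hz : derivative (gZ μ (k + 2)) = C (2 * ((k : ℝ) + 1 + μ)) * gU μ (k + 1) := by
      rw [gZ, derivative_sub, h]
    obtain ⟨h1, h2⟩ := gU_deriv μ k
    obtain ⟨h3, h4⟩ := gU_deriv μ (k + 1)
    have hr := gU_rec μ k
    rw [hz]
    simp only [derivative_mul, derivative_C, zero_mul, zero_add, gZ]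
    push_cast at *
    simp only [C_add, C_mul, C_1, C_ofNat, C_sub] at *
    linear_combination (2 * ((C (k : ℝ) + 1 + C μ))) * (h1 - X * h2) + (C (k : ℝ) + 2*C μ) * hr

lemma gU_one_succ (μ : ℝ) (k : ℕ) :
    ((k : ℝ) + 1) * (gU μ (k + 1)).eval 1 = (k + 2 * μ) * (gU μ k).eval 1 := by
  induction k with
  | zero => simp [gU]
  | succ k ih =>
    have hr := congrArg (eval 1) (gU_rec μ k)
    simp at hr
    push_cast
    linear_combination hr + ih

lemma gU_ge (μ : ℝ) (hμ : 0 < μ) (x : ℝ) (hx : 1 ≤ x) (k : ℕ) :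
    0 < (gU μ k).eval x ∧ (k + 2 * μ) * (gU μ k).eval x ≤ ((k : ℝ) + 1) * (gU μ (k + 1)).eval x := by
  induction k with
  | zero => simp [gU]; nlinarith
  | succ k ih =>
    obtain ⟨h0, h1⟩ := ih
    have hr := congrArg (eval x) (gU_rec μ k)
    simp at hr
    have hp : 0 < (gU μ (k + 1)).eval x := by
      have : 0 < ((k : ℝ) + 1) * (gU μ (k + 1)).eval x := lt_of_lt_of_le (by positivity) h1
      exact pos_of_mul_pos_right this (by positivity)
    refine ⟨hp, ?_⟩
    push_cast
    have : 2 * ((k : ℝ) + 1 + μ) * (gU μ (k + 1)).eval x ≤ 2 * ((k : ℝ) + 1 + μ) * x * (gU μ (k + 1)).eval x := by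
      have : 0 ≤ 2 * ((k : ℝ) + 1 + μ) * (gU μ (k + 1)).eval x * (x - 1) := by
        have : 0 ≤ x - 1 := by linarith
        positivity
      nlinarith
    linarith

lemma gU_one_choose (m : ℕ) (hm : 1 ≤ m) (k : ℕ) :
    (gU ((m : ℝ) / 2) k).eval 1 = ((k + m - 1).choose (m - 1) : ℝ) := by
  obtain ⟨m, rfl⟩ : ∃ j, m = j + 1 := ⟨m - 1, by omega⟩
  induction k with
  | zero => simp [gU]
  | succ k ih =>
    have h := gU_one_succ (((m + 1 : ℕ) : ℝ) / 2) k
    rw [ih] at h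
    have e1 : k + (m + 1) - 1 = k + m := by omega
    have e2 : k + 1 + (m + 1) - 1 = k + m + 1 := by omega
    rw [e1] at h
    rw [e2]
    simp only [Nat.add_sub_cancel] at *
    have h2 := Nat.choose_mul_succ_eq (k + m) m
    have e3 : k + m + 1 - m = k + 1 := by omega
    rw [e3] at h2
    have h3 : ((k + m).choose m : ℝ) * (k + m + 1) = ((k + m + 1).choose m : ℝ) * (k + 1) := by exact_mod_cast h2
    have : ((k : ℝ) + 1) ≠ 0 := by positivity
    apply mul_left_cancel₀ this
    rw [h]
    push_cast
    linear_combination h3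

end

section
open Polynomial

lemma exists_largest_root (p : Polynomial ℝ) (t : ℝ) (ht : t < 1) (h0 : p.eval t < 0)
    (h1 : ∀ x, 1 ≤ x → 0 < p.eval x) :
    ∃ s, t < s ∧ s < 1 ∧ p.eval s = 0 ∧ ∀ x, s < x → 0 < p.eval x := by
  have hne : ({x : ℝ | p.eval x = 0} ∩ Set.Icc t 1).Nonempty := by
    have hc : ContinuousOn (fun x => p.eval x) (Set.Icc t 1) := p.continuous.continuousOn
    obtain ⟨x, hx, hx0⟩ := intermediate_value_Icc ht.le hc ⟨h0.le, (h1 1 le_rfl).le⟩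
    exact ⟨x, hx0, hx⟩
  have hcomp : IsCompact ({x : ℝ | p.eval x = 0} ∩ Set.Icc t 1) :=
    isCompact_Icc.inter_left (isClosed_eq p.continuous continuous_const)
  obtain ⟨s, ⟨hs0, hs1⟩, hmax⟩ := hcomp.exists_isGreatest hne
  have hs0' : p.eval s = 0 := hs0
  have hst : t < s := lt_of_le_of_ne hs1.1 (by rintro rfl; linarith)
  have hs1' : s < 1 := lt_of_le_of_ne hs1.2 (by rintro rfl; have := h1 1 le_rfl; linarith)
  refine ⟨s, hst, hs1', hs0', fun x hx => ?_⟩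
  by_contra hneg
  push Not at hneg
  have hx1 : x < 1 := by
    by_contra h
    push Not at h
    linarith [h1 x h]
  obtain ⟨y, hy, hy0⟩ := intermediate_value_Icc hx1.le (p.continuous.continuousOn)
    ⟨hneg, (h1 1 le_rfl).le⟩
  have := hmax ⟨hy0, by linarith [hy.1], hy.2⟩
  linarith [hy.1]

/-- A family of polynomials with a positive three-term recurrence. -/
structure TTR (p : ℕ → Polynomial ℝ) where
  a : ℕ → ℝ
  b : ℕ → ℝ
  c : ℕ → ℝ
  ha : ∀ i, 0 < a i
  hc : ∀ i, 0 < c i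
  p0 : p 0 = 1
  h0 : X * p 0 = C (a 0) * p 1 + C (b 0) * p 0
  hs : ∀ i, X * p (i + 1) = C (a (i + 1)) * p (i + 2) + C (b (i + 1)) * p (i + 1) + C (c i) * p i
  pos : ∀ i x, 1 ≤ x → 0 < (p i).eval x

lemma TTR.root {p : ℕ → Polynomial ℝ} (T : TTR p) (d : ℕ) :
    ∃ s, s < 1 ∧ (p (d + 1)).eval s = 0 ∧ (∀ x, s < x → 0 < (p (d + 1)).eval x) ∧
      ∀ j ≤ d, ∀ x, s ≤ x → 0 < (p j).eval x := by
  induction d with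
  | zero =>
    have h := fun x => congrArg (eval x) T.h0
    simp [T.p0] at h
    have hp : ∀ x, (p 1).eval x = (x - T.b 0) / T.a 0 := by
      intro x
      have := (T.ha 0).ne'
      rw [eq_div_iff this]; linarith [h x]
    refine ⟨T.b 0, ?_, by simp [hp], ?_, ?_⟩
    · have := T.pos 1 1 le_rfl
      rw [hp] at this
      have := (div_pos_iff_of_pos_right (T.ha 0)).1 this
      linarith
    · intro x hx
      simp only [zero_add]
      rw [hp]
      exact div_pos (by linarith) (T.ha 0)
    · intro j hj x _
      obtain rfl : j = 0 := by omega
      simp [T.p0]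
  | succ d ih =>
    obtain ⟨t, ht1, ht0, htp, hlow⟩ := ih
    have hneg : (p (d + 2)).eval t < 0 := by
      have h := congrArg (eval t) (T.hs d)
      simp [ht0] at h
      have h1 := mul_pos (T.hc d) (hlow d le_rfl t le_rfl)
      have h2 : T.a (d + 1) * (p (d + 2)).eval t < 0 := by linarith
      exact (pos_iff_neg_of_mul_neg h2).1 (T.ha _)
    obtain ⟨s, hts, hs1, hs0, hsp⟩ := exists_largest_root _ t ht1 hneg (T.pos _)
    refine ⟨s, hs1, hs0, hsp, fun j hj x hx => ?_⟩
    rcases Nat.lt_or_ge j (d + 1) with h | h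
    · exact hlow j (by omega) x (by linarith)
    · obtain rfl : j = d + 1 := by omega
      exact htp x (by linarith)

def TTR.k {p : ℕ → Polynomial ℝ} (T : TTR p) : ℕ → ℝ
  | 0 => 1
  | (i + 1) => T.k i * T.a i / T.c i

lemma TTR.k_pos {p : ℕ → Polynomial ℝ} (T : TTR p) (i : ℕ) : 0 < T.k i := by
  induction i with
  | zero => simp [TTR.k]
  | succ i ih => exact div_pos (mul_pos ih (T.ha i)) (T.hc i)

/-- Christoffel–Darboux. -/
lemma TTR.cd {p : ℕ → Polynomial ℝ} (T : TTR p) (s : ℝ) (d : ℕ) :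
    (X - C s) * ∑ i ∈ Finset.range (d + 1), C (T.k i * (p i).eval s) * p i =
      C (T.k d * T.a d) * (C ((p d).eval s) * p (d + 1) - C ((p (d + 1)).eval s) * p d) := by
  induction d with
  | zero =>
    have h := T.h0
    have h' := congrArg (fun q => C (eval s q)) h
    simp [T.p0] at h h'
    simp [TTR.k, T.p0]
    linear_combination h - h'
  | succ d ih =>
    rw [Finset.sum_range_succ, mul_add, ih]
    have h := T.hs d
    have h' := congrArg (fun q => C (eval s q)) h
    have hk : T.k (d + 1) * T.c d = T.k d * T.a d := by
      have := (T.hc d).ne'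
      rw [TTR.k]; field_simp
    rw [← hk]
    simp only [eval_mul, eval_add, eval_X, eval_C, C_mul, C_add] at h' ⊢
    linear_combination C (T.k (d+1)) * C ((p (d+1)).eval s) * h - C (T.k (d+1)) * p (d + 1) * h'

/-- Everything needed about the largest root. -/
lemma TTR.main {p : ℕ → Polynomial ℝ} (T : TTR p) (d : ℕ) (hd : 1 ≤ d) :
    let s := sSup {x : ℝ | (p d).eval x = 0}
    s < 1 ∧ (p d).eval s = 0 ∧ (∀ x, s < x → 0 < (p d).eval x) ∧
      ∃ (w : ℕ → ℝ) (c : ℝ), (∀ i < d, 0 < w i) ∧ 0 < c ∧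
        (X - C s) * ∑ i ∈ Finset.range d, C (w i) * p i = C c * p d := by
  obtain ⟨d, rfl⟩ : ∃ e, d = e + 1 := ⟨d - 1, by omega⟩
  obtain ⟨s, hs1, hs0, hsp, hlow⟩ := T.root d
  have hg : IsGreatest {x : ℝ | (p (d + 1)).eval x = 0} s := by
    refine ⟨hs0, fun x hx => ?_⟩
    by_contra h
    push Not at h
    have := hsp x h
    have h2 : (p (d + 1)).eval x = 0 := hx
    linarith
  rw [hg.csSup_eq]
  refine ⟨hs1, hs0, hsp, fun i => T.k i * (p i).eval s, T.k d * T.a d * (p d).eval s, ?_, ?_, ?_⟩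
  · intro i hi
    exact mul_pos (T.k_pos i) (hlow i (by omega) s le_rfl)
  · exact mul_pos (mul_pos (T.k_pos d) (T.ha d)) (hlow d le_rfl s le_rfl)
  · rw [T.cd s d, hs0]
    simp only [C_mul, C_0]
    ring

/-- The family `U` (`true`) or `V` (`false`). -/
def gP (μ : ℝ) (ε : Bool) : ℕ → Polynomial ℝ := if ε then gU μ else gV μ

def ttrU (μ : ℝ) (hμ : 1 / 2 < μ) : TTR (gU μ) where
  a i := ((i : ℝ) + 1) / (2 * (i + μ))
  b _ := 0
  c i := ((i : ℝ) + 2 * μ) / (2 * (i + 1 + μ))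
  ha i := by positivity
  hc i := by positivity
  p0 := by simp [gU]
  h0 := by
    have e : C (((0 : ℕ) + 1 : ℝ) / (2 * ((0 : ℕ) + μ))) * C (2 * μ) = 1 := by
      rw [← C_mul, ← C_1]; congr 1; simp; field_simp
    rw [show gU μ 0 = 1 from rfl, show gU μ 1 = C (2 * μ) * X from rfl, C_0]
    linear_combination (-X) * e
  hs i := by
    apply C_mul_cancel (c := 2 * ((i : ℝ) + 1 + μ)) (by positivity)
    have h := gU_rec μ i
    have e1 : C (2 * ((i : ℝ) + 1 + μ)) * C ((((i + 1 : ℕ) : ℝ) + 1) / (2 * (((i + 1 : ℕ) : ℝ) + μ))) = C ((i : ℝ) + 2) := by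
      rw [← C_mul]; congr 1; push_cast; field_simp; ring
    have e2 : C (2 * ((i : ℝ) + 1 + μ)) * C (((i : ℝ) + 2 * μ) / (2 * ((i : ℝ) + 1 + μ))) = C ((i : ℝ) + 2 * μ) := by
      rw [← C_mul]; congr 1; field_simp
    rw [C_0]
    linear_combination (-h) - gU μ (i+2) * e1 - gU μ i * e2
  pos i x hx := (gU_ge μ (by linarith) x hx i).1

def ttrV (μ : ℝ) (hμ : 1 / 2 < μ) : TTR (gV μ) where
  a i := ((i : ℝ) + 1) / (2 * (i + μ))
  b i := (if i = 0 then 0 else (i : ℝ) / (2 * (i + μ - 1))) - ((i : ℝ) + 1) / (2 * (i + μ))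
  c i := ((i : ℝ) - 1 + 2 * μ) / (2 * (i + μ))
  ha i := by positivity
  hc i := by
    have : (0 : ℝ) ≤ i := by positivity
    apply div_pos <;> linarith
  p0 := by simp [gV]
  h0 := by
    simp only [gV]
    have h := (ttrU μ hμ).h0
    simp only [ttrU, gU] at h
    simp [gU] at h ⊢
    linear_combination h
  hs i := by
    have hi : (0 : ℝ) ≤ i := by positivity
    rcases i with _ | i
    · have h := (ttrU μ hμ).h0
      have h1 := (ttrU μ hμ).hs 0
      simp only [ttrU, gU, gV] at h h1 ⊢
      simp only [Nat.cast_zero, zero_add, Nat.cast_one, add_sub_cancel_left, one_ne_zero, if_false, C_0, zero_mul, add_zero] at h h1 ⊢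
      have e2 : C ((0 - 1 + 2 * μ) / (2 * μ)) = C (2 * μ / (2 * (1 + μ))) + C ((1 + 1) / (2 * (1 + μ))) - C (1 / (2 * μ)) := by
        rw [← C_add, ← C_sub]; congr 1; field_simp; ring
      rw [e2, C_sub]
      linear_combination h + h1
    · have h := (ttrU μ hμ).hs i
      have h1 := (ttrU μ hμ).hs (i + 1)
      simp only [ttrU, gV, C_0] at h h1 ⊢
      rw [if_neg (by omega)]
      push_cast at *
      have hi' : (0 : ℝ) ≤ i := by positivity
      have e : C (((i : ℝ) + 1 + 1) / (2 * (i + 1 + 1 + μ - 1))) = C (((i : ℝ) + 1 + 1) / (2 * (i + 1 + μ))) + 0 := by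
        rw [add_zero]; congr 3; ring
      have e2 : C (((i : ℝ) + 1 - 1 + 2 * μ) / (2 * (i + 1 + μ))) = C (((i : ℝ) + 2 * μ) / (2 * (i + 1 + μ))) := by
        congr 2; ring
      have e3 : C (((i : ℝ) + 1 + 2 * μ) / (2 * (i + 1 + 1 + μ))) =
          C (((i : ℝ) + 1 + 1) / (2 * (i + 1 + μ))) - C (((i : ℝ) + 1 + 1 + 1) / (2 * (i + 1 + 1 + μ))) + C (((i : ℝ) + 2 * μ) / (2 * (i + 1 + μ))) := by
        rw [← C_sub, ← C_add]; congr 1; field_simp; ring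
      rw [C_sub, e, e2]
      rw [e3] at h1
      linear_combination h + h1
  pos i x hx := by
    rcases i with _ | i
    · simp [gV]
    · simp only [gV, eval_add]
      exact add_pos (gU_ge μ (by linarith) x hx _).1 (gU_ge μ (by linarith) x hx _).1

def ttrP (μ : ℝ) (hμ : 1 / 2 < μ) : (ε : Bool) → TTR (gP μ ε)
  | true => ttrU μ hμ
  | false => ttrV μ hμ

/-- `(1+s) U_d = V_d + γ Z_{d+1}` -/
lemma one_add_mul_gU (μ : ℝ) (hμ : 1 / 2 < μ) (d : ℕ) :
    ∃ γ : ℝ, 0 ≤ γ ∧ (1 + X) * gU μ d = gV μ d + C γ * gZ μ (d + 1) := by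
  rcases d with _ | d
  · refine ⟨1 / (2 * μ), by positivity, ?_⟩
    have h := (ttrU μ hμ).h0
    simp [ttrU] at h
    simp [gV, gZ, gU] at h ⊢
    exact h
  · refine ⟨((d : ℝ) + 2) / (2 * (d + 1 + μ)), by positivity, ?_⟩
    have h := (ttrU μ hμ).hs d
    simp only [ttrU] at h
    have e : C (((d : ℝ) + 2 * μ) / (2 * (d + 1 + μ))) = 1 - C (((d : ℝ) + 2) / (2 * (d + 1 + μ))) := by
      rw [← C_1, ← C_sub]; congr 1; field_simp; ring
    have e2 : C ((((d + 1 : ℕ) : ℝ) + 1) / (2 * (((d + 1 : ℕ) : ℝ) + μ))) = C (((d : ℝ) + 2) / (2 * (d + 1 + μ))) := by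
      push_cast; congr 2; ring
    rw [e, e2, C_0] at h
    simp only [gV, gZ]
    linear_combination h

/-- the multiplier `A` -/
def gA (μ : ℝ) (ε : Bool) (d : ℕ) : Polynomial ℝ := if ε then (1 + X) * gU μ d else gV μ d

end

section
open Polynomial

/-- second Jacobi parameter -/
def gb (μ : ℝ) (ε : Bool) : ℝ := if ε then μ - 1/2 else μ - 3/2

lemma gP_ode (μ : ℝ) (ε : Bool) (d : ℕ) :
    (1 - X ^ 2) * derivative (derivative (gP μ ε d))
      + (C (gb μ ε - (μ - 1/2)) - C ((μ - 1/2) + gb μ ε + 2) * X) * derivative (gP μ ε d)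
      + C ((d : ℝ) * (d + (μ - 1/2) + gb μ ε + 1)) * gP μ ε d = 0 := by
  cases ε
  · simp only [gP, gb, Bool.false_eq_true, if_false]
    rw [show μ - 3/2 - (μ - 1/2) = -1 by ring, show μ - 1/2 + (μ - 3/2) + 2 = 2 * μ by ring,
      show (d : ℝ) + (μ - 1/2) + (μ - 3/2) + 1 = d + 2 * μ - 1 by ring]
    rcases d with _ | k
    · simp [gV]
    · have h0 := gU_ode μ k
      have h1 := gU_ode μ (k + 1)
      obtain ⟨h2, h3⟩ := gU_deriv μ k
      simp only [gV, derivative_add]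
      push_cast at *
      simp only [C_add, C_mul, C_1, C_ofNat, C_sub, C_neg] at *
      linear_combination h0 + h1 + h3 - h2
  · simp only [gP, gb, if_true]
    rw [show μ - 1/2 - (μ - 1/2) = 0 by ring, show μ - 1/2 + (μ - 1/2) + 2 = 2 * μ + 1 by ring,
      show (d : ℝ) + (μ - 1/2) + (μ - 1/2) + 1 = d + 2 * μ by ring]
    have h0 := gU_ode μ d
    rw [C_0]
    linear_combination h0

/-- uniqueness for the hypergeometric equation at `0` -/
lemma ode_unique {a b Λ : ℝ} (ha : 0 ≤ a) {f : Polynomial ℝ}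
    (h : X * (X + 1) * derivative (derivative f) + (C (a + 1) + C (a + b + 2) * X) * derivative f
      - C Λ * f = 0) (h0 : f.coeff 0 = 0) : f = 0 := by
  ext k
  rw [coeff_zero]
  induction k with
  | zero => exact h0
  | succ k ih =>
    have h1 := congrArg (fun q => coeff q k) h
    have e : X * (X + 1) * derivative (derivative f) + (C (a + 1) + C (a + b + 2) * X) * derivative f
      - C Λ * f = X * (X * derivative (derivative f)) + X * derivative (derivative f) + C (a + 1) * derivative f
        + C (a + b + 2) * (X * derivative f) - C Λ * f := by ring
    rw [e] at h1
    have hX : ∀ (q : Polynomial ℝ) (j : ℕ), coeff (X * derivative q) j = j * coeff q j := by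
      intro q j
      rcases j with _ | j
      · simp
      · rw [coeff_X_mul, coeff_derivative]; push_cast; ring
    have hXX : coeff (X * (X * derivative (derivative f))) k = k * (k - 1) * coeff f k := by
      rcases k with _ | j
      · simp
      · rw [coeff_X_mul, hX, coeff_derivative]; push_cast; ring
    simp only [coeff_add, coeff_sub, coeff_C_mul, hXX, hX, coeff_derivative, coeff_zero, ih] at h1
    have h2 : ((k : ℝ) + 1) * (k + 1 + a) * coeff f (k + 1) = 0 := by linear_combination h1
    have h3 : ((k : ℝ) + 1) * (k + 1 + a) ≠ 0 := by positivity
    exact (mul_eq_zero.1 h2).resolve_left h3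

def jc (a b : ℝ) (d s : ℕ) : ℝ := genBinom ((d : ℝ) + a) (d - s) * genBinom ((d : ℝ) + b) s

lemma genBinom_succ (x : ℝ) (k : ℕ) : ((k : ℝ) + 1) * genBinom x (k + 1) = (x - k) * genBinom x k := by
  unfold genBinom
  rw [Finset.prod_range_succ, Nat.factorial_succ]
  have := Nat.factorial_pos k
  push_cast
  field_simp

lemma jc_succ (a b : ℝ) (s j : ℕ) :
    ((s : ℝ) + 1) * (s + 1 + a) * jc a b (s + 1 + j) (s + 1) = (j + 1) * (j + 1 + b) * jc a b (s + 1 + j) s := by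
  have h1 := genBinom_succ (((s + 1 + j : ℕ) : ℝ) + b) s
  have h2 := genBinom_succ (((s + 1 + j : ℕ) : ℝ) + a) j
  unfold jc
  rw [show s + 1 + j - (s + 1) = j by omega, show s + 1 + j - s = j + 1 by omega]
  push_cast at *
  linear_combination (s + 1 + a) * genBinom (s + 1 + j + a) j * h1 - (j + 1 + b) * genBinom (s+1+j+b) s * h2

def jPoly (a b : ℝ) (d : ℕ) : Polynomial ℝ :=
  ∑ s ∈ Finset.range (d + 1), C (jc a b d s) * (X ^ s * (X + 1) ^ (d - s))

def jL (a b Λ : ℝ) : Polynomial ℝ →ₗ[ℝ] Polynomial ℝ where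
  toFun f := X * (X + 1) * derivative (derivative f) + (C (a + 1) + C (a + b + 2) * X) * derivative f
      - C Λ * f
  map_add' f g := by simp; ring
  map_smul' c f := by simp [smul_eq_C_mul]; ring

lemma jL_term (a b : ℝ) (s j : ℕ) :
    jL a b (((s : ℝ) + j) * (s + j + a + b + 1)) (X ^ s * (X + 1) ^ j) =
      C ((s : ℝ) * (s + a)) * (X ^ (s - 1) * (X + 1) ^ j) - C ((j : ℝ) * (j + b)) * (X ^ s * (X + 1) ^ (j - 1)) := by
  have e : ∀ j : ℕ, derivative ((X + 1 : Polynomial ℝ) ^ j) = C (j : ℝ) * (X + 1) ^ (j - 1) := by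
    intro j
    have := derivative_X_add_C_pow (1 : ℝ) j
    rwa [C_1] at this
  have e' : ∀ j : ℕ, derivative ((X : Polynomial ℝ) ^ j) = C (j : ℝ) * X ^ (j - 1) := by
    intro j
    exact derivative_X_pow j
  simp only [jL, LinearMap.coe_mk, AddHom.coe_mk, derivative_mul, e, e', derivative_add, derivative_C]
  rcases s with _ | _ | s <;> rcases j with _ | _ | j <;>
  · simp only [Nat.add_sub_cancel, Nat.zero_sub, zero_add, Nat.sub_self]
    push_cast
    simp only [C_add, C_mul, C_1, C_0, C_ofNat]
    ring

lemma jL_jPoly (a b : ℝ) (d : ℕ) : jL a b ((d : ℝ) * (d + a + b + 1)) (jPoly a b d) = 0 := by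
  unfold jPoly
  rw [map_sum]
  have h : ∀ s ∈ Finset.range (d + 1), jL a b ((d : ℝ) * (d + a + b + 1)) (C (jc a b d s) * (X ^ s * (X + 1) ^ (d - s)))
      = - (C (((s + 1 : ℕ) : ℝ) * ((s + 1 : ℕ) + a) * (if s + 1 ≤ d then jc a b d (s + 1) else 0)) * (X ^ (s + 1 - 1) * (X + 1) ^ (d - (s + 1)))
        - C (((s : ℕ) : ℝ) * ((s : ℕ) + a) * (if s ≤ d then jc a b d s else 0)) * (X ^ (s - 1) * (X + 1) ^ (d - s))) := by
    intro s hs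
    have hs' : s ≤ d := by simpa [Nat.lt_succ_iff] using hs
    obtain ⟨j, rfl⟩ : ∃ j, d = s + j := ⟨d - s, by omega⟩
    have ht := jL_term a b s j
    rw [← smul_eq_C_mul, map_smul, show s + j - s = j by omega]
    push_cast
    rw [ht, smul_eq_C_mul]
    rcases j with _ | j
    · simp
      ring
    · have hjc := jc_succ a b s j
      rw [show s + 1 + j = s + (j + 1) by ring] at hjc
      rw [Nat.add_sub_cancel, if_pos (by omega), if_pos (by omega), show s + (j + 1) - (s + 1) = j by omega]
      push_cast
      rw [hjc]
      simp only [C_mul]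
      ring
  rw [Finset.sum_congr rfl h, Finset.sum_neg_distrib]
  rw [Finset.sum_range_sub (fun s => C (((s : ℕ) : ℝ) * ((s : ℕ) + a) * (if s ≤ d then jc a b d s else 0)) * (X ^ (s - 1) * (X + 1) ^ (d - s)))]
  simp

lemma jPoly_eval (a b : ℝ) (d : ℕ) (x : ℝ) : (jPoly a b d).eval ((x - 1) / 2) = jacobiP a b d x := by
  unfold jPoly jacobiP
  rw [eval_finsetSum]
  refine Finset.sum_congr rfl fun s _ => ?_
  simp [jc]
  ring_nf

lemma jPoly_coeff_zero (a b : ℝ) (ha : 0 ≤ a) (d : ℕ) : 0 < (jPoly a b d).coeff 0 := by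
  rw [coeff_zero_eq_eval_zero]
  unfold jPoly
  rw [eval_finsetSum, Finset.sum_range_succ']
  simp [jc]
  have : ∀ x, genBinom x 0 = 1 := by intro x; simp [genBinom]
  rw [this, mul_one]
  unfold genBinom
  apply div_pos _ (by positivity)
  apply Finset.prod_pos
  intro i hi
  have : (i : ℝ) < d := by exact_mod_cast Finset.mem_range.1 hi
  linarith

lemma gP_pos_one (μ : ℝ) (hμ : 1/2 < μ) (ε : Bool) (d : ℕ) : 0 < (gP μ ε d).eval 1 := (ttrP μ hμ ε).pos d 1 le_rfl

lemma jacobi_link (μ : ℝ) (hμ : 1/2 < μ) (ε : Bool) (d : ℕ) (x : ℝ) :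
    (gP μ ε d).eval 1 * jacobiP (μ - 1/2) (gb μ ε) d x =
      (jPoly (μ - 1/2) (gb μ ε) d).coeff 0 * (gP μ ε d).eval x := by
  set q : Polynomial ℝ := (gP μ ε d).comp (2 * X + 1) with hq
  have hode : jL (μ - 1/2) (gb μ ε) ((d : ℝ) * (d + (μ - 1/2) + gb μ ε + 1)) q = 0 := by
    have h := congrArg (fun p => p.comp (2 * X + 1)) (gP_ode μ ε d)
    simp only [jL, LinearMap.coe_mk, AddHom.coe_mk, hq, derivative_comp, derivative_mul, derivative_add]
    simp [derivative_ofNat, C_ofNat] at h ⊢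
    linear_combination (-1 : Polynomial ℝ) * h
  set f := C ((gP μ ε d).eval 1) * jPoly (μ - 1/2) (gb μ ε) d - C ((jPoly (μ - 1/2) (gb μ ε) d).coeff 0) * q with hf
  have hf0 : f = 0 := by
    apply ode_unique (a := μ - 1/2) (b := gb μ ε) (Λ := (d : ℝ) * (d + (μ - 1/2) + gb μ ε + 1)) (by linarith)
    · change jL (μ - 1/2) (gb μ ε) ((d : ℝ) * (d + (μ - 1/2) + gb μ ε + 1)) f = 0
      rw [hf, map_sub, ← smul_eq_C_mul, ← smul_eq_C_mul, map_smul, map_smul, hode, jL_jPoly]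
      simp
    · have : q.coeff 0 = (gP μ ε d).eval 1 := by
        rw [coeff_zero_eq_eval_zero, hq, eval_comp]; simp
      rw [hf, coeff_sub, coeff_C_mul, coeff_C_mul, this]; ring
  have h := congrArg (eval ((x - 1) / 2)) hf0
  rw [hf, eval_sub, eval_mul, eval_mul, eval_C, eval_C, jPoly_eval, hq, eval_comp] at h
  simp at h
  rw [show 2 * ((x - 1) / 2) + 1 = x by ring] at h
  linarith

lemma maxRoot_eq (μ : ℝ) (hμ : 1/2 < μ) (ε : Bool) (d : ℕ) :
    maxRoot (μ - 1/2) (gb μ ε) d = sSup {x : ℝ | (gP μ ε d).eval x = 0} := by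
  unfold maxRoot
  congr 1
  ext x
  have h := jacobi_link μ hμ ε d x
  have h1 := (gP_pos_one μ hμ ε d).ne'
  have h2 := (jPoly_coeff_zero (μ - 1/2) (gb μ ε) (by linarith) d).ne'
  simp only [Set.mem_ofPred_eq]
  constructor
  · intro hx
    rw [hx, mul_zero] at h
    exact (mul_eq_zero.1 h.symm).resolve_left h2
  · intro hx
    rw [hx, mul_zero] at h
    exact (mul_eq_zero.1 h).resolve_left h1

end

section
namespace Fischer
open MvPolynomial

variable {m : ℕ}

def fac (μ : Fin m →₀ ℕ) : ℝ := ∏ i, (Nat.factorial (μ i) : ℝ)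

lemma fac_pos (μ : Fin m →₀ ℕ) : 0 < fac μ := Finset.prod_pos fun i _ => by positivity

/-- The Fischer inner product. -/
def B : MvPolynomial (Fin m) ℝ →ₗ[ℝ] MvPolynomial (Fin m) ℝ →ₗ[ℝ] ℝ :=
  (basisMonomials (Fin m) ℝ).constr ℝ (fun μ => fac μ • lcoeff (R := ℝ) μ)

lemma B_monomial (μ : Fin m →₀ ℕ) (a : ℝ) (q : MvPolynomial (Fin m) ℝ) :
    B (monomial μ a) q = a * fac μ * coeff μ q := by
  have h : monomial μ a = a • (basisMonomials (Fin m) ℝ) μ := by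
    simp [smul_monomial]
  rw [h, map_smul, B, Module.Basis.constr_basis]
  simp [lcoeff_apply]
  ring

lemma fac_add_single (μ : Fin m →₀ ℕ) (i : Fin m) :
    fac (μ + Finsupp.single i 1) = fac μ * (μ i + 1) := by
  unfold fac
  rw [← Finset.mul_prod_erase _ _ (Finset.mem_univ i), ← Finset.mul_prod_erase _ (fun i => ((μ i).factorial : ℝ)) (Finset.mem_univ i)]
  have : ∀ j ∈ Finset.univ.erase i, (((μ + Finsupp.single i 1 : Fin m →₀ ℕ) j).factorial : ℝ) = (μ j).factorial := by
    intro j hj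
    have : j ≠ i := (Finset.mem_erase.1 hj).1
    simp [Finsupp.single_apply, this.symm]
  rw [Finset.prod_congr rfl this]
  simp [Nat.factorial_succ]
  ring

lemma B_X_mul (i : Fin m) (p q : MvPolynomial (Fin m) ℝ) : B (X i * p) q = B p (pderiv i q) := by
  induction p using MvPolynomial.induction_on' with
  | add p r hp hr => rw [mul_add, map_add, LinearMap.add_apply, hp, hr, map_add, LinearMap.add_apply]
  | monomial μ a =>
    have : X i * monomial μ a = monomial (μ + Finsupp.single i 1) a := by
      rw [X, monomial_mul, one_mul, add_comm]
    rw [this, B_monomial, B_monomial, fac_add_single, coeff_pderiv]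
    ring

lemma B_symm (p q : MvPolynomial (Fin m) ℝ) : B p q = B q p := by
  induction p using MvPolynomial.induction_on' with
  | add p r hp hr => rw [map_add, LinearMap.add_apply, hp, hr, map_add]
  | monomial μ a =>
    induction q using MvPolynomial.induction_on' with
    | add p r hp hr => rw [map_add, hp, hr, map_add, LinearMap.add_apply]
    | monomial ν b =>
      rw [B_monomial, B_monomial, coeff_monomial, coeff_monomial]
      by_cases h : μ = ν
      · subst h; simp; ring
      · rw [if_neg (fun h' => h h'.symm), if_neg h]; ring

lemma B_self (p : MvPolynomial (Fin m) ℝ) : B p p = ∑ μ ∈ p.support, fac μ * (coeff μ p) ^ 2 := by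
  conv_lhs => enter [1]; rw [p.as_sum]
  rw [map_sum, LinearMap.sum_apply]
  refine Finset.sum_congr rfl fun μ _ => ?_
  rw [B_monomial]; ring

lemma B_nonneg (p : MvPolynomial (Fin m) ℝ) : 0 ≤ B p p := by
  rw [B_self]; exact Finset.sum_nonneg fun μ _ => mul_nonneg (fac_pos μ).le (sq_nonneg _)

lemma B_eq_zero {p : MvPolynomial (Fin m) ℝ} (h : B p p = 0) : p = 0 := by
  rw [B_self, Finset.sum_eq_zero_iff_of_nonneg (fun μ _ => mul_nonneg (fac_pos μ).le (sq_nonneg _))] at h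
  ext μ
  by_contra hne
  have h1 := h μ (mem_support_iff.2 hne)
  have := fac_pos μ
  rw [coeff_zero] at hne
  have : 0 < fac μ * coeff μ p ^ 2 := by positivity
  linarith

def lap : MvPolynomial (Fin m) ℝ →ₗ[ℝ] MvPolynomial (Fin m) ℝ :=
  ∑ i, (pderiv i).toLinearMap ∘ₗ (pderiv i).toLinearMap

lemma lap_apply (q : MvPolynomial (Fin m) ℝ) : lap q = ∑ i, pderiv i (pderiv i q) := by
  simp [lap]

def rho : MvPolynomial (Fin m) ℝ := ∑ i, X i * X i

lemma B_rho_mul (p q : MvPolynomial (Fin m) ℝ) : B (rho * p) q = B p (lap q) := by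
  rw [rho, Finset.sum_mul, map_sum, LinearMap.sum_apply, lap_apply, map_sum]
  refine Finset.sum_congr rfl fun i _ => ?_
  rw [mul_assoc, B_X_mul, B_X_mul]

def lin (x : Fin m → ℝ) : MvPolynomial (Fin m) ℝ := ∑ i, C (x i) * X i

lemma B_lin_mul (x : Fin m → ℝ) (p q : MvPolynomial (Fin m) ℝ) :
    B (lin x * p) q = B p (∑ i, x i • pderiv i q) := by
  rw [lin, Finset.sum_mul, map_sum, LinearMap.sum_apply, map_sum]
  refine Finset.sum_congr rfl fun i _ => ?_
  rw [mul_assoc, ← smul_eq_C_mul, map_smul, LinearMap.smul_apply, B_X_mul, map_smul]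

lemma B_lin_pow (x : Fin m → ℝ) (k : ℕ) (q : MvPolynomial (Fin m) ℝ) (hq : q.IsHomogeneous k) :
    B (lin x ^ k) q = (k.factorial : ℝ) * eval x q := by
  induction k generalizing q with
  | zero =>
    have h1 : (1 : MvPolynomial (Fin m) ℝ) = monomial 0 1 := rfl
    have h2 := totalDegree_eq_zero_iff_eq_C.1 (Nat.le_zero.1 hq.totalDegree_le)
    rw [pow_zero, h1, B_monomial, h2]
    simp [fac]
  | succ k ih =>
    have hh : (∑ i, x i • pderiv i q).IsHomogeneous k := by
      apply IsHomogeneous.sum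
      intro i _
      rw [smul_eq_C_mul]
      have h3 := hq.pderiv (i := i)
      simpa using (isHomogeneous_C (Fin m) (x i)).mul h3
    rw [pow_succ', B_lin_mul, ih _ hh]
    have he := congrArg (eval x) hq.sum_X_mul_pderiv
    simp only [map_sum, map_mul, eval_X, nsmul_eq_mul, map_natCast] at he
    simp only [map_sum, smul_eval]
    rw [he, Nat.factorial_succ]
    push_cast
    ring

lemma pderiv_lin (x : Fin m → ℝ) (i : Fin m) : pderiv i (lin x) = C (x i) := by
  simp only [lin, map_sum, pderiv_C_mul]
  rw [Finset.sum_eq_single i]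
  · simp
  · intro j _ hj
    rw [pderiv_X_of_ne hj, mul_zero]
  · simp

lemma pderiv_rho (i : Fin m) : pderiv i (rho : MvPolynomial (Fin m) ℝ) = 2 * X i := by
  simp only [rho, map_sum, pderiv_mul]
  rw [Finset.sum_eq_single i]
  · simp; ring
  · intro j _ hj
    rw [pderiv_X_of_ne hj]; ring
  · simp

lemma pderiv_term (x : Fin m → ℝ) (a j : ℕ) (i : Fin m) :
    pderiv i (lin x ^ a * rho ^ j) = C (x i) * ((a : MvPolynomial (Fin m) ℝ) * lin x ^ (a - 1) * rho ^ j)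
      + X i * (2 * (j : MvPolynomial (Fin m) ℝ) * lin x ^ a * rho ^ (j - 1)) := by
  rw [pderiv_mul, pderiv_pow, pderiv_pow, pderiv_lin, pderiv_rho]
  ring

lemma lap_term (x : Fin m → ℝ) (hx : ∑ i, x i * x i = 1) (a j : ℕ) :
    lap (lin x ^ a * rho ^ j) = C ((a : ℝ) * (a - 1)) * (lin x ^ (a - 2) * rho ^ j)
      + C (2 * (j : ℝ) * (2 * a + 2 * j + m - 2)) * (lin x ^ a * rho ^ (j - 1)) := by
  have hC2 : (C 2 : MvPolynomial (Fin m) ℝ) = 2 := map_ofNat C 2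
  have hi : ∀ i : Fin m, pderiv i (pderiv i (lin x ^ a * rho ^ j)) =
      C (x i * x i) * ((a : MvPolynomial (Fin m) ℝ) * ((a - 1 : ℕ) : MvPolynomial (Fin m) ℝ) * lin x ^ (a - 1 - 1) * rho ^ j)
      + (C (x i) * X i) * (4 * (a : MvPolynomial (Fin m) ℝ) * (j : MvPolynomial (Fin m) ℝ) * lin x ^ (a - 1) * rho ^ (j - 1))
      + 1 * (2 * (j : MvPolynomial (Fin m) ℝ) * lin x ^ a * rho ^ (j - 1))
      + (X i * X i) * (4 * (j : MvPolynomial (Fin m) ℝ) * ((j - 1 : ℕ) : MvPolynomial (Fin m) ℝ) * lin x ^ a * rho ^ (j - 1 - 1)) := by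
    intro i
    have e1 : (a : MvPolynomial (Fin m) ℝ) * lin x ^ (a - 1) * rho ^ j = C (a : ℝ) * (lin x ^ (a - 1) * rho ^ j) := by
      simp; ring
    have e2 : 2 * (j : MvPolynomial (Fin m) ℝ) * lin x ^ a * rho ^ (j - 1) = C (2 * (j : ℝ)) * (lin x ^ a * rho ^ (j - 1)) := by
      simp [hC2]; ring
    rw [pderiv_term, map_add, pderiv_C_mul, e1, pderiv_C_mul, pderiv_term, pderiv_mul (f := X i), e2, pderiv_C_mul, pderiv_term, pderiv_X_self]
    simp only [map_mul, map_natCast, hC2]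
    ring
  rw [lap_apply, Finset.sum_congr rfl fun i _ => hi i]
  simp only [Finset.sum_add_distrib]
  rw [← Finset.sum_mul, ← Finset.sum_mul, ← Finset.sum_mul, ← Finset.sum_mul, ← map_sum, hx]
  rw [show ∑ i, C (x i) * X i = lin x from rfl, show ∑ i : Fin m, (X i : MvPolynomial (Fin m) ℝ) * X i = rho from rfl]
  rw [Finset.sum_const, Finset.card_univ, Fintype.card_fin]
  rcases a with _ | _ | a <;> rcases j with _ | _ | j <;>
  · simp [pow_succ, hC2]
    try ring

/-- parity/degree structure -/
lemma gU_coeff (μ : ℝ) (k i : ℕ) (h : k < i ∨ (i + k) % 2 = 1) : (gU μ k).coeff i = 0 := by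
  induction k using Nat.strong_induction_on generalizing i with
  | _ k ih =>
    match k with
    | 0 => simp [gU, Polynomial.coeff_one]; omega
    | 1 => 
      simp only [gU, Polynomial.coeff_C_mul, Polynomial.coeff_X]
      rw [if_neg (by omega)]; simp
    | (k + 2) =>
      have h1 : (Polynomial.X * gU μ (k + 1)).coeff i = 0 := by
        rcases i with _ | i
        · simp
        · rw [Polynomial.coeff_X_mul]; exact ih (k + 1) (by omega) i (by omega)
      rw [gU, mul_assoc, Polynomial.coeff_C_mul, Polynomial.coeff_sub, Polynomial.coeff_C_mul, Polynomial.coeff_C_mul, h1,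
        ih k (by omega) i (by omega)]
      simp

lemma gU_lead (μ : ℝ) (hμ : 0 < μ) (k : ℕ) : 0 < (gU μ k).coeff k := by
  induction k using Nat.strong_induction_on with
  | _ k ih =>
    match k with
    | 0 => simp [gU]
    | 1 => simp [gU, hμ]
    | (k + 2) =>
      have h1 : (Polynomial.X * gU μ (k + 1)).coeff (k + 2) = (gU μ (k + 1)).coeff (k + 1) := by
        rw [Polynomial.coeff_X_mul]
      rw [gU, mul_assoc, Polynomial.coeff_C_mul, Polynomial.coeff_sub, Polynomial.coeff_C_mul, Polynomial.coeff_C_mul, h1,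
        gU_coeff μ k (k + 2) (by omega)]
      have := ih (k + 1) (by omega)
      have : 0 < 2 * ((k : ℝ) + 1 + μ) * (gU μ (k + 1)).coeff (k + 1) := by positivity
      rw [mul_zero, sub_zero]
      positivity

lemma gZ_coeff (μ : ℝ) (k i : ℕ) (h : k < i ∨ (i + k) % 2 = 1) : (gZ μ k).coeff i = 0 := by
  rcases k with _ | _ | k
  · exact gU_coeff μ 0 i h
  · exact gU_coeff μ 1 i h
  · rw [gZ, Polynomial.coeff_sub, gU_coeff μ _ i h, gU_coeff μ k i (by omega), sub_zero]

lemma gZ_lead (μ : ℝ) (hμ : 0 < μ) (k : ℕ) : 0 < (gZ μ k).coeff k := by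
  rcases k with _ | _ | k
  · exact gU_lead μ hμ 0
  · exact gU_lead μ hμ 1
  · rw [gZ, Polynomial.coeff_sub, gU_coeff μ k (k+2) (by omega), sub_zero]; exact gU_lead μ hμ _

lemma gZ_coeff_rec (μ : ℝ) (k a : ℕ) :
    ((a : ℝ) + 2) * (a + 1) * (gZ μ k).coeff (a + 2) + (k - a) * (k + a + 2 * μ - 2) * (gZ μ k).coeff a = 0 := by
  have h := congrArg (fun q => Polynomial.coeff q a) (gZ_ode μ k)
  have hX : ∀ (q : Polynomial ℝ) (j : ℕ), Polynomial.coeff (Polynomial.X * Polynomial.derivative q) j = j * Polynomial.coeff q j := by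
    intro q j
    rcases j with _ | j
    · simp
    · rw [Polynomial.coeff_X_mul, Polynomial.coeff_derivative]; push_cast; ring
  have hXX : Polynomial.coeff (Polynomial.X * (Polynomial.X * Polynomial.derivative (Polynomial.derivative (gZ μ k)))) a = a * (a - 1) * Polynomial.coeff (gZ μ k) a := by
    rcases a with _ | j
    · simp
    · rw [Polynomial.coeff_X_mul, hX, Polynomial.coeff_derivative]; push_cast; ring
  have e : (1 - Polynomial.X ^ 2) * Polynomial.derivative (Polynomial.derivative (gZ μ k)) - Polynomial.C (2 * μ - 1) * Polynomial.X * Polynomial.derivative (gZ μ k)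
      + Polynomial.C ((k : ℝ) * (k + 2 * μ - 2)) * gZ μ k = Polynomial.derivative (Polynomial.derivative (gZ μ k))
      - (Polynomial.X * (Polynomial.X * Polynomial.derivative (Polynomial.derivative (gZ μ k)))) - Polynomial.C (2 * μ - 1) * (Polynomial.X * Polynomial.derivative (gZ μ k))
      + Polynomial.C ((k : ℝ) * (k + 2 * μ - 2)) * gZ μ k := by ring
  rw [e] at h
  simp only [Polynomial.coeff_add, Polynomial.coeff_sub, Polynomial.coeff_C_mul, hXX, hX, Polynomial.coeff_derivative, Polynomial.coeff_zero] at h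
  push_cast at h
  linear_combination h

/-- a polynomial with parity as a sum -/
lemma parity_sum {M : Type*} [AddCommMonoid M] (k : ℕ) (f : ℕ → M) (h : ∀ i, (i + k) % 2 = 1 → f i = 0) :
    ∑ i ∈ Finset.range (k + 1), f i = ∑ j ∈ Finset.range (k / 2 + 1), f (k - 2 * j) := by
  symm
  apply Finset.sum_of_injOn (fun j => k - 2 * j)
  · intro a ha b hb hab
    simp at ha hb hab
    omega
  · intro a ha
    simp
  · intro i hi hni
    simp at hi hni
    apply h
    by_contra hc
    apply hni ((k - i) / 2)
    · omega
    · omega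
  · intro i hi; rfl

end Fischer

end

section
namespace Fischer
open MvPolynomial

variable {m : ℕ}

def zc (m k i : ℕ) : ℝ := (gZ ((m : ℝ) / 2) k).coeff i

/-- zonal harmonics -/
def zon (k : ℕ) (x : Fin m → ℝ) : MvPolynomial (Fin m) ℝ :=
  ∑ j ∈ Finset.range (k / 2 + 1), zc m k (k - 2 * j) • (lin x ^ (k - 2 * j) * rho ^ j)

lemma lin_hom (x : Fin m → ℝ) : (lin x).IsHomogeneous 1 := by
  apply IsHomogeneous.sum
  intro i _
  simpa using (isHomogeneous_C (Fin m) (x i)).mul (isHomogeneous_X ℝ i)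

lemma rho_hom : (rho : MvPolynomial (Fin m) ℝ).IsHomogeneous 2 := by
  apply IsHomogeneous.sum
  intro i _
  exact (isHomogeneous_X ℝ i).mul (isHomogeneous_X ℝ i)

lemma zon_hom (k : ℕ) (x : Fin m → ℝ) : (zon k x).IsHomogeneous k := by
  apply IsHomogeneous.sum
  intro j hj
  have hj' : 2 * j ≤ k := by simp at hj; omega
  rw [smul_eq_C_mul]
  have h := (isHomogeneous_C (Fin m) (zc m k (k - 2 * j))).mul
    (((lin_hom x).pow (k - 2 * j)).mul ((rho_hom (m := m)).pow j))
  rwa [show 0 + (1 * (k - 2 * j) + 2 * j) = k by omega] at h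

lemma zon_lap (k : ℕ) (x : Fin m → ℝ) (hx : ∑ i, x i * x i = 1) : lap (zon k x) = 0 := by
  set T : ℕ → MvPolynomial (Fin m) ℝ := fun j => if 2 * j ≤ k then
    C (zc m k (k - 2 * j) * (2 * (j : ℝ) * (2 * (k - 2 * j : ℕ) + 2 * j + m - 2))) * (lin x ^ (k - 2 * j) * rho ^ (j - 1)) else 0 with hT
  have h : ∀ j ∈ Finset.range (k / 2 + 1), lap (zc m k (k - 2 * j) • (lin x ^ (k - 2 * j) * rho ^ j)) = - (T (j + 1) - T j) := by
    intro j hj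
    have hj' : 2 * j ≤ k := by simp at hj; omega
    rw [map_smul, lap_term x hx, smul_eq_C_mul]
    simp only [hT]
    rw [if_pos hj']
    by_cases h2 : 2 * (j + 1) ≤ k
    · rw [if_pos h2]
      obtain ⟨a, rfl⟩ : ∃ a, k = a + 2 * (j + 1) := ⟨k - 2 * (j + 1), by omega⟩
      have hr := gZ_coeff_rec ((m : ℝ) / 2) (a + 2 * (j + 1)) a
      rw [show a + 2 * (j + 1) - 2 * (j + 1) = a by omega, show a + 2 * (j + 1) - 2 * j = a + 2 by omega,
        show a + 2 - 2 = a by omega, Nat.add_sub_cancel]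
      have e : C (zc m (a + 2 * (j + 1)) a * (2 * ((j + 1 : ℕ) : ℝ) * (2 * (a : ℕ) + 2 * (j + 1 : ℕ) + m - 2)))
        = - (C (zc m (a + 2 * (j + 1)) (a + 2)) * C (((a + 2 : ℕ) : ℝ) * (((a + 2 : ℕ) : ℝ) - 1)) : MvPolynomial (Fin m) ℝ) := by
        rw [← C_mul, ← C_neg]
        congr 1
        unfold zc
        push_cast at hr ⊢
        linear_combination hr
      rw [e]
      simp only [C_mul]
      ring
    · rw [if_neg h2]
      have : k - 2 * j = 0 ∨ k - 2 * j = 1 := by omega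
      rcases this with h3 | h3 <;> rw [h3] <;> simp <;> ring
  rw [zon, map_sum, Finset.sum_congr rfl h, Finset.sum_neg_distrib, Finset.sum_range_sub]
  simp only [hT]
  rw [if_neg (by omega)]
  simp

lemma zon_eval (k : ℕ) (x y : Fin m → ℝ) (hx : ∑ i, x i * x i = 1) :
    eval x (zon k y) = (gZ ((m : ℝ) / 2) k).eval (∑ i, x i * y i) := by
  have hn : (gZ ((m : ℝ) / 2) k).natDegree < k + 1 := by
    rw [Nat.lt_succ_iff, Polynomial.natDegree_le_iff_coeff_eq_zero]
    intro i hi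
    exact gZ_coeff _ _ _ (Or.inl hi)
  rw [Polynomial.eval_eq_sum_range' hn, parity_sum]
  · rw [zon, map_sum]
    refine Finset.sum_congr rfl fun j _ => ?_
    have h1 : eval x (lin y) = ∑ i, x i * y i := by
      simp [lin, mul_comm]
    have h2 : eval x rho = 1 := by simp [rho, hx]
    rw [smul_eval, map_mul, map_pow, map_pow, h1, h2, one_pow, mul_one, zc]
  · intro i hi
    rw [gZ_coeff _ _ _ (Or.inr hi), zero_mul]

lemma B_zon (k : ℕ) (x y : Fin m → ℝ) (hx : ∑ i, x i * x i = 1) (hy : ∑ i, y i * y i = 1) :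
    B (zon k x) (zon k y) = zc m k k * (k.factorial : ℝ) * (gZ ((m : ℝ) / 2) k).eval (∑ i, x i * y i) := by
  have h : zon k x = zc m k k • lin x ^ k + rho * ∑ j ∈ Finset.range (k / 2), zc m k (k - 2 * (j + 1)) • (lin x ^ (k - 2 * (j + 1)) * rho ^ j) := by
    rw [zon, Finset.sum_range_succ', Finset.mul_sum, add_comm]
    congr 1
    · simp
    · refine Finset.sum_congr rfl fun j _ => ?_
      rw [smul_eq_C_mul, smul_eq_C_mul, pow_succ]; ring
  rw [h, map_add, LinearMap.add_apply, B_rho_mul, zon_lap k y hy, map_zero, add_zero, map_smul, LinearMap.smul_apply,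
    B_lin_pow x k _ (zon_hom k y), zon_eval k x y hx, smul_eq_mul]
  ring

instance (k : ℕ) : Module.Finite ℝ (homogeneousSubmodule (Fin m) ℝ k) :=
  Module.Finite.iff_fg.2 (homogeneousSubmodule_fg (Fin m) ℝ k)

lemma finrank_hom (k : ℕ) : Module.finrank ℝ (homogeneousSubmodule (Fin m) ℝ k) = (m + k - 1).choose k := by
  rw [homogeneousSubmodule_eq_finsupp_supported]
  have h := Module.finrank_eq_nat_card_basis (basisRestrictSupport ℝ {d : Fin m →₀ ℕ | d.degree = k})
  refine h.trans ?_
  have h2 := Finset.card_finsuppAntidiag_nat_eq_choose (s := (Finset.univ : Finset (Fin m))) k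
  rw [Finset.card_univ, Fintype.card_fin] at h2
  rw [← h2, ← Nat.card_eq_fintype_card.trans (Fintype.card_coe _)]
  congr 2
  ext d
  simp [Finset.mem_finsuppAntidiag, Finsupp.degree_eq_sum]

def H (m k : ℕ) : Submodule ℝ (MvPolynomial (Fin m) ℝ) := homogeneousSubmodule (Fin m) ℝ k ⊓ LinearMap.ker lap

instance (k : ℕ) : Module.Finite ℝ (H m k) :=
  Submodule.finiteDimensional_inf_left _ _

lemma rho_ne (hm : 1 ≤ m) : (rho : MvPolynomial (Fin m) ℝ) ≠ 0 := by
  intro h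
  have h2 : eval (fun _ => (1 : ℝ)) (rho : MvPolynomial (Fin m) ℝ) = m := by simp [rho]
  rw [h] at h2
  simp at h2
  exact absurd h2.symm (by positivity)

lemma finrank_H_add (hm : 1 ≤ m) (k : ℕ) : Module.finrank ℝ (H m (k + 2)) + (m + k - 1).choose k ≤ (m + (k + 2) - 1).choose (k + 2) := by
  set R : Submodule ℝ (MvPolynomial (Fin m) ℝ) := (homogeneousSubmodule (Fin m) ℝ k).map (LinearMap.mulLeft ℝ rho) with hR
  have hinj : Function.Injective (LinearMap.mulLeft ℝ (rho : MvPolynomial (Fin m) ℝ)) := by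
    intro p q hpq
    exact mul_left_cancel₀ (rho_ne hm) hpq
  have h1 : Module.finrank ℝ R = (m + k - 1).choose k := by
    rw [← finrank_hom]
    exact ((Submodule.equivMapOfInjective _ hinj _).finrank_eq).symm
  have h2 : H m (k + 2) ⊓ R = ⊥ := by
    rw [eq_bot_iff]
    rintro p ⟨hp, hpR⟩
    obtain ⟨q, hq, rfl⟩ := hpR
    have hl : lap (LinearMap.mulLeft ℝ rho q) = 0 := hp.2
    have : B (rho * q) (rho * q) = 0 := by
      rw [B_rho_mul]
      rw [LinearMap.mulLeft_apply] at hl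
      rw [hl, map_zero]
    exact B_eq_zero this
  have h3 : H m (k + 2) ⊔ R ≤ homogeneousSubmodule (Fin m) ℝ (k + 2) := by
    apply sup_le inf_le_left
    rintro _ ⟨q, hq, rfl⟩
    have := (rho_hom (m := m)).mul hq
    rw [add_comm] at this
    exact this
  have h4 := Submodule.finrank_sup_add_finrank_inf_eq (H m (k + 2)) R
  rw [h2, finrank_bot, add_zero, h1] at h4
  rw [← h4, ← finrank_hom (m := m) (k + 2)]
  exact Submodule.finrank_mono h3

lemma finrank_H_le (hm : 1 ≤ m) (k : ℕ) : (Module.finrank ℝ (H m k) : ℝ) ≤ (gZ ((m : ℝ) / 2) k).eval 1 := by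
  have hsym : ∀ k : ℕ, (gU ((m : ℝ) / 2) k).eval 1 = ((m + k - 1).choose k : ℝ) := by
    intro k
    rw [gU_one_choose m hm, show k + m - 1 = k + (m - 1) by omega, show m + k - 1 = k + (m - 1) by omega, Nat.choose_symm_add]
  have hle : Module.finrank ℝ (H m k) ≤ (m + k - 1).choose k := by
    rw [← finrank_hom]
    exact Submodule.finrank_mono inf_le_left
  rcases k with _ | _ | k
  · have := hsym 0
    rw [gZ, ← show gU ((m : ℝ) / 2) 0 = 1 from rfl, this]
    exact_mod_cast hle
  · rw [gZ, hsym]; exact_mod_cast hle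
  · rw [gZ, Polynomial.eval_sub, hsym, hsym, le_sub_iff_add_le]
    exact_mod_cast finrank_H_add hm k

def zonH (k : ℕ) (x : Fin m → ℝ) (hx : ∑ i, x i * x i = 1) : H m k :=
  ⟨zon k x, ⟨zon_hom k x, zon_lap k x hx⟩⟩

lemma zonH_coe (k : ℕ) (x : Fin m → ℝ) (hx : ∑ i, x i * x i = 1) : (zonH k x hx : MvPolynomial (Fin m) ℝ) = zon k x := rfl

theorem gZ_features (hm : 1 ≤ m) (k : ℕ) : ∃ (N : ℕ) (e : Fin N → (Fin m → ℝ) → ℝ),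
    (N : ℝ) ≤ (gZ ((m : ℝ) / 2) k).eval 1 ∧ ∀ x y : Fin m → ℝ, ∑ i, x i * x i = 1 → ∑ i, y i * y i = 1 →
      (gZ ((m : ℝ) / 2) k).eval (∑ i, x i * y i) = ∑ a, e a x * e a y := by
  let Bk : LinearMap.BilinForm ℝ (H m k) := B.domRestrict₁₂ (H m k) (H m k)
  have hBs : LinearMap.IsSymm Bk := ⟨fun p q => B_symm _ _⟩
  obtain ⟨v, hv⟩ := LinearMap.BilinForm.exists_orthogonal_basis (B := Bk) hBs
  have hlead : 0 < zc m k k := gZ_lead _ (by have : (1 : ℝ) ≤ m := by exact_mod_cast hm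
                                             linarith) k
  have hc : 0 < zc m k k * (k.factorial : ℝ) := by positivity
  have hexp : ∀ p q : H m k, B (p : MvPolynomial (Fin m) ℝ) q = ∑ a, v.repr p a * v.repr q a * Bk (v a) (v a) := by
    intro p q
    change Bk p q = _
    conv_lhs => rw [← v.sum_repr p, ← v.sum_repr q]
    rw [LinearMap.BilinForm.sum_left]
    refine Finset.sum_congr rfl fun a _ => ?_
    rw [map_sum, Finset.sum_eq_single a]
    · simp; ring
    · intro b _ hb
      have : Bk (v a) (v b) = 0 := hv hb.symm
      simp [this]
    · simp
  refine ⟨_, fun a x => if hx : ∑ i, x i * x i = 1 then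
    Real.sqrt (Bk (v a) (v a) / (zc m k k * (k.factorial : ℝ))) * v.repr (zonH k x hx) a else 0, finrank_H_le hm k, ?_⟩
  intro x y hx hy
  have h := B_zon k x y hx hy
  have h2 := hexp (zonH k x hx) (zonH k y hy)
  simp only [zonH_coe] at h2
  rw [h] at h2
  have h3 : (gZ ((m : ℝ) / 2) k).eval (∑ i, x i * y i) = (zc m k k * (k.factorial : ℝ) * (gZ ((m : ℝ) / 2) k).eval (∑ i, x i * y i)) / (zc m k k * (k.factorial : ℝ)) := by
    field_simp
  rw [h3, h2, Finset.sum_div]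
  refine Finset.sum_congr rfl fun a _ => ?_
  simp only [dif_pos hx, dif_pos hy]
  have h5 : 0 ≤ Bk (v a) (v a) / (zc m k k * (k.factorial : ℝ)) := div_nonneg (B_nonneg _) hc.le
  have h6 := Real.mul_self_sqrt h5
  generalize Real.sqrt _ = s at h6 ⊢
  linear_combination (-(v.repr (zonH k x hx) a * v.repr (zonH k y hy) a)) * h6

end Fischer

end

section
open Polynomial

section LP
variable {m : ℕ} {ι : Type*} [Fintype ι]

/-- quadratic form attached to a polynomial kernel -/
def SL (f : ι → ℝ) (v : ι → Fin m → ℝ) : Polynomial ℝ →ₗ[ℝ] ℝ :=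
  ∑ i, ∑ j, (f i * f j) • Polynomial.leval (∑ l, v i l * v j l)

lemma SL_apply (f : ι → ℝ) (v : ι → Fin m → ℝ) (p : Polynomial ℝ) :
    SL f v p = ∑ i, ∑ j, f i * f j * p.eval (∑ l, v i l * v j l) := by
  simp [SL, LinearMap.sum_apply, Polynomial.leval]

lemma SL_feat {κ : Type*} [Fintype κ] (f : ι → ℝ) (v : ι → Fin m → ℝ) (hv : ∀ i, f i ≠ 0 → ∑ l, v i l * v i l = 1)
    (p : Polynomial ℝ) (e : κ → (Fin m → ℝ) → ℝ)
    (he : ∀ x y : Fin m → ℝ, ∑ i, x i * x i = 1 → ∑ i, y i * y i = 1 →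
      p.eval (∑ i, x i * y i) = ∑ a, e a x * e a y) :
    SL f v p = ∑ a, (∑ i, f i * e a (v i)) ^ 2 := by
  rw [SL_apply]
  have : ∀ i j, f i * f j * p.eval (∑ l, v i l * v j l) = ∑ a, (f i * e a (v i)) * (f j * e a (v j)) := by
    intro i j
    by_cases hi : f i = 0
    · simp [hi]
    by_cases hj : f j = 0
    · simp [hj]
    rw [he _ _ (hv i hi) (hv j hj), Finset.mul_sum]
    exact Finset.sum_congr rfl fun a _ => by ring
  simp_rw [this]
  simp_rw [pow_two, Finset.sum_mul_sum]
  calc ∑ i, ∑ j, ∑ a, (f i * e a (v i)) * (f j * e a (v j)) 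
      = ∑ i, ∑ a, ∑ j, (f i * e a (v i)) * (f j * e a (v j)) := by
        refine Finset.sum_congr rfl fun x _ => Finset.sum_comm
    _ = ∑ a, ∑ i, ∑ j, (f i * e a (v i)) * (f j * e a (v j)) := Finset.sum_comm

lemma SL_prod_nonneg (hm : 1 ≤ m) (f : ι → ℝ) (v : ι → Fin m → ℝ) (hv : ∀ i, f i ≠ 0 → ∑ l, v i l * v i l = 1)
    (j k : ℕ) : 0 ≤ SL f v (gZ ((m : ℝ) / 2) j * gZ ((m : ℝ) / 2) k) := by
  obtain ⟨N, e, -, he⟩ := Fischer.gZ_features hm j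
  obtain ⟨N', e', -, he'⟩ := Fischer.gZ_features hm k
  rw [SL_feat (κ := Fin N × Fin N') f v hv _ (fun a x => e a.1 x * e' a.2 x)]
  · positivity
  · intro x y hx hy
    rw [eval_mul, he x y hx hy, he' x y hx hy, Finset.sum_mul_sum, Fintype.sum_prod_type]
    exact Finset.sum_congr rfl fun a _ => Finset.sum_congr rfl fun b _ => by ring

lemma SL_sq (hm : 1 ≤ m) (f : ι → ℝ) (v : ι → Fin m → ℝ) (hv : ∀ i, f i ≠ 0 → ∑ l, v i l * v i l = 1)
    (k : ℕ) : (gZ ((m : ℝ) / 2) k).eval 1 * (∑ i, f i) ^ 2 ≤ SL f v (gZ ((m : ℝ) / 2) k * gZ ((m : ℝ) / 2) k) := by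
  obtain ⟨N, e, hN, he⟩ := Fischer.gZ_features hm k
  rw [SL_feat (κ := Fin N × Fin N) f v hv _ (fun a x => e a.1 x * e a.2 x)]
  · set z := (gZ ((m : ℝ) / 2) k).eval 1 with hz
    have hz0 : 0 ≤ z := le_trans (by positivity) hN
    have h1 : z * ∑ i, f i = ∑ a, ∑ i, f i * (e a (v i) * e a (v i)) := by
      rw [Finset.sum_comm, Finset.mul_sum]
      refine Finset.sum_congr rfl fun i _ => ?_
      by_cases hi : f i = 0
      · simp [hi]
      have := he _ _ (hv i hi) (hv i hi)
      rw [hv i hi, ← hz] at this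
      rw [← Finset.mul_sum, ← this]; ring
    have h2 : (z * ∑ i, f i) ^ 2 ≤ N * ∑ a, (∑ i, f i * (e a (v i) * e a (v i))) ^ 2 := by
      rw [h1]
      have := sq_sum_le_card_mul_sum_sq (s := (Finset.univ : Finset (Fin N))) (f := fun a => ∑ i, f i * (e a (v i) * e a (v i)))
      simpa using this
    have h3 : ∑ a, (∑ i, f i * (e a (v i) * e a (v i))) ^ 2 ≤ ∑ a : Fin N × Fin N, (∑ i, f i * (e a.1 (v i) * e a.2 (v i))) ^ 2 := by
      rw [Fintype.sum_prod_type]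
      refine Finset.sum_le_sum fun a _ => ?_
      exact Finset.single_le_sum (f := fun b => (∑ i, f i * (e a (v i) * e b (v i))) ^ 2) (fun b _ => sq_nonneg _) (Finset.mem_univ a)
    refine le_trans ?_ h3
    set Y := ∑ a, (∑ i, f i * (e a (v i) * e a (v i))) ^ 2 with hY
    have hY0 : 0 ≤ Y := by positivity
    rcases hz0.eq_or_lt with h0 | h0
    · rw [← h0]; simpa using hY0
    · have h4 : z * (z * (∑ i, f i) ^ 2) ≤ z * Y := by nlinarith
      exact le_of_mul_le_mul_left h4 h0
  · intro x y hx hy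
    rw [eval_mul, he x y hx hy, Finset.sum_mul_sum, Fintype.sum_prod_type]
    exact Finset.sum_congr rfl fun a _ => Finset.sum_congr rfl fun b _ => by ring

lemma gV_eq_sum (μ : ℝ) (d : ℕ) : gV μ d = ∑ k ∈ Finset.range (d + 1), gZ μ k := by
  induction d with
  | zero => simp [gV, gZ]
  | succ d ih =>
    rw [Finset.sum_range_succ, ← ih]
    rcases d with _ | d
    · simp [gV, gZ, gU]; ring
    · simp only [gV, gZ]; ring

lemma gA_eq (μ : ℝ) (hμ : 1 / 2 < μ) (ε : Bool) (d : ℕ) : ∃ γ : ℝ, 0 ≤ γ ∧ gA μ ε d = gV μ d + C γ * gZ μ (d + 1) := by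
  cases ε
  · exact ⟨0, le_rfl, by simp [gA]⟩
  · obtain ⟨γ, h0, h⟩ := one_add_mul_gU μ hμ d
    exact ⟨γ, h0, by simp [gA, h]⟩

lemma LP_base (hm : 2 ≤ m) (ε : Bool) (d : ℕ) (f : ι → ℝ) (v : ι → Fin m → ℝ) (hv : ∀ i, f i ≠ 0 → ∑ l, v i l * v i l = 1)
    (k : ℕ) (hk : k ≤ d) : (gZ ((m : ℝ) / 2) k).eval 1 * (∑ i, f i) ^ 2 ≤ SL f v (gA ((m : ℝ) / 2) ε d * gZ ((m : ℝ) / 2) k) := by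
  have hm1 : 1 ≤ m := by omega
  have hμ : (1 : ℝ) / 2 < (m : ℝ) / 2 := by
    have : (2 : ℝ) ≤ m := by exact_mod_cast hm
    linarith
  obtain ⟨γ, hγ, hA⟩ := gA_eq _ hμ ε d
  rw [hA, add_mul, map_add, gV_eq_sum, Finset.sum_mul, map_sum, mul_assoc, ← smul_eq_C_mul, map_smul, smul_eq_mul]
  have h1 := SL_sq hm1 f v hv k
  have h2 := mul_nonneg hγ (SL_prod_nonneg hm1 f v hv (d + 1) k)
  have h3 := Finset.single_le_sum (s := Finset.range (d + 1)) (f := fun j => SL f v (gZ ((m : ℝ) / 2) j * gZ ((m : ℝ) / 2) k))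
    (fun j _ => SL_prod_nonneg hm1 f v hv j k) (Finset.mem_range.2 (Nat.lt_succ_of_le hk))
  linarith

lemma LP_U (hm : 2 ≤ m) (ε : Bool) (d : ℕ) (f : ι → ℝ) (v : ι → Fin m → ℝ) (hv : ∀ i, f i ≠ 0 → ∑ l, v i l * v i l = 1)
    (k : ℕ) (hk : k ≤ d) : (gU ((m : ℝ) / 2) k).eval 1 * (∑ i, f i) ^ 2 ≤ SL f v (gA ((m : ℝ) / 2) ε d * gU ((m : ℝ) / 2) k) := by
  induction k using Nat.strong_induction_on with
  | _ k ih =>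
    match k with
    | 0 => exact LP_base hm ε d f v hv 0 hk
    | 1 => exact LP_base hm ε d f v hv 1 hk
    | (k + 2) =>
      have h1 := LP_base hm ε d f v hv (k + 2) hk
      have h2 := ih k (by omega) (by omega)
      have e : gU ((m : ℝ) / 2) (k + 2) = gZ ((m : ℝ) / 2) (k + 2) + gU ((m : ℝ) / 2) k := by rw [gZ]; ring
      rw [e, eval_add, mul_add, map_add]
      linarith

lemma LP_P (hm : 2 ≤ m) (ε : Bool) (d : ℕ) (f : ι → ℝ) (v : ι → Fin m → ℝ) (hv : ∀ i, f i ≠ 0 → ∑ l, v i l * v i l = 1)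
    (k : ℕ) (hk : k ≤ d) : (gP ((m : ℝ) / 2) ε k).eval 1 * (∑ i, f i) ^ 2 ≤ SL f v (gA ((m : ℝ) / 2) ε d * gP ((m : ℝ) / 2) ε k) := by
  cases ε
  · simp only [gP, Bool.false_eq_true, if_false]
    rcases k with _ | k
    · exact LP_base hm false d f v hv 0 hk
    · rw [gV, eval_add, mul_add, map_add]
      have h1 := LP_U hm false d f v hv (k + 1) hk
      have h2 := LP_U hm false d f v hv k (by omega)
      linarith
  · simp only [gP, if_true]
    exact LP_U hm true d f v hv k hk

lemma LP_B (hm : 2 ≤ m) (ε : Bool) (d : ℕ) (f : ι → ℝ) (v : ι → Fin m → ℝ) (hv : ∀ i, f i ≠ 0 → ∑ l, v i l * v i l = 1)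
    (w : ℕ → ℝ) (hw : ∀ i < d, 0 < w i) :
    (∑ i ∈ Finset.range d, C (w i) * gP ((m : ℝ) / 2) ε i).eval 1 * (∑ i, f i) ^ 2 ≤
      SL f v (gA ((m : ℝ) / 2) ε d * ∑ i ∈ Finset.range d, C (w i) * gP ((m : ℝ) / 2) ε i) := by
  rw [eval_finsetSum, Finset.mul_sum, map_sum, Finset.sum_mul]
  refine Finset.sum_le_sum fun k hk => ?_
  have hk' := Finset.mem_range.1 hk
  have h := LP_P hm ε d f v hv k hk'.le
  rw [eval_mul, eval_C, mul_left_comm, ← smul_eq_C_mul, map_smul, smul_eq_mul, mul_assoc]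
  exact mul_le_mul_of_nonneg_left h (hw k hk').le

end LP

/-- LP bound on the orthogonal complement of a vector. -/
theorem LP_main {n : ℕ} (hn : 3 ≤ n) {ι : Type*} [Fintype ι] (z : EuclideanSpace ℝ (Fin n)) (hz : z ≠ 0)
    (f : ι → ℝ) (v : ι → EuclideanSpace ℝ (Fin n)) (hvz : ∀ i, ⟪z, v i⟫ = 0) (hv : ∀ i, f i ≠ 0 → ‖v i‖ = 1)
    (ε : Bool) (d : ℕ) (w : ℕ → ℝ) (hw : ∀ i < d, 0 < w i) :
    (∑ i ∈ Finset.range d, C (w i) * gP (((n - 1 : ℕ) : ℝ) / 2) ε i).eval 1 * (∑ i, f i) ^ 2 ≤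
      ∑ i, ∑ j, f i * f j * (gA (((n - 1 : ℕ) : ℝ) / 2) ε d * ∑ i ∈ Finset.range d, C (w i) * gP (((n - 1 : ℕ) : ℝ) / 2) ε i).eval ⟪v i, v j⟫ := by
  set K : Submodule ℝ (EuclideanSpace ℝ (Fin n)) := (ℝ ∙ z)ᗮ with hK
  have hfr : Module.finrank ℝ K = n - 1 := by
    have : Fact (Module.finrank ℝ (EuclideanSpace ℝ (Fin n)) = (n - 1) + 1) := ⟨by simp; omega⟩
    exact Submodule.finrank_orthogonal_span_singleton hz
  let b := (stdOrthonormalBasis ℝ K).reindex (finCongr hfr)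
  have hmem : ∀ i, v i ∈ K := fun i => by
    rw [hK, Submodule.mem_orthogonal_singleton_iff_inner_right]; exact hvz i
  let u : ι → Fin (n - 1) → ℝ := fun i l => b.repr ⟨v i, hmem i⟩ l
  have hin : ∀ i j, ∑ l, u i l * u j l = ⟪v i, v j⟫ := by
    intro i j
    have h := b.repr.inner_map_map ⟨v i, hmem i⟩ ⟨v j, hmem j⟩
    rw [PiLp.inner_apply] at h
    simp only [Submodule.coe_inner] at h
    rw [← h]
    refine Finset.sum_congr rfl fun l _ => ?_
    rw [RCLike.inner_apply, RCLike.conj_to_real]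
    exact mul_comm _ _
  have h := LP_B (m := n - 1) (by omega) ε d f u (fun i hi => by rw [hin, real_inner_self_eq_norm_sq, hv i hi]; norm_num) w hw
  rw [SL_apply] at h
  simp_rw [hin] at h
  exact h

end

section
namespace Sph
open scoped ENNReal

lemma lintegral_fun_norm {W : Type*} [NormedAddCommGroup W] [NormedSpace ℝ W] [Nontrivial W] [FiniteDimensional ℝ W]
    [MeasurableSpace W] [BorelSpace W] (μ : Measure W) [μ.IsAddHaarMeasure] (f : ℝ → ℝ≥0∞) (hf : Measurable f) :
    ∫⁻ x, f ‖x‖ ∂μ = μ.toSphere Set.univ * ∫⁻ y in Set.Ioi (0 : ℝ), ENNReal.ofReal (y ^ (Module.finrank ℝ W - 1)) * f y := by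
  calc
    ∫⁻ x, f (‖x‖) ∂μ = ∫⁻ x : ({(0)}ᶜ : Set W), f (‖x.1‖) ∂(μ.comap (↑)) := by
      rw [lintegral_subtype_comap (measurableSet_singleton _).compl fun x ↦ f (‖x‖),
        restrict_compl_singleton]
    _ = ∫⁻ x, f x.2 ∂μ.toSphere.prod (.volumeIoiPow (Module.finrank ℝ W - 1)) := by
      have := μ.measurePreserving_homeomorphUnitSphereProd.lintegral_comp 
        (f := fun x : (Metric.sphere (0 : W) 1) × (Set.Ioi (0 : ℝ)) => f x.2) (by fun_prop)
      simpa using this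
    _ = μ.toSphere Set.univ * ∫⁻ x : Set.Ioi (0 : ℝ), f x ∂.volumeIoiPow (Module.finrank ℝ W - 1) := by
      rw [lintegral_prod _ (by fun_prop)]
      simp [mul_comm]
    _ = _ := by
      simp only [Measure.volumeIoiPow]
      rw [lintegral_withDensity_eq_lintegral_mul _ (by fun_prop) (by fun_prop)]
      congr 1
      exact lintegral_subtype_comap measurableSet_Ioi (fun x => ENNReal.ofReal (x ^ (Module.finrank ℝ W - 1)) * f x)

lemma subst_sqrt (p : ℝ) (hp : 0 ≤ p) (l : ℕ) (Ψ : ℝ → ℝ≥0∞) :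
    ∫⁻ y in Set.Ioi (0 : ℝ), ENNReal.ofReal (y ^ (l + 1)) * Ψ (√(p ^ 2 + y ^ 2)) =
      ∫⁻ R in Set.Ioi p, ENNReal.ofReal (R * √(R ^ 2 - p ^ 2) ^ l) * Ψ R := by
  have himg : (fun R : ℝ => √(R ^ 2 - p ^ 2)) '' (Set.Ioi p) = Set.Ioi 0 := by
    ext y
    simp only [Set.mem_image, Set.mem_Ioi]
    constructor
    · rintro ⟨R, hR, rfl⟩
      apply Real.sqrt_pos.2; nlinarith
    · intro hy
      refine ⟨√(p ^ 2 + y ^ 2), ?_, ?_⟩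
      · apply Real.lt_sqrt_of_sq_lt; nlinarith
      · rw [Real.sq_sqrt (by positivity)]
        rw [add_sub_cancel_left, Real.sqrt_sq hy.le]
  have := lintegral_image_eq_lintegral_abs_deriv_mul (s := Set.Ioi p) (f := fun R : ℝ => √(R ^ 2 - p ^ 2))
    (f' := fun R => R / √(R ^ 2 - p ^ 2)) measurableSet_Ioi ?_ ?_ (fun y => ENNReal.ofReal (y ^ (l + 1)) * Ψ (√(p ^ 2 + y ^ 2)))
  · rw [himg] at this
    rw [this]
    refine setLIntegral_congr_fun measurableSet_Ioi fun R hR => ?_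
    have hR : p < R := hR
    have h1 : 0 < R ^ 2 - p ^ 2 := by nlinarith
    have h2 : 0 < √(R ^ 2 - p ^ 2) := Real.sqrt_pos.2 h1
    have h3 : √(p ^ 2 + √(R ^ 2 - p ^ 2) ^ 2) = R := by
      rw [Real.sq_sqrt h1.le, add_sub_cancel, Real.sqrt_sq (by linarith)]
    simp only [h3]
    rw [← mul_assoc, ← ENNReal.ofReal_mul (abs_nonneg _), abs_of_nonneg (by apply div_nonneg <;> linarith)]
    congr 2
    rw [pow_succ]; field_simp; ring
  · intro R hR
    have hR : p < R := hR
    have h1 : 0 < R ^ 2 - p ^ 2 := by nlinarith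
    have := (((hasDerivAt_id R).pow 2).sub_const (p ^ 2)).sqrt h1.ne'
    simp only [id] at this
    refine (this.congr_deriv ?_).hasDerivWithinAt
    have h2 : √(R ^ 2 - p ^ 2) ≠ 0 := (Real.sqrt_pos.2 h1).ne'
    change _ / (2 * √(R ^ 2 - p ^ 2)) = _
    field_simp
    norm_num
  · intro a ha b hb hab
    have ha : p < a := ha
    have hb : p < b := hb
    have h1 : 0 ≤ a ^ 2 - p ^ 2 := by nlinarith
    have h2 : 0 ≤ b ^ 2 - p ^ 2 := by nlinarith
    have := (Real.sqrt_inj h1 h2).1 hab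
    have h3 : a ^ 2 = b ^ 2 := by linarith
    exact (pow_left_inj₀ (by linarith) (by linarith) two_ne_zero).1 h3

variable {E : Type*} [NormedAddCommGroup E] [InnerProductSpace ℝ E] [FiniteDimensional ℝ E]
  [MeasurableSpace E] [BorelSpace E]

lemma lintegral_scale (h : E → ℝ≥0∞) (hh : Measurable h) (R : ℝ) (hR : 0 < R) :
    ∫⁻ p, h (R⁻¹ • p) = ENNReal.ofReal (R ^ (Module.finrank ℝ E)) * ∫⁻ q, h q := by
  have h1 := Measure.map_addHaar_smul (volume : Measure E) (inv_ne_zero hR.ne')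
  have h2 := lintegral_map (μ := (volume : Measure E)) hh (measurable_const_smul (R⁻¹))
  rw [h1, lintegral_smul_measure] at h2
  rw [← h2, smul_eq_mul]
  congr 2
  rw [← inv_pow, inv_inv, abs_of_pos (by positivity)]

/-- density -/
def dens (l : ℕ) (p : E) : ℝ≥0∞ := Set.indicator (Metric.ball (0 : E) 1) (fun p => ENNReal.ofReal (√(1 - ‖p‖ ^ 2) ^ l)) p

set_option linter.unusedSectionVars false in
lemma dens_meas (l : ℕ) : Measurable (dens l : E → ℝ≥0∞) := by
  unfold dens
  exact Measurable.indicator (by fun_prop) measurableSet_ball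

lemma inner_int {W : Type*} [NormedAddCommGroup W] [InnerProductSpace ℝ W] [FiniteDimensional ℝ W]
    [MeasurableSpace W] [BorelSpace W] (l : ℕ) (hl : Module.finrank ℝ W = l + 2)
    (Ψ : ℝ → ℝ≥0∞) (hΨ : Measurable Ψ) (p : ℝ) (hp : 0 ≤ p) :
    ∫⁻ w : W, Ψ (√(p ^ 2 + ‖w‖ ^ 2)) = (volume : Measure W).toSphere Set.univ *
      ∫⁻ R in Set.Ioi p, ENNReal.ofReal (R * √(R ^ 2 - p ^ 2) ^ l) * Ψ R := by
  have : Nontrivial W := Module.nontrivial_of_finrank_pos (R := ℝ) (by omega)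
  rw [lintegral_fun_norm volume (fun y => Ψ (√(p ^ 2 + y ^ 2))) (by fun_prop), hl, ← subst_sqrt p hp]
  rfl

lemma prod_int {W : Type*} [NormedAddCommGroup W] [InnerProductSpace ℝ W] [FiniteDimensional ℝ W]
    [MeasurableSpace W] [BorelSpace W] (l : ℕ) (hl : Module.finrank ℝ W = l + 2) : ∃ C : ℝ≥0∞, ∀ 
    (Φ : E → ℝ≥0∞) (hΦ : Measurable Φ), 
    ∫⁻ z : E × W, Set.indicator (Set.Iio 1) (fun R => Φ (R⁻¹ • z.1)) (√(‖z.1‖ ^ 2 + ‖z.2‖ ^ 2)) =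
      C * ∫⁻ q : E, dens l q * Φ q := by
  refine ⟨(volume : Measure W).toSphere Set.univ * ∫⁻ R in Set.Ioo (0 : ℝ) 1, ENNReal.ofReal (R * R ^ l * R ^ (Module.finrank ℝ E)), fun Φ hΦ => ?_⟩
  have hm : Measurable (fun z : E × ℝ => Set.indicator (Set.Iio 1) (fun R => Φ (R⁻¹ • z.1)) z.2) := by
    have : (fun z : E × ℝ => Set.indicator (Set.Iio 1) (fun R => Φ (R⁻¹ • z.1)) z.2) = 
      Set.indicator {z : E × ℝ | z.2 < 1} (fun z => Φ (z.2⁻¹ • z.1)) := by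
      ext z; simp [Set.indicator]
    rw [this]
    exact Measurable.indicator (by fun_prop) (measurableSet_lt (by fun_prop) (by fun_prop))
  have hm2 : Measurable (fun z : E × W => (z.1, √(‖z.1‖ ^ 2 + ‖z.2‖ ^ 2))) := by fun_prop
  rw [Measure.volume_eq_prod, lintegral_prod _ (by exact (hm.comp hm2).aemeasurable)]
  have h1 : ∀ p : E, ∫⁻ w : W, Set.indicator (Set.Iio 1) (fun R => Φ (R⁻¹ • p)) (√(‖p‖ ^ 2 + ‖w‖ ^ 2)) =
    (volume : Measure W).toSphere Set.univ * ∫⁻ R in Set.Ioi (0 : ℝ), 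
      Set.indicator {z : E × ℝ | ‖z.1‖ < z.2 ∧ z.2 < 1} (fun z => ENNReal.ofReal (z.2 * √(z.2 ^ 2 - ‖z.1‖ ^ 2) ^ l) * Φ (z.2⁻¹ • z.1)) (p, R) := by
    intro p
    have hmp : Measurable (fun R => Set.indicator (Set.Iio 1) (fun R : ℝ => Φ (R⁻¹ • p)) R) := by
      exact Measurable.indicator (by fun_prop) measurableSet_Iio
    rw [inner_int l hl _ hmp ‖p‖ (norm_nonneg p)]
    congr 1
    rw [← lintegral_indicator measurableSet_Ioi, ← lintegral_indicator measurableSet_Ioi]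
    congr 1
    ext R
    have := norm_nonneg p
    by_cases hR : ‖p‖ < R
    · have hR0 : 0 < R := by linarith
      by_cases hR1 : R < 1 <;> simp [Set.indicator, hR, hR0, hR1]
    · simp [Set.indicator, hR]
  simp_rw [h1]
  have hm3 : Measurable (Set.indicator {z : E × ℝ | ‖z.1‖ < z.2 ∧ z.2 < 1} (fun z => ENNReal.ofReal (z.2 * √(z.2 ^ 2 - ‖z.1‖ ^ 2) ^ l) * Φ (z.2⁻¹ • z.1))) := by
    refine Measurable.indicator (by fun_prop) ?_
    exact (measurableSet_lt (f := fun z : E × ℝ => ‖z.1‖) (g := fun z => z.2) (by fun_prop) (by fun_prop)).inter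
      (measurableSet_lt (f := fun z : E × ℝ => z.2) (g := fun _ => 1) (by fun_prop) (by fun_prop))
  rw [lintegral_const_mul _ (by exact hm3.lintegral_prod_right')]
  rw [mul_assoc]
  congr 1
  rw [lintegral_lintegral_swap (by exact hm3.aemeasurable)]
  have hdm : Measurable (fun q : E => dens l q * Φ q) := (dens_meas l).mul hΦ
  rw [← lintegral_mul_const _ (by fun_prop)]
  rw [← lintegral_indicator measurableSet_Ioi, ← lintegral_indicator measurableSet_Ioo]
  congr 1
  ext R
  by_cases hR0 : 0 < R
  swap
  · simp [Set.indicator, hR0]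
  by_cases hR1 : R < 1
  swap
  · simp [Set.indicator, hR1]
  rw [Set.indicator_of_mem (by exact hR0), Set.indicator_of_mem (by exact ⟨hR0, hR1⟩)]
  rw [ENNReal.ofReal_mul (by positivity), mul_assoc, ← lintegral_scale _ hdm R hR0, ← lintegral_const_mul _ (by exact hdm.comp (measurable_const_smul (R⁻¹)))]
  congr 1
  ext p
  have e1 : ‖R⁻¹ • p‖ = R⁻¹ * ‖p‖ := by rw [norm_smul, norm_inv, Real.norm_of_nonneg hR0.le]
  by_cases hp : ‖p‖ < R
  · have h2 : R⁻¹ * ‖p‖ < 1 := by rw [inv_mul_lt_iff₀ hR0]; linarith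
    have h3 : dens l (R⁻¹ • p) = ENNReal.ofReal (√(1 - (R⁻¹ * ‖p‖) ^ 2) ^ l) := by
      unfold dens; rw [Set.indicator_of_mem (by simpa [e1] using h2), e1]
    rw [Set.indicator_of_mem (by exact ⟨hp, hR1⟩), h3, ← mul_assoc, ← ENNReal.ofReal_mul (by positivity)]
    congr 2
    rw [mul_assoc, ← mul_pow]
    congr 2
    simp only
    rw [show R ^ 2 - ‖p‖ ^ 2 = R ^ 2 * (1 - (R⁻¹ * ‖p‖) ^ 2) by field_simp, Real.sqrt_mul (by positivity), Real.sqrt_sq hR0.le]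
  · have h2 : ¬ R⁻¹ * ‖p‖ < 1 := by rw [inv_mul_lt_iff₀ hR0]; linarith
    have h3 : dens l (R⁻¹ • p) = 0 := by
      unfold dens; rw [Set.indicator_of_notMem (by simpa [e1] using h2)]
    rw [h3, Set.indicator_of_notMem (by simp [hp])]
    simp

lemma proj_int (K : Submodule ℝ E) (l : ℕ) (hl : Module.finrank ℝ Kᗮ = l + 2) : ∃ C : ℝ≥0∞, ∀ 
    (Φ : K → ℝ≥0∞) (hΦ : Measurable Φ), 
    ∫⁻ z in Metric.ball (0 : E) 1, Φ (‖z‖⁻¹ • K.orthogonalProjectionOnto z) =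
      C * ∫⁻ q : K, dens l q * Φ q := by
  obtain ⟨C, hC⟩ := prod_int (E := K) (W := Kᗮ) l hl
  refine ⟨C, fun Φ hΦ => ?_⟩
  rw [← hC Φ hΦ]
  have hmp : MeasurePreserving (fun z : E => WithLp.ofLp (K.orthogonalDecomposition z)) := 
    (WithLp.volume_preserving_ofLp _ _).comp K.orthogonalDecomposition.measurePreserving
  have hm : Measurable (fun z : K × Kᗮ => Set.indicator (Set.Iio 1) (fun R => Φ (R⁻¹ • z.1)) (√(‖z.1‖ ^ 2 + ‖z.2‖ ^ 2))) := by
    have : (fun z : K × Kᗮ => Set.indicator (Set.Iio 1) (fun R => Φ (R⁻¹ • z.1)) (√(‖z.1‖ ^ 2 + ‖z.2‖ ^ 2))) = 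
      Set.indicator {z : K × Kᗮ | √(‖z.1‖ ^ 2 + ‖z.2‖ ^ 2) < 1} (fun z => Φ ((√(‖z.1‖ ^ 2 + ‖z.2‖ ^ 2))⁻¹ • z.1)) := by
      ext z; rfl
    rw [this]
    exact Measurable.indicator (by fun_prop) (measurableSet_lt (by fun_prop) (by fun_prop))
  rw [← hmp.lintegral_comp hm, ← lintegral_indicator measurableSet_ball]
  congr 1
  ext z
  have h1 : √(‖(WithLp.ofLp (K.orthogonalDecomposition z)).1‖ ^ 2 + ‖(WithLp.ofLp (K.orthogonalDecomposition z)).2‖ ^ 2) = ‖z‖ := by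
    rw [← K.orthogonalDecomposition.norm_map z, WithLp.prod_norm_eq_of_L2]; rfl
  rw [h1]
  simp [Set.indicator, Submodule.orthogonalDecomposition_apply]

end Sph

end

section
namespace Sph
open scoped ENNReal

lemma dens_eq {E : Type*} [NormedAddCommGroup E] (l : ℕ) (hl : 1 ≤ l) (p : E) : dens l p = ENNReal.ofReal (√(1 - ‖p‖ ^ 2) ^ l) := by
  unfold dens
  by_cases h : ‖p‖ < 1
  · rw [Set.indicator_of_mem (by simpa using h)]
  · rw [Set.indicator_of_notMem (by simpa using h), Real.sqrt_eq_zero_of_nonpos (by nlinarith), zero_pow (by omega)]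
    simp

section
variable {E : Type*} [NormedAddCommGroup E] [InnerProductSpace ℝ E] [FiniteDimensional ℝ E]
  [MeasurableSpace E] [BorelSpace E]

lemma proj_integral (K : Submodule ℝ E) (l : ℕ) (hl1 : 1 ≤ l) (hl : Module.finrank ℝ Kᗮ = l + 2) : ∃ C : ℝ, 0 ≤ C ∧ ∀ 
    (φ : K → ℝ), Measurable φ → 
    ∫ z in Metric.ball (0 : E) 1, φ (‖z‖⁻¹ • K.orthogonalProjectionOnto z) =
      C * ∫ q : K, √(1 - ‖q‖ ^ 2) ^ l * φ q := by
  obtain ⟨C, hC⟩ := proj_int K l hl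
  refine ⟨C.toReal, ENNReal.toReal_nonneg, fun φ hφ => ?_⟩
  have hmeas : Measurable (fun z : E => ‖z‖⁻¹ • K.orthogonalProjectionOnto z) := by
    have : Measurable (fun z : E => K.orthogonalProjectionOnto z) := (ContinuousLinearMap.continuous _).measurable
    fun_prop
  have hmap : Measure.map (fun z : E => ‖z‖⁻¹ • K.orthogonalProjectionOnto z) (volume.restrict (Metric.ball (0 : E) 1)) =
      C • (volume : Measure K).withDensity (dens l) := by
    ext s hs
    have h := hC (Set.indicator s 1) (measurable_one.indicator hs)
    rw [Measure.map_apply hmeas hs, Measure.smul_apply, withDensity_apply _ hs, smul_eq_mul, ← lintegral_indicator hs]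
    have e1 : ∀ q : K, dens l q * s.indicator 1 q = s.indicator (dens l) q := by
      intro q; by_cases hq : q ∈ s <;> simp [hq]
    simp_rw [e1] at h
    rw [← h]
    have e2 : ∀ z : E, s.indicator (1 : K → ℝ≥0∞) (‖z‖⁻¹ • K.orthogonalProjectionOnto z) = 
      ((fun z : E => ‖z‖⁻¹ • K.orthogonalProjectionOnto z) ⁻¹' s).indicator 1 z := fun z => by
        rfl
    simp_rw [e2]
    rw [lintegral_indicator_one (hmeas hs)]
  have h2 := integral_map (μ := volume.restrict (Metric.ball (0 : E) 1)) hmeas.aemeasurable (f := φ) hφ.aestronglyMeasurable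
  rw [← h2, hmap, integral_smul_measure, integral_withDensity_eq_integral_toReal_smul (dens_meas l) (by
    filter_upwards with q; rw [dens_eq l hl1]; exact ENNReal.ofReal_lt_top), smul_eq_mul]
  congr 1
  refine integral_congr_ae (.of_forall fun q => ?_)
  simp only [dens_eq l hl1, smul_eq_mul]
  rw [ENNReal.toReal_ofReal (by positivity)]

lemma one_dim {n : ℕ} (hn : 4 ≤ n) (hE : Module.finrank ℝ E = n) (x : E) (hx : ‖x‖ = 1) : ∃ C : ℝ, 0 ≤ C ∧ ∀ φ : ℝ → ℝ, Measurable φ →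
    ∫ z in Metric.ball (0 : E) 1, φ (⟪x, z⟫ / ‖z‖) = C * ∫ u : ℝ, √(1 - u ^ 2) ^ (n - 3) * φ u := by
  have hx0 : x ≠ 0 := by rintro rfl; simp at hx
  have hfr : Module.finrank ℝ (ℝ ∙ x)ᗮ = (n - 3) + 2 := by
    have : Fact (Module.finrank ℝ E = (n - 1) + 1) := ⟨by omega⟩
    rw [Submodule.finrank_orthogonal_span_singleton (n := n - 1) hx0]
    omega
  obtain ⟨C, hC0, hC⟩ := proj_integral (ℝ ∙ x) (n - 3) (by omega) hfr
  refine ⟨C, hC0, fun φ hφ => ?_⟩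
  have h := hC (fun q => φ ⟪x, (q : E)⟫) (by fun_prop)
  have e1 : ∀ z : E, ⟪x, ((‖z‖⁻¹ • (ℝ ∙ x).orthogonalProjectionOnto z : (ℝ ∙ x)) : E)⟫ = ⟪x, z⟫ / ‖z‖ := by
    intro z
    rw [Submodule.coe_smul, inner_smul_right]
    have : ⟪x, ((ℝ ∙ x).orthogonalProjectionOnto z : E)⟫ = ⟪x, z⟫ := by
      have := Submodule.inner_orthogonalProjectionOnto_eq_of_mem_left (K := (ℝ ∙ x)) ⟨x, Submodule.mem_span_singleton_self x⟩ z
      exact this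
    rw [this]; field_simp
  simp_rw [e1] at h
  rw [h]
  congr 1
  have hmp := (LinearIsometryEquiv.toSpanUnitSingleton x hx).measurePreserving
  rw [← hmp.integral_comp (LinearIsometryEquiv.toSpanUnitSingleton x hx).toHomeomorph.measurableEmbedding]
  refine integral_congr_ae (.of_forall fun u => ?_)
  simp only [LinearIsometryEquiv.norm_map]
  simp [inner_smul_right, hx]

lemma two_dim {n : ℕ} (hn : 5 ≤ n) (hE : Module.finrank ℝ E = n) (x y : E) (hx : ‖x‖ = 1) (hy : ‖y‖ = 1) (t : ℝ) (ht : ⟪x, y⟫ = t)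
    (ht1 : t ^ 2 < 1) : ∃ C : ℝ, 0 ≤ C ∧ ∀ H : ℝ × ℝ → ℝ, Measurable H →
    ∫ z in Metric.ball (0 : E) 1, H (⟪x, z⟫ / ‖z‖, ⟪y, z⟫ / ‖z‖) = 
      C * ∫ w : ℝ × ℝ, √(1 - (w.1 ^ 2 + w.2 ^ 2 - 2 * t * w.1 * w.2) / (1 - t ^ 2)) ^ (n - 4) * H w := by
  set K : Submodule ℝ E := Submodule.span ℝ {x, y} with hK
  have hxK : x ∈ K := Submodule.subset_span (by simp)
  have hyK : y ∈ K := Submodule.subset_span (by simp)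
  have hxx : ⟪x, x⟫ = 1 := by rw [real_inner_self_eq_norm_sq, hx]; norm_num
  have hyy : ⟪y, y⟫ = 1 := by rw [real_inner_self_eq_norm_sq, hy]; norm_num
  have hyx : ⟪y, x⟫ = t := by rw [real_inner_comm, ht]
  have hD : 0 < 1 - t ^ 2 := by linarith
  let L : K →ₗ[ℝ] ℝ × ℝ := ((innerSL ℝ x).toLinearMap.prod (innerSL ℝ y).toLinearMap).comp K.subtype
  have hL : ∀ q : K, L q = (⟪x, (q : E)⟫, ⟪y, (q : E)⟫) := fun q => by simp [L]
  have hnorm : ∀ q : K, ‖q‖ ^ 2 = ((L q).1 ^ 2 + (L q).2 ^ 2 - 2 * t * (L q).1 * (L q).2) / (1 - t ^ 2) := by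
    rintro ⟨q, hq⟩
    obtain ⟨a, b, rfl⟩ := Submodule.mem_span_pair.1 hq
    rw [hL]
    simp only [Submodule.coe_norm, inner_add_right, inner_smul_right, hxx, hyy, ht, hyx]
    rw [eq_div_iff hD.ne', ← real_inner_self_eq_norm_sq]
    simp only [inner_add_right, inner_smul_right, inner_add_left, real_inner_smul_left, hxx, hyy, ht, hyx]
    ring
  have hinj : Function.Injective L := by
    rw [injective_iff_map_eq_zero]
    intro q hq
    have := hnorm q
    rw [hq] at this
    simpa using this
  have hsurj : Function.Surjective L := by
    rintro ⟨u, v⟩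
    refine ⟨⟨((u - t * v) / (1 - t ^ 2)) • x + ((v - t * u) / (1 - t ^ 2)) • y, 
      K.add_mem (K.smul_mem _ hxK) (K.smul_mem _ hyK)⟩, ?_⟩
    rw [hL]
    simp only [inner_add_right, inner_smul_right, hxx, hyy, ht, hyx]
    ext
    · field_simp; ring
    · field_simp; ring
  let Le : K ≃L[ℝ] ℝ × ℝ := (LinearEquiv.ofBijective L ⟨hinj, hsurj⟩).toContinuousLinearEquiv
  have hLe : ∀ q, Le q = L q := fun q => rfl
  have hfrK : Module.finrank ℝ K = 2 := by
    rw [(LinearEquiv.ofBijective L ⟨hinj, hsurj⟩).finrank_eq]; simp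
  have hfr : Module.finrank ℝ Kᗮ = (n - 4) + 2 := by
    have := Submodule.finrank_add_finrank_orthogonal K
    omega
  obtain ⟨C, hC0, hC⟩ := proj_integral K (n - 4) (by omega) hfr
  have : (Measure.map Le (volume : Measure K)).IsAddHaarMeasure := Le.isAddHaarMeasure_map _
  have hc := Measure.isAddLeftInvariant_eq_smul (Measure.map Le (volume : Measure K)) volume
  set c := Measure.addHaarScalarFactor (Measure.map Le (volume : Measure K)) volume
  refine ⟨C * c, by positivity, fun H hH => ?_⟩
  have h := hC (fun q => H (L q)) (by exact hH.comp (by exact Le.continuous.measurable))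
  have e1 : ∀ z : E, L (‖z‖⁻¹ • K.orthogonalProjectionOnto z) = (⟪x, z⟫ / ‖z‖, ⟪y, z⟫ / ‖z‖) := by
    intro z
    rw [hL, Submodule.coe_smul, inner_smul_right, inner_smul_right]
    have h1 : ⟪x, (K.orthogonalProjectionOnto z : E)⟫ = ⟪x, z⟫ := by
      have := Submodule.inner_orthogonalProjectionOnto_eq_of_mem_left (K := K) ⟨x, hxK⟩ z
      exact this
    have h2 : ⟪y, (K.orthogonalProjectionOnto z : E)⟫ = ⟪y, z⟫ := by
      have := Submodule.inner_orthogonalProjectionOnto_eq_of_mem_left (K := K) ⟨y, hyK⟩ z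
      exact this
    rw [h1, h2]
    ext <;> simp only <;> field_simp
  simp_rw [e1, hnorm] at h
  rw [h, mul_assoc]
  congr 1
  have h3 := Le.toHomeomorph.measurableEmbedding.integral_map (μ := (volume : Measure K))
    (fun w : ℝ × ℝ => √(1 - (w.1 ^ 2 + w.2 ^ 2 - 2 * t * w.1 * w.2) / (1 - t ^ 2)) ^ (n - 4) * H w)
  have e2 : ∀ q : K, Le.toHomeomorph q = L q := fun q => rfl
  simp_rw [e2] at h3
  rw [← h3]
  rw [show Measure.map (⇑Le.toHomeomorph) (volume : Measure K) = c • volume from hc]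
  rw [integral_smul_nnreal_measure, NNReal.smul_def, smul_eq_mul]

end
end Sph

end

section
namespace Sph
open scoped ENNReal

/-- cosine of the angle of the projected vectors -/
def sfun (t u v : ℝ) : ℝ := (t - u * v) / (√(1 - u ^ 2) * √(1 - v ^ 2))

lemma sfun_meas (t : ℝ) : Measurable (fun w : ℝ × ℝ => sfun t w.1 w.2) := by
  unfold sfun; fun_prop

section
variable {E : Type*} [NormedAddCommGroup E] [InnerProductSpace ℝ E]

/-- normalized projection -/
def vproj (x z : E) : E := (√(1 - (⟪x, z⟫ / ‖z‖) ^ 2))⁻¹ • (x - (⟪x, z⟫ / ‖z‖ / ‖z‖) • z)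

lemma vproj_orth (x z : E) : ⟪z, vproj x z⟫ = 0 := by
  by_cases hz : z = 0
  · simp [hz]
  have hz' : ‖z‖ ≠ 0 := norm_ne_zero_iff.2 hz
  unfold vproj
  rw [inner_smul_right, inner_sub_right, inner_smul_right, real_inner_self_eq_norm_sq, real_inner_comm]
  field_simp
  simp

lemma vproj_inner (x y z : E) (hz : z ≠ 0) : ⟪vproj x z, vproj y z⟫ = sfun ⟪x, y⟫ (⟪x, z⟫ / ‖z‖) (⟪y, z⟫ / ‖z‖) := by
  have hz' : ‖z‖ ≠ 0 := norm_ne_zero_iff.2 hz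
  unfold vproj sfun
  rw [inner_smul_right, real_inner_smul_left, inner_sub_right, inner_sub_left, inner_sub_left, inner_smul_right, inner_smul_right,
    real_inner_smul_left, real_inner_smul_left, real_inner_self_eq_norm_sq, real_inner_comm y z]
  have : (⟪x, y⟫ - ⟪x, z⟫ / ‖z‖ / ‖z‖ * ⟪y, z⟫ - (⟪y, z⟫ / ‖z‖ / ‖z‖ * ⟪x, z⟫ - ⟪y, z⟫ / ‖z‖ / ‖z‖ * (⟪x, z⟫ / ‖z‖ / ‖z‖ * ‖z‖ ^ 2)))
    = ⟪x, y⟫ - ⟪x, z⟫ / ‖z‖ * (⟪y, z⟫ / ‖z‖) := by field_simp; ring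
  rw [← this]; field_simp

lemma sfun_self (u : ℝ) (hu : u ^ 2 < 1) : sfun 1 u u = 1 := by
  unfold sfun
  rw [Real.mul_self_sqrt (by linarith), div_eq_one_iff_eq (by linarith)]; ring

lemma vproj_norm (x z : E) (hx : ‖x‖ = 1) (hz : z ≠ 0) (hu : (⟪x, z⟫ / ‖z‖) ^ 2 < 1) : ‖vproj x z‖ = 1 := by
  have h := vproj_inner x x z hz
  rw [real_inner_self_eq_norm_sq, real_inner_self_eq_norm_sq, hx, one_pow, sfun_self _ hu] at h
  exact (pow_eq_one_iff_of_nonneg (norm_nonneg _) two_ne_zero).1 h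
end

theorem code_bound {E : Type} [NormedAddCommGroup E] [InnerProductSpace ℝ E] [FiniteDimensional ℝ E]
    [MeasurableSpace E] [BorelSpace E] {n : ℕ} (hn : 5 ≤ n) (hE : Module.finrank ℝ E = n) (F : ℝ → ℝ) (hFm : Measurable F) (hF0 : ∀ u, 0 ≤ F u) (M : ℝ) (hFM : ∀ u, F u ≤ M)
    (hFs : ∀ u, F u ≠ 0 → 0 < u ∧ u < 1) (g : Polynomial ℝ) (B1 c : ℝ) (hc : c < 1)
    (A : Finset (E)) (hA1 : ∀ x ∈ A, ‖x‖ = 1) (hAc : ∀ x ∈ A, ∀ y ∈ A, x ≠ y → ⟪x, y⟫ ≤ c)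
    (hLP : ∀ (z : E) (f : A → ℝ) (v : A → E), z ≠ 0 → 
      (∀ i, ⟪z, v i⟫ = 0) → (∀ i, f i ≠ 0 → ‖v i‖ = 1) → B1 * (∑ i, f i) ^ 2 ≤ ∑ i, ∑ j, f i * f j * g.eval ⟪v i, v j⟫)
    (hJ : ∀ t, -1 < t → t ≤ c → ∫ w : ℝ × ℝ, √(1 - (w.1 ^ 2 + w.2 ^ 2 - 2 * t * w.1 * w.2) / (1 - t ^ 2)) ^ (n - 4) * 
      (F w.1 * F w.2 * g.eval (sfun t w.1 w.2)) ≤ 0) (hB1 : 0 ≤ B1) (hg1 : 0 ≤ g.eval 1) :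
    B1 * A.card * (∫ u : ℝ, √(1 - u ^ 2) ^ (n - 3) * F u) ^ 2 ≤ 
      g.eval 1 * (∫ u : ℝ, √(1 - u ^ 2) ^ (n - 3) * F u ^ 2) * (∫ u : ℝ, √(1 - u ^ 2) ^ (n - 3)) := by
  rcases A.eq_empty_or_nonempty with hA | ⟨x0, hx0⟩
  · rw [hA]; simp only [Finset.card_empty, Nat.cast_zero, mul_zero, zero_mul]
    have : 0 ≤ (∫ u : ℝ, √(1 - u ^ 2) ^ (n - 3) * F u ^ 2) := integral_nonneg fun u => by positivity
    have : 0 ≤ (∫ u : ℝ, √(1 - u ^ 2) ^ (n - 3)) := integral_nonneg fun u => by positivity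
    positivity
  set ν : Measure E := volume.restrict (Metric.ball (0 : E) 1) with hν
  have : IsFiniteMeasure ν := ⟨by rw [hν, Measure.restrict_apply_univ]; exact measure_ball_lt_top⟩
  set U : E → E → ℝ := fun x z => ⟪x, z⟫ / ‖z‖ with hU
  have hUm : ∀ x, Measurable (U x) := fun x => by simp only [hU]; fun_prop
  have hae : ∀ᵐ z ∂ν, z ≠ 0 := by
    apply ae_restrict_of_ae
    have : Nontrivial E := Module.nontrivial_of_finrank_pos (R := ℝ) (by omega)
    rw [ae_iff]; simp
  have hM0 : 0 ≤ M := (hF0 0).trans (hFM 0)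
  have hsq : ∀ u, F u ≠ 0 → u ^ 2 < 1 := fun u hu => by have := hFs u hu; nlinarith [this.1, this.2]
  -- bound on g
  obtain ⟨G, hG⟩ := isCompact_Icc.exists_bound_of_continuousOn (s := Set.Icc (-1 : ℝ) 1) (f := fun s => g.eval s) g.continuous.continuousOn
  have hG0 : 0 ≤ G := (norm_nonneg _).trans (hG 0 (by constructor <;> norm_num))
  set k : E → E → E → ℝ := fun x y z => F (U x z) * F (U y z) * g.eval (sfun ⟪x, y⟫ (U x z) (U y z)) with hk
  have hHm : ∀ t, Measurable (fun w : ℝ × ℝ => F w.1 * F w.2 * g.eval (sfun t w.1 w.2)) := fun t => by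
    have := g.continuous.measurable.comp (sfun_meas t)
    exact (by fun_prop : Measurable (fun w : ℝ × ℝ => F w.1 * F w.2)).mul this
  have hkm : ∀ x y, Measurable (k x y) := fun x y => by
    exact (hHm ⟪x, y⟫).comp ((hUm x).prodMk (hUm y))
  have hkint : ∀ x ∈ A, ∀ y ∈ A, Integrable (k x y) ν := by
    intro x hx y hy
    refine Integrable.of_bound (hkm x y).aestronglyMeasurable (M * M * G) ?_
    filter_upwards [hae] with z hz
    by_cases h1 : F (U x z) = 0
    · simp only [hk, h1]; simp; positivity
    by_cases h2 : F (U y z) = 0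
    · simp only [hk, h2]; simp; positivity
    simp only [hk]
    rw [norm_mul, norm_mul, Real.norm_of_nonneg (hF0 _), Real.norm_of_nonneg (hF0 _), ← vproj_inner x y z hz]
    have e1 := vproj_norm x z (hA1 x hx) hz (hsq _ h1)
    have e2 := vproj_norm y z (hA1 y hy) hz (hsq _ h2)
    have e3 := abs_real_inner_le_norm (vproj x z) (vproj y z)
    rw [e1, e2, one_mul] at e3
    have := hG _ (abs_le.1 e3)
    have h3 := hF0 (U x z)
    have h4 := hF0 (U y z)
    gcongr
    · exact hFM _
    · exact hFM _
  have hFint : ∀ x, Integrable (fun z => F (U x z)) ν := fun x => by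
    refine Integrable.of_bound (hFm.comp (hUm x)).aestronglyMeasurable M (.of_forall fun z => ?_)
    rw [Real.norm_of_nonneg (hF0 _)]; exact hFM _
  have hF2int : ∀ x, Integrable (fun z => F (U x z) ^ 2) ν := fun x => by
    refine Integrable.of_bound ((hFm.comp (hUm x)).pow_const 2).aestronglyMeasurable (M ^ 2) (.of_forall fun z => ?_)
    rw [Real.norm_of_nonneg (by positivity)]
    exact pow_le_pow_left₀ (hF0 _) (hFM _) 2
  -- off-diagonal
  have hoff : ∀ x ∈ A, ∀ y ∈ A, x ≠ y → ∫ z, k x y z ∂ν ≤ 0 := by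
    intro x hx y hy hxy
    have ht := hAc x hx y hy hxy
    have htm : -1 ≤ ⟪x, y⟫ := by
      have := abs_real_inner_le_norm x y
      rw [hA1 x hx, hA1 y hy, one_mul] at this
      exact (abs_le.1 this).1
    rcases htm.eq_or_lt with h | h
    · have hy' : x = -y := (inner_eq_neg_one_iff_of_norm_eq_one (hA1 x hx) (hA1 y hy)).1 h.symm
      have : ∀ z, k x y z = 0 := by
        intro z
        have e : U x z = - U y z := by simp only [hU, hy', inner_neg_left]; ring
        simp only [hk, e]
        by_cases h1 : F (U y z) = 0
        · simp [h1]
        by_cases h2 : F (-U y z) = 0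
        · simp [h2]
        have := (hFs _ h1).1
        have := (hFs _ h2).1
        linarith
      simp [this]
    · obtain ⟨C, hC0, hC⟩ := two_dim hn hE x y (hA1 x hx) (hA1 y hy) _ rfl (by nlinarith)
      have h2 := hC _ (hHm ⟪x, y⟫)
      have h3 := mul_nonpos_of_nonneg_of_nonpos hC0 (hJ _ h ht)
      exact h2.trans_le h3
  -- diagonal
  have hdiag : ∀ x ∈ A, ∫ z, k x x z ∂ν = g.eval 1 * ∫ z, F (U x z) ^ 2 ∂ν := by
    intro x hx
    rw [← integral_const_mul]
    refine integral_congr_ae (.of_forall fun z => ?_)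
    simp only [hk]
    by_cases h1 : F (U x z) = 0
    · simp [h1]
    rw [real_inner_self_eq_norm_sq, hA1 x hx, one_pow, sfun_self _ (hsq _ h1)]; ring
  -- pointwise LP
  set S : E → ℝ := fun z => ∑ x ∈ A, F (U x z) with hS
  have hpt : ∀ᵐ z ∂ν, B1 * S z ^ 2 ≤ ∑ x ∈ A, ∑ y ∈ A, k x y z := by
    filter_upwards [hae] with z hz
    have h := hLP z (fun x => F (U x z)) (fun x => vproj x z) hz (fun x => vproj_orth _ _)
      (fun x hx => vproj_norm _ _ (hA1 _ x.2) hz (hsq _ hx))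
    simp only [vproj_inner _ _ z hz] at h
    rw [Finset.sum_coe_sort A (fun x => F (U x z))] at h
    have e : ∀ x : A, ∑ y : A, F (U x z) * F (U y z) * g.eval (sfun ⟪(x : E), y⟫ (⟪(x : E), z⟫ / ‖z‖) (⟪(y : E), z⟫ / ‖z‖)) = ∑ y ∈ A, k x y z := 
      fun x => Finset.sum_coe_sort A (fun y => k x y z)
    simp_rw [e] at h
    rw [Finset.sum_coe_sort A (fun x => ∑ y ∈ A, k x y z)] at h
    exact h
  have hSm : Measurable S := by
    simp only [hS]; exact Finset.measurable_sum _ fun x _ => hFm.comp (hUm x)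
  have hSint : Integrable S ν := integrable_finsetSum _ fun x _ => hFint x
  have hS0 : ∀ z, 0 ≤ S z := fun z => Finset.sum_nonneg fun x _ => hF0 _
  have hS2int : Integrable (fun z => S z ^ 2) ν := by
    refine Integrable.of_bound (hSm.pow_const 2).aestronglyMeasurable ((A.card * M) ^ 2) (.of_forall fun z => ?_)
    rw [Real.norm_of_nonneg (by positivity)]
    refine pow_le_pow_left₀ (hS0 z) ?_ 2
    calc S z ≤ ∑ x ∈ A, M := Finset.sum_le_sum fun x _ => hFM _
      _ = _ := by simp
  set I0 := ν.real Set.univ with hI0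
  have hI0pos : 0 < I0 := by
    rw [hI0, measureReal_def]
    apply ENNReal.toReal_pos
    · rw [hν, Measure.restrict_apply_univ]; exact (Metric.measure_ball_pos _ _ one_pos).ne'
    · exact measure_ne_top _ _
  have hone : ∀ x, ‖x‖ = 1 → ∃ C : ℝ, 0 ≤ C ∧ I0 = C * (∫ u : ℝ, √(1 - u ^ 2) ^ (n - 3)) ∧
    ∫ z, F (U x z) ∂ν = C * (∫ u : ℝ, √(1 - u ^ 2) ^ (n - 3) * F u) ∧ 
    ∫ z, F (U x z) ^ 2 ∂ν = C * (∫ u : ℝ, √(1 - u ^ 2) ^ (n - 3) * F u ^ 2) := by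
    intro x hx
    obtain ⟨C, hC0, hC⟩ := one_dim (by omega : 4 ≤ n) hE x hx
    refine ⟨C, hC0, ?_, hC F hFm, hC (fun u => F u ^ 2) (hFm.pow_const 2)⟩
    have := hC (fun _ => 1) measurable_const
    simpa [hI0, hν] using this
  set J0 := ∫ u : ℝ, √(1 - u ^ 2) ^ (n - 3) with hJ0
  set J1 := ∫ u : ℝ, √(1 - u ^ 2) ^ (n - 3) * F u with hJ1
  set J2 := ∫ u : ℝ, √(1 - u ^ 2) ^ (n - 3) * F u ^ 2 with hJ2
  have hJ0pos : 0 < J0 := by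
    obtain ⟨C, hC0, h1, -⟩ := hone x0 (hA1 x0 hx0)
    by_contra hcon
    nlinarith
  have hJ2nn : 0 ≤ J2 := integral_nonneg fun u => by positivity
  set D := I0 / J0 with hD
  have hDpos : 0 < D := div_pos hI0pos hJ0pos
  have hone' : ∀ x ∈ A, ∫ z, F (U x z) ∂ν = D * J1 ∧ ∫ z, F (U x z) ^ 2 ∂ν = D * J2 := by
    intro x hx
    obtain ⟨C, hC0, h1, h2, h3⟩ := hone x (hA1 x hx)
    have : D = C := by rw [hD, h1]; field_simp
    rw [this]; exact ⟨h2, h3⟩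
  have hSI : ∫ z, S z ∂ν = A.card * (D * J1) := by
    simp only [hS]
    rw [integral_finsetSum _ fun x _ => hFint x, Finset.sum_congr rfl fun x hx => (hone' x hx).1]
    simp
  have hmain : B1 * ∫ z, S z ^ 2 ∂ν ≤ A.card * (g.eval 1 * (D * J2)) := by
    rw [← integral_const_mul]
    calc ∫ z, B1 * S z ^ 2 ∂ν ≤ ∫ z, ∑ x ∈ A, ∑ y ∈ A, k x y z ∂ν := by
          refine integral_mono_ae (hS2int.const_mul _) ?_ hpt
          exact integrable_finsetSum _ fun x hx => integrable_finsetSum _ fun y hy => hkint x hx y hy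
      _ = ∑ x ∈ A, ∑ y ∈ A, ∫ z, k x y z ∂ν := by
          rw [integral_finsetSum _ fun x hx => integrable_finsetSum _ fun y hy => hkint x hx y hy]
          exact Finset.sum_congr rfl fun x hx => integral_finsetSum _ fun y hy => hkint x hx y hy
      _ ≤ ∑ x ∈ A, (g.eval 1 * (D * J2)) := by
          refine Finset.sum_le_sum fun x hx => ?_
          classical
          rw [← Finset.add_sum_erase A _ hx, hdiag x hx, (hone' x hx).2]
          have : ∑ y ∈ A.erase x, ∫ z, k x y z ∂ν ≤ 0 := Finset.sum_nonpos fun y hy => 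
            hoff x hx y (Finset.mem_of_mem_erase hy) (Finset.ne_of_mem_erase hy).symm
          linarith
      _ = _ := by simp
  have hCS : (∫ z, S z ∂ν) ^ 2 ≤ I0 * ∫ z, S z ^ 2 ∂ν := by
    set P := ∫ z, S z ∂ν with hP
    have h0 : 0 ≤ ∫ z, (I0 * S z - P) ^ 2 ∂ν := integral_nonneg fun z => sq_nonneg _
    have e : ∀ z, (I0 * S z - P) ^ 2 = I0 ^ 2 * S z ^ 2 - 2 * I0 * P * S z + P ^ 2 := fun z => by ring
    simp_rw [e] at h0
    rw [integral_add (by exact (hS2int.const_mul _).sub (hSint.const_mul _)) (integrable_const _), integral_sub (hS2int.const_mul _) (hSint.const_mul _),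
      integral_const_mul, integral_const_mul, integral_const, ← hP, smul_eq_mul, ← hI0] at h0
    have : 0 ≤ I0 * (I0 * ∫ z, S z ^ 2 ∂ν - P ^ 2) := by nlinarith
    have := nonneg_of_mul_nonneg_right this hI0pos
    linarith
  rw [hSI] at hCS
  have hcard : (0 : ℝ) < A.card := by exact_mod_cast Finset.card_pos.2 ⟨x0, hx0⟩
  have hI0' : I0 = D * J0 := (div_mul_cancel₀ _ hJ0pos.ne').symm
  rw [hI0'] at hCS
  have h5 : B1 * (A.card * (D * J1)) ^ 2 ≤ D * J0 * (A.card * (g.eval 1 * (D * J2))) := by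
    calc B1 * (A.card * (D * J1)) ^ 2 ≤ B1 * (D * J0 * ∫ z, S z ^ 2 ∂ν) := mul_le_mul_of_nonneg_left hCS hB1
      _ = D * J0 * (B1 * ∫ z, S z ^ 2 ∂ν) := by ring
      _ ≤ _ := mul_le_mul_of_nonneg_left hmain (by positivity)
  have h6 : (A.card * D ^ 2) * (B1 * A.card * J1 ^ 2) ≤ (A.card * D ^ 2) * (g.eval 1 * J2 * J0) := by nlinarith
  exact le_of_mul_le_mul_left h6 (mul_pos hcard (pow_pos hDpos 2))

end Sph

end

section
namespace Stm

lemma sturm (y y1 Q : ℝ → ℝ) (l k : ℝ) (hk : 0 < k) (hy : ∀ s ∈ Set.Icc l (l + π / k), HasDerivAt y (y1 s) s)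
    (hy1 : ∀ s ∈ Set.Icc l (l + π / k), HasDerivAt y1 (-(Q s) * y s) s)
    (hl : 0 ≤ y l) (hpos : ∀ s ∈ Set.Ioc l (l + π / k), 0 < y s) (hQ : ∀ s ∈ Set.Icc l (l + π / k), k ^ 2 ≤ Q s) : False := by
  set r := l + π / k with hr
  have hlr : l < r := by rw [hr]; have := div_pos Real.pi_pos hk; linarith
  set W : ℝ → ℝ := fun s => y1 s * sin (k * (s - l)) - k * (y s * cos (k * (s - l))) with hW
  have hWd : ∀ s ∈ Set.Icc l r, HasDerivAt W ((k ^ 2 - Q s) * y s * sin (k * (s - l))) s := by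
    intro s hs
    have h0 : HasDerivAt (fun s => k * (s - l)) k s := by simpa using ((hasDerivAt_id s).sub_const l).const_mul k
    have h := ((hy1 s hs).mul h0.sin).sub (((hy s hs).mul h0.cos).const_mul k)
    refine h.congr_deriv ?_
    ring
  have hanti : AntitoneOn W (Set.Icc l r) := by
    refine antitoneOn_of_hasDerivWithinAt_nonpos (convex_Icc l r) (fun s hs => (hWd s hs).continuousAt.continuousWithinAt)
      (fun s hs => (hWd s (interior_subset hs)).hasDerivWithinAt) ?_
    intro s hs
    rw [interior_Icc] at hs
    have hs' : s ∈ Set.Icc l r := ⟨hs.1.le, hs.2.le⟩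
    have h1 := hQ s hs'
    have h2 := hpos s ⟨hs.1, hs.2.le⟩
    have h3 : 0 ≤ sin (k * (s - l)) := by
      apply Real.sin_nonneg_of_nonneg_of_le_pi
      · have := hs.1; apply mul_nonneg hk.le; linarith
      · have : s - l ≤ π / k := by have := hs.2; rw [hr] at this; linarith
        calc k * (s - l) ≤ k * (π / k) := by gcongr
          _ = π := by field_simp
    have : 0 ≤ (Q s - k ^ 2) * y s * sin (k * (s - l)) := by
      apply mul_nonneg (mul_nonneg _ h2.le) h3; linarith
    linarith
  have h := hanti (Set.left_mem_Icc.2 hlr.le) (Set.right_mem_Icc.2 hlr.le) hlr.le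
  have e : k * (r - l) = π := by rw [hr]; field_simp; ring
  have hyr := hpos r (Set.right_mem_Ioc.2 hlr)
  simp only [hW, e, sub_self, mul_zero, sin_zero, cos_zero, sin_pi, cos_pi] at h
  have := mul_pos hk hyr
  have := mul_nonneg hk.le hl
  linarith

/-- numerator of the potential -/
def Nf (E A1 A2 s : ℝ) : ℝ := E * (1 - s ^ 2) - A1 * (1 + s) ^ 2 - A2 * (1 - s) ^ 2

/-- solution data -/
structure Sol (y y1 : ℝ → ℝ) (E A1 A2 s1 : ℝ) : Prop where
  hA2 : 0 ≤ A2
  hA : A2 ≤ A1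
  hE : 0 ≤ E
  hs1' : s1 < 1
  hy : ∀ s ∈ Set.Ioo (-1 : ℝ) 1, HasDerivAt y (y1 s) s
  hy1 : ∀ s ∈ Set.Ioo (-1 : ℝ) 1, HasDerivAt y1 (-(Nf E A1 A2 s / (1 - s ^ 2) ^ 2) * y s) s
  hpos : ∀ s ∈ Set.Ioo s1 1, -1 < s → 0 < y s
  hy1z : y 1 = 0
  hc : ContinuousOn y (Set.Ioc (-1) 1)

/-- Sturm comparison for a `Sol`. -/
lemma Sol.sturm {y y1 : ℝ → ℝ} {E A1 A2 s1 : ℝ} (S : Sol y y1 E A1 A2 s1) (l k r : ℝ) (hk : 0 < k) (h0 : 0 ≤ l) (hl : s1 ≤ l) (hyl : 0 ≤ y l)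
    (hr : r < 1) (hlr : l + π / k ≤ r) (hN : ∀ s ∈ Set.Icc l r, k ^ 2 ≤ Nf E A1 A2 s) : False := by
  have hpk := div_pos Real.pi_pos hk
  refine Stm.sturm y y1 (fun s => Nf E A1 A2 s / (1 - s ^ 2) ^ 2) l k hk ?_ ?_ hyl ?_ ?_
  · intro s hs; exact S.hy s ⟨by linarith [hs.1], by linarith [hs.2]⟩
  · intro s hs; exact S.hy1 s ⟨by linarith [hs.1], by linarith [hs.2]⟩
  · intro s hs; exact S.hpos s ⟨by linarith [hs.1], by linarith [hs.2]⟩ (by linarith [hs.1])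
  · intro s hs
    have h1 := hN s ⟨hs.1, hs.2.trans hlr⟩
    have h2 : 0 ≤ s := h0.trans hs.1
    have h3 : s < 1 := by linarith [hs.2]
    have h4 : 0 < 1 - s ^ 2 := by nlinarith
    rw [le_div_iff₀ (by positivity)]
    have h5 : (1 - s ^ 2) ^ 2 ≤ 1 := by
      apply pow_le_one₀ h4.le; nlinarith
    calc k ^ 2 * (1 - s ^ 2) ^ 2 ≤ k ^ 2 * 1 := by gcongr
      _ ≤ _ := by linarith

lemma Sol.N_nonneg {y y1 : ℝ → ℝ} {E A1 A2 s1 : ℝ} (S : Sol y y1 E A1 A2 s1) (h0 : 0 ≤ s1) (hy0 : y s1 = 0) : 0 ≤ Nf E A1 A2 s1 := by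
  by_contra hcon
  push Not at hcon
  have hneg : ∀ s ∈ Set.Ioo s1 1, Nf E A1 A2 s ≤ 0 := by
    intro s hs
    refine le_trans ?_ hcon.le
    unfold Nf
    have h1 := hs.1
    have h2 := hs.2
    have hA1 : 0 ≤ A1 := S.hA2.trans S.hA
    have e : (E * (1 - s ^ 2) - A1 * (1 + s) ^ 2 - A2 * (1 - s) ^ 2) - (E * (1 - s1 ^ 2) - A1 * (1 + s1) ^ 2 - A2 * (1 - s1) ^ 2)
      = -(s - s1) * (E * (s + s1) + (A1 - A2) * 2 + (A1 + A2) * (s + s1)) := by ring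
    have h3 : 0 ≤ E * (s + s1) + (A1 - A2) * 2 + (A1 + A2) * (s + s1) := by
      have := S.hE; have := S.hA; have := S.hA2
      have h4 : 0 ≤ s + s1 := by linarith
      have := mul_nonneg S.hE h4
      have := mul_nonneg (add_nonneg hA1 S.hA2) h4
      linarith
    have := mul_nonneg (sub_nonneg.2 h1.le) h3
    linarith
  have hconv : ConvexOn ℝ (Set.Icc s1 1) y := by
    refine convexOn_of_hasDerivWithinAt2_nonneg (f' := y1) (f'' := fun s => -(Nf E A1 A2 s / (1 - s ^ 2) ^ 2) * y s) (convex_Icc _ _) 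
      (S.hc.mono fun s hs => ⟨by linarith [hs.1], hs.2⟩) ?_ ?_ ?_
    · intro s hs; rw [interior_Icc] at hs
      exact (S.hy s ⟨by linarith [hs.1], hs.2⟩).hasDerivWithinAt
    · intro s hs; rw [interior_Icc] at hs
      exact (S.hy1 s ⟨by linarith [hs.1], hs.2⟩).hasDerivWithinAt
    · intro s hs; rw [interior_Icc] at hs
      have h1 := S.hpos s hs (by linarith [hs.1])
      have h2 := hneg s hs
      have h3 : Nf E A1 A2 s / (1 - s ^ 2) ^ 2 ≤ 0 := div_nonpos_of_nonpos_of_nonneg h2 (by positivity)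
      exact mul_nonneg (by linarith) h1.le
  have hs1 := S.hs1'
  have h := hconv.2 (Set.left_mem_Icc.2 hs1.le) (Set.right_mem_Icc.2 hs1.le) (show (0:ℝ) ≤ 1/2 by norm_num) (show (0:ℝ) ≤ 1/2 by norm_num) (by norm_num)
  rw [hy0, S.hy1z] at h
  simp only [smul_eq_mul, mul_zero, add_zero] at h
  have := S.hpos (1 / 2 * s1 + 1 / 2 * 1) ⟨by linarith, by linarith⟩ (by linarith)
  linarith

/-- linear approximation near a zero. -/
lemma lin_approx (y y1 Q : ℝ → ℝ) (s1 w β : ℝ) (hw : 0 ≤ w) (hβ : 0 ≤ β) (hβ2 : β * w ^ 2 ≤ 1 / 2)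
    (hy : ∀ s ∈ Set.Icc (s1 - w) (s1 + w), HasDerivAt y (y1 s) s)
    (hy1 : ∀ s ∈ Set.Icc (s1 - w) (s1 + w), HasDerivAt y1 (-(Q s) * y s) s) (h0 : y s1 = 0)
    (hQ : ∀ s ∈ Set.Icc (s1 - w) (s1 + w), |Q s| ≤ β) :
    ∀ s ∈ Set.Icc (s1 - w) (s1 + w), |y s - y1 s1 * (s - s1)| ≤ 2 * β * w ^ 2 * |y1 s1| * |s - s1| := by
  set I := Set.Icc (s1 - w) (s1 + w) with hI
  have hs1I : s1 ∈ I := ⟨by linarith, by linarith⟩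
  have habs : ∀ s ∈ I, |s - s1| ≤ w := fun s hs => abs_le.2 ⟨by linarith [hs.1], by linarith [hs.2]⟩
  have hcv : Convex ℝ I := convex_Icc _ _
  obtain ⟨x0, hx0, hmax⟩ := isCompact_Icc.exists_isMaxOn (s := I) ⟨s1, hs1I⟩ (f := fun s => |y1 s|)
    (fun s hs => (hy1 s hs).continuousAt.continuousWithinAt.abs)
  set M := |y1 x0| with hM
  have hMle : ∀ s ∈ I, |y1 s| ≤ M := fun s hs => hmax hs
  have hM0 : 0 ≤ M := abs_nonneg _
  have hyb : ∀ s ∈ I, |y s| ≤ M * w := by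
    intro s hs
    have := hcv.norm_image_sub_le_of_norm_hasDerivWithin_le (f := y) (f' := y1) (C := M) 
      (fun s hs => (hy s hs).hasDerivWithinAt) hMle hs1I hs
    rw [h0, sub_zero] at this
    exact this.trans (mul_le_mul_of_nonneg_left (habs s hs) hM0)
  have hy1b : ∀ s ∈ I, |y1 s - y1 s1| ≤ β * (M * w) * w := by
    intro s hs
    have := hcv.norm_image_sub_le_of_norm_hasDerivWithin_le (f := y1) (f' := fun s => -(Q s) * y s) (C := β * (M * w)) 
      (fun s hs => (hy1 s hs).hasDerivWithinAt) (fun s hs => by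
        rw [norm_mul, norm_neg]
        exact mul_le_mul (hQ s hs) (hyb s hs) (norm_nonneg _) hβ) hs1I hs
    exact this.trans (mul_le_mul_of_nonneg_left (habs s hs) (by positivity))
  have hM2 : M ≤ 2 * |y1 s1| := by
    have h1 := hy1b x0 hx0
    have h2 : M ≤ |y1 x0 - y1 s1| + |y1 s1| := by
      have := abs_add_le (y1 x0 - y1 s1) (y1 s1)
      simpa using this
    have h3 : β * (M * w) * w = M * (β * w ^ 2) := by ring
    rw [h3] at h1
    nlinarith
  intro s hs
  have h := hcv.norm_image_sub_le_of_norm_hasDerivWithin_le (f := fun s => y s - y1 s1 * (s - s1)) (f' := fun s => y1 s - y1 s1) (C := β * (M * w) * w) 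
      (fun s hs => by
        have h3 := (((hasDerivAt_id s).sub_const s1).const_mul (y1 s1))
        have h4 := ((hy s hs).sub h3).hasDerivWithinAt (s := I)
        rw [mul_one] at h4
        exact h4) hy1b hs1I hs
  simp only [h0, sub_self, mul_zero, sub_zero, Real.norm_eq_abs] at h
  refine h.trans (mul_le_mul_of_nonneg_right ?_ (abs_nonneg _))
  calc β * (M * w) * w = β * w ^ 2 * M := by ring
    _ ≤ β * w ^ 2 * (2 * |y1 s1|) := by gcongr
    _ = _ := by ring

end Stm

end

section
open Polynomial
namespace Stm

def ee (κ1 κ2 s : ℝ) : ℝ := (1 - s) ^ κ1 * (1 + s) ^ κ2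
def LL (κ1 κ2 s : ℝ) : ℝ := -κ1 / (1 - s) + κ2 / (1 + s)

lemma ee_deriv (κ1 κ2 s : ℝ) (h1 : -1 < s) (h2 : s < 1) : HasDerivAt (ee κ1 κ2) (LL κ1 κ2 s * ee κ1 κ2 s) s := by
  have a1 : 0 < 1 - s := by linarith
  have a2 : 0 < 1 + s := by linarith
  have d1 : HasDerivAt (fun s : ℝ => 1 - s) (-1) s := by simpa using (hasDerivAt_id s).const_sub 1
  have d2 : HasDerivAt (fun s : ℝ => 1 + s) 1 s := by simpa using (hasDerivAt_id s).const_add 1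
  have e1 := d1.rpow_const (p := κ1) (Or.inl a1.ne')
  have e2 := d2.rpow_const (p := κ2) (Or.inl a2.ne')
  refine (e1.mul e2).congr_deriv ?_
  rw [Real.rpow_sub_one a1.ne', Real.rpow_sub_one a2.ne']
  unfold ee LL
  field_simp

lemma LL_deriv (κ1 κ2 s : ℝ) (h1 : -1 < s) (h2 : s < 1) : HasDerivAt (LL κ1 κ2) (-κ1 / (1 - s) ^ 2 - κ2 / (1 + s) ^ 2) s := by
  have a1 : 0 < 1 - s := by linarith
  have a2 : 0 < 1 + s := by linarith
  have d1 : HasDerivAt (fun s : ℝ => 1 - s) (-1) s := by simpa using (hasDerivAt_id s).const_sub 1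
  have d2 : HasDerivAt (fun s : ℝ => 1 + s) 1 s := by simpa using (hasDerivAt_id s).const_add 1
  have e1 := (hasDerivAt_const s (-κ1)).div d1 a1.ne'
  have e2 := (hasDerivAt_const s κ2).div d2 a2.ne'
  refine (e1.add e2).congr_deriv ?_
  field_simp
  ring

lemma sol_of_ode (p : ℝ[X]) (κ1 κ2 Λ s1 : ℝ) (h2 : 1 ≤ κ2) (h12 : κ2 ≤ κ1) (hΛ : 0 ≤ Λ) (hs1 : s1 < 1)
    (hpos : ∀ x, s1 < x → 0 < p.eval x)
    (hode : ∀ x : ℝ, (1 - x ^ 2) * (derivative (derivative p)).eval x + (2 * (κ2 - κ1) - 2 * (κ1 + κ2) * x) * (derivative p).eval x + Λ * p.eval x = 0) :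
    Sol (fun s => ee κ1 κ2 s * p.eval s) (fun s => ee κ1 κ2 s * (LL κ1 κ2 s * p.eval s + (derivative p).eval s))
      (Λ + 2 * κ1 * κ2) (κ1 * (κ1 - 1)) (κ2 * (κ2 - 1)) s1 where
  hA2 := by nlinarith
  hA := by nlinarith
  hE := by
    have : 0 ≤ κ1 * κ2 := by nlinarith
    linarith
  hs1' := hs1
  hy := by
    intro s hs
    refine ((ee_deriv κ1 κ2 s hs.1 hs.2).mul (p.hasDerivAt s)).congr_deriv ?_
    ring
  hy1 := by
    intro s hs
    have e := (ee_deriv κ1 κ2 s hs.1 hs.2).mul (((LL_deriv κ1 κ2 s hs.1 hs.2).mul (p.hasDerivAt s)).add ((derivative p).hasDerivAt s))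
    refine e.congr_deriv ?_
    have a1 : 0 < 1 - s := by linarith [hs.2]
    have a2 : 0 < 1 + s := by linarith [hs.1]
    have h := hode s
    have h3 : (derivative (derivative p)).eval s = -((2 * (κ2 - κ1) - 2 * (κ1 + κ2) * s) * (derivative p).eval s + Λ * p.eval s) / ((1 - s) * (1 + s)) := by
      rw [eq_div_iff (by positivity)]
      linear_combination h
    simp only [Pi.mul_apply, Pi.add_apply]
    rw [h3, show (1 - s ^ 2) = (1 - s) * (1 + s) by ring]
    unfold LL Nf
    field_simp
    ring
  hpos := by
    intro s hs h
    have a1 : 0 < 1 - s := by linarith [hs.2]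
    have a2 : 0 < 1 + s := by linarith [hs.1]
    unfold ee
    have := hpos s hs.1
    positivity
  hy1z := by
    simp [ee, Real.zero_rpow (show κ1 ≠ 0 by linarith)]
  hc := by
    apply Continuous.continuousOn
    unfold ee
    have c1 : Continuous fun s : ℝ => (1 - s) ^ κ1 := (continuous_const.sub continuous_id).rpow_const (fun _ => Or.inr (by linarith))
    have c2 : Continuous fun s : ℝ => (1 + s) ^ κ2 := (continuous_const.add continuous_id).rpow_const (fun _ => Or.inr (by linarith))
    exact (c1.mul c2).mul p.continuous

/-- instantiation; `n ≥ 8`, μ = (n-1)/2. -/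
lemma sol_gP (N : ℝ) (hN : 6 ≤ N) (ε : Bool) (d : ℕ) (hd : 1 ≤ d) :
    Sol (fun s => ee (N / 4) ((gb ((N - 1) / 2) ε + 1) / 2) s * (gP ((N - 1) / 2) ε d).eval s) 
      (fun s => ee (N / 4) ((gb ((N - 1) / 2) ε + 1) / 2) s * (LL (N / 4) ((gb ((N - 1) / 2) ε + 1) / 2) s * (gP ((N - 1) / 2) ε d).eval s + (derivative (gP ((N - 1) / 2) ε d)).eval s))
      ((d : ℝ) * (d + ((N - 1) / 2 - 1/2) + gb ((N - 1) / 2) ε + 1) + 2 * (N / 4) * ((gb ((N - 1) / 2) ε + 1) / 2)) (N / 4 * (N / 4 - 1)) ((gb ((N - 1) / 2) ε + 1) / 2 * ((gb ((N - 1) / 2) ε + 1) / 2 - 1)) (sSup {x : ℝ | (gP ((N - 1) / 2) ε d).eval x = 0}) := by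
  obtain ⟨h1, h2, h3, h4⟩ := (ttrP ((N - 1) / 2) (by linarith) ε).main d hd
  have hb : N / 2 - 2 ≤ gb ((N - 1) / 2) ε ∧ gb ((N - 1) / 2) ε ≤ N / 2 - 1 := by
    cases ε <;> simp [gb] <;> constructor <;> linarith
  refine sol_of_ode _ _ _ _ _ (by linarith) (by linarith) ?_ h1 h3 ?_
  · apply mul_nonneg (by positivity)
    have : (0 : ℝ) ≤ d := by positivity
    linarith
  · intro x
    have h := congrArg (fun q => q.eval x) (gP_ode ((N - 1) / 2) ε d)
    simp only [eval_add, eval_mul, eval_sub, eval_one, eval_pow, eval_X, eval_C, eval_zero] at h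
    linear_combination h

end Stm

end

section
namespace Stm

lemma Nf_lower {E A1 A2 N δ s C : ℝ} (hA2 : A2 ≤ N ^ 2) (hA1 : A1 ≤ N ^ 2) (h0 : 0 ≤ s) (h1 : s ≤ 1 - 2 * δ) (hδ : 0 < δ) 
    (hC : 0 ≤ C) (hE : C * N ^ 2 ≤ E) : (2 * δ * C - 5) * N ^ 2 ≤ Nf E A1 A2 s := by
  unfold Nf
  have h2 : 2 * δ ≤ 1 - s ^ 2 := by nlinarith
  have h3 : C * N ^ 2 * (2 * δ) ≤ E * (1 - s ^ 2) := mul_le_mul hE h2 (by linarith) (le_trans (by positivity) hE)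
  have h4 : A1 * (1 + s) ^ 2 ≤ N ^ 2 * 4 := by
    calc A1 * (1 + s) ^ 2 ≤ N ^ 2 * (1 + s) ^ 2 := by gcongr
      _ ≤ N ^ 2 * 4 := by gcongr; nlinarith
  have h5 : A2 * (1 - s) ^ 2 ≤ N ^ 2 * 1 := by
    calc A2 * (1 - s) ^ 2 ≤ N ^ 2 * (1 - s) ^ 2 := by gcongr
      _ ≤ N ^ 2 * 1 := by gcongr; nlinarith
  nlinarith

lemma Nf_lip {E A1 A2 N s s1 C : ℝ} (hA2 : 0 ≤ A2) (hA : A2 ≤ A1) (hA1 : A1 ≤ N ^ 2) (hE0 : 0 ≤ E) (hE : E ≤ C * N ^ 2) (h : |s| ≤ 1) (h1 : |s1| ≤ 1) :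
    |Nf E A1 A2 s - Nf E A1 A2 s1| ≤ (2 * C + 6) * N ^ 2 * |s - s1| := by
  have e : Nf E A1 A2 s - Nf E A1 A2 s1
      = -((E * (s + s1) + (A1 - A2) * 2 + (A1 + A2) * (s + s1)) * (s - s1)) := by unfold Nf; ring
  rw [e, abs_neg, abs_mul]
  apply mul_le_mul_of_nonneg_right _ (abs_nonneg _)
  have h2 : |s + s1| ≤ 2 := (abs_add_le _ _).trans (by linarith)
  have a1 : |E * (s + s1)| ≤ C * N ^ 2 * 2 := by
    rw [abs_mul, abs_of_nonneg hE0]; exact mul_le_mul hE h2 (abs_nonneg _) (hE0.trans hE)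
  have a2 : |(A1 + A2) * (s + s1)| ≤ (N ^ 2 + N ^ 2) * 2 := by
    rw [abs_mul, abs_of_nonneg (by linarith)]; exact mul_le_mul (by linarith) h2 (abs_nonneg _) (by positivity)
  have a3 : |(A1 - A2) * 2| ≤ N ^ 2 * 2 := by
    rw [abs_mul, abs_of_nonneg (by linarith), abs_of_pos (by norm_num)]; linarith
  have := abs_add_le (E * (s + s1) + (A1 - A2) * 2) ((A1 + A2) * (s + s1))
  have := abs_add_le (E * (s + s1)) ((A1 - A2) * 2)
  nlinarith

lemma aux_sq {a b N : ℝ} (ha : 0 < a) (hb : 0 < b) (h : (1 + 2 / a) * (1 + b) ≤ N) : b ^ 2 ≤ a * N ^ 2 / 2 := by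
  have h9 : 0 < 2 / a := by positivity
  have h1 : (1 + 2 / a) ^ 2 * (1 + b) ^ 2 ≤ N ^ 2 := by
    rw [← mul_pow]
    exact pow_le_pow_left₀ (by positivity) h 2
  have h2 : 2 / a ≤ (1 + 2 / a) ^ 2 := by nlinarith
  have h3 : b ^ 2 ≤ (1 + b) ^ 2 := by nlinarith
  have h4 : 2 / a * b ^ 2 ≤ N ^ 2 := (mul_le_mul h2 h3 (by positivity) (by positivity)).trans h1
  have h5 : a * (2 / a * b ^ 2) = 2 * b ^ 2 := by field_simp
  have h6 := mul_le_mul_of_nonneg_left h4 ha.le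
  linarith

set_option maxHeartbeats 2000000 in
lemma Sol.lin (c' K η : ℝ) (hc0 : 0 ≤ c') (hc1 : c' < 1) (hK : 0 < K) (hη : 0 < η) : ∃ n0 : ℝ, 1 ≤ n0 ∧ K / n0 ≤ (1 - c') / 4 ∧ ∀ N : ℝ, n0 ≤ N → 
    ∀ (y y1 : ℝ → ℝ) (E A1 A2 s1 : ℝ), Sol y y1 E A1 A2 s1 → A1 ≤ N ^ 2 → c' ≤ s1 → s1 ≤ c' + K / N → y s1 = 0 →
      0 < |y1 s1| ∧ ∀ s ∈ Set.Icc (s1 - K / N) (s1 + K / N), |y s - y1 s1 * (s - s1)| ≤ η * |y1 s1| * |s - s1| := by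
  set δ := (1 - c') / 4 with hδd
  have hδ : 0 < δ := by rw [hδd]; linarith
  set C1 := (8 + π ^ 2 / δ ^ 2) / (2 * δ) with hC1
  have hC1p : 0 < C1 := by positivity
  set C4 := 2 * C1 + 6 with hC4
  set η1 := min η 1 * δ ^ 2 / (4 * K ^ 2) with hη1
  have hmin : 0 < min η 1 := lt_min hη one_pos
  have hηone : 0 < η1 := by positivity
  set δ1 := min δ (η1 / (2 * C4)) with hδ1
  have hC4p : 0 < C4 := by positivity
  have hδone : 0 < δ1 := lt_min hδ (by positivity)
  refine ⟨1 + K / δ + C4 * K / η1 + (1 + 2 / η1) * (1 + π / δ1), ?_, ?_, ?_⟩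
  · have : 0 < K / δ := by positivity
    have : 0 < C4 * K / η1 := by positivity
    have : 0 < (1 + 2 / η1) * (1 + π / δ1) := by positivity
    linarith
  · rw [div_le_iff₀ (by positivity)]
    have : δ * (K / δ) = K := by field_simp
    have : 0 < C4 * K / η1 := by positivity
    have : 0 < (1 + 2 / η1) * (1 + π / δ1) := by positivity
    nlinarith
  intro N hN y y1 E A1 A2 s1 S hA1 hcs hs1K hy0
  have t1 : 0 < K / δ := by positivity
  have t2 : 0 < C4 * K / η1 := by positivity
  have t3 : 0 < (1 + 2 / η1) * (1 + π / δ1) := by positivity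
  have hN1 : 1 ≤ N := by linarith
  have hN0 : 0 < N := by linarith
  have hKN : K / N ≤ δ := by
    rw [div_le_iff₀ hN0]
    have : δ * (K / δ) = K := by field_simp
    nlinarith
  have hKN0 : 0 < K / N := by positivity
  have hA2 : A2 ≤ N ^ 2 := S.hA.trans hA1
  have hs10 : 0 ≤ s1 := hc0.trans hcs
  have hE : E ≤ C1 * N ^ 2 := by
    by_contra hcon
    push Not at hcon
    refine S.sturm s1 (π / δ) (s1 + δ) (by positivity) hs10 le_rfl hy0.ge (by linarith) ?_ ?_
    · have : π / (π / δ) = δ := by field_simp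
      rw [this]
    · intro s hs
      refine le_trans ?_ (Nf_lower hA2 hA1 (hs10.trans hs.1) (by linarith [hs.2]) hδ hC1p.le hcon.le)
      have e : 2 * δ * C1 = 8 + π ^ 2 / δ ^ 2 := by rw [hC1]; field_simp
      rw [e, div_pow]
      have h1 : 1 ≤ N ^ 2 := by nlinarith
      have h2 : 0 ≤ π ^ 2 / δ ^ 2 := by positivity
      nlinarith
  have hlip : ∀ s, |s| ≤ 1 → |Nf E A1 A2 s - Nf E A1 A2 s1| ≤ C4 * N ^ 2 * |s - s1| := fun s hs => 
    Nf_lip S.hA2 S.hA hA1 S.hE hE hs (abs_le.2 ⟨by linarith, by linarith⟩)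
  have hN0' := S.N_nonneg hs10 hy0
  have hNup : Nf E A1 A2 s1 ≤ η1 * N ^ 2 := by
    by_contra hcon
    push Not at hcon
    have hd1 : δ1 ≤ δ := min_le_left _ _
    have hd2 : δ1 ≤ η1 / (2 * C4) := min_le_right _ _
    refine S.sturm s1 (π / δ1) (s1 + δ1) (by positivity) hs10 le_rfl hy0.ge (by linarith) ?_ ?_
    · have : π / (π / δ1) = δ1 := by field_simp
      rw [this]
    · intro s hs
      have h1 := hlip s (abs_le.2 ⟨by linarith [hs.1], by linarith [hs.2]⟩)
      have h2 : |s - s1| ≤ η1 / (2 * C4) := abs_le.2 ⟨by linarith [hs.1], by linarith [hs.2]⟩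
      have h3 : C4 * N ^ 2 * |s - s1| ≤ C4 * N ^ 2 * (η1 / (2 * C4)) := by gcongr
      have h4 : C4 * N ^ 2 * (η1 / (2 * C4)) = η1 * N ^ 2 / 2 := by field_simp
      have h5 := (abs_le.1 (h1.trans h3)).1
      rw [h4] at h5
      have h6 : (π / δ1) ^ 2 ≤ η1 * N ^ 2 / 2 := by
        exact aux_sq hηone (by positivity) (by linarith)
      linarith
  have hQ : ∀ s ∈ Set.Icc (s1 - K / N) (s1 + K / N), |Nf E A1 A2 s / (1 - s ^ 2) ^ 2| ≤ 2 * η1 * N ^ 2 / δ ^ 2 := by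
    intro s hs
    have hd4 : δ ≤ 1 / 4 := by rw [hδd]; linarith
    have b1 : -1/4 ≤ s := by linarith [hs.1]
    have b2 : s ≤ 1 - 2 * δ := by linarith [hs.2]
    have h1 := hlip s (abs_le.2 ⟨by linarith [hs.1], by linarith [hs.2]⟩)
    have h2 : |s - s1| ≤ K / N := abs_le.2 ⟨by linarith [hs.1], by linarith [hs.2]⟩
    have h3 : C4 * N ^ 2 * |s - s1| ≤ C4 * N ^ 2 * (K / N) := by gcongr
    have h4 : C4 * N ^ 2 * (K / N) ≤ η1 * N ^ 2 := by
      have : C4 * N ^ 2 * (K / N) = (C4 * K / η1) * (η1 * N) := by field_simp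
      rw [this]
      have h5 : C4 * K / η1 ≤ N := by linarith
      calc (C4 * K / η1) * (η1 * N) ≤ N * (η1 * N) := by gcongr
        _ = _ := by ring
    have h5 := abs_le.1 ((h1.trans h3).trans h4)
    have h6 : δ ≤ 1 - s ^ 2 := by nlinarith
    rw [abs_div, abs_of_pos (show 0 < (1 - s ^ 2) ^ 2 by have : 0 < 1 - s ^ 2 := by linarith
                                                         positivity)]
    have h7 : |Nf E A1 A2 s| ≤ 2 * η1 * N ^ 2 := abs_le.2 ⟨by linarith [h5.1], by linarith [h5.2]⟩
    gcongr
  have hbw : 2 * η1 * N ^ 2 / δ ^ 2 * (K / N) ^ 2 = min η 1 / 2 := by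
    rw [hη1]; field_simp; norm_num
  have hlin := lin_approx y y1 (fun s => Nf E A1 A2 s / (1 - s ^ 2) ^ 2) s1 (K / N) (2 * η1 * N ^ 2 / δ ^ 2) hKN0.le (by positivity) 
    (by rw [hbw]; linarith [min_le_right η 1]) (fun s hs => S.hy s ⟨by linarith [hs.1], by linarith [hs.2]⟩)
    (fun s hs => S.hy1 s ⟨by linarith [hs.1], by linarith [hs.2]⟩) hy0 hQ
  have hmm : 2 * (2 * η1 * N ^ 2 / δ ^ 2) * (K / N) ^ 2 = min η 1 := by linear_combination 2 * hbw
  rw [hmm] at hlin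
  refine ⟨?_, fun s hs => (hlin s hs).trans ?_⟩
  · rw [abs_pos]
    intro h
    have h1 := hlin (s1 + K / N) ⟨by linarith, le_rfl⟩
    rw [h] at h1
    simp only [zero_mul, sub_zero, abs_zero, mul_zero] at h1
    have h2 := S.hpos (s1 + K / N) ⟨by linarith, by linarith⟩ (by linarith)
    have := abs_nonpos_iff.1 h1
    linarith
  · gcongr
    exact min_le_left _ _

end Stm

end

section
namespace Stm

lemma window_alg {Y η2 x y G q q1 D K N η δ cc : ℝ} (hη2 : 0 ≤ η2) (hη2' : η2 ≤ 1) (hcc : 0 < cc) (hq1 : 0 < q1) (hq14 : q1 ≤ 4)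
    (hδ : 0 < δ) (hq : δ ^ 2 ≤ q) (hqq : |q - q1| ≤ 8 * |x|) (hD : D = cc * Y ^ 2 / q1) 
    (hlin : |y - Y * x| ≤ η2 * |Y| * |x|) (hG : x * G * q = cc * y ^ 2) (hx0 : x ≠ 0) (hK : 0 < K) (hN : 0 < N) (hx : |x| ≤ K / N)
    (hη : K * (12 * η2 + 8 * (K / N)) ≤ η * δ ^ 2) : G ≤ D * (x + η / N) := by
  have hD0 : 0 ≤ D := by rw [hD]; positivity
  have hqp : 0 < q := lt_of_lt_of_le (by positivity) hq
  have hDq : D * q1 = cc * Y ^ 2 := by rw [hD]; field_simp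
  -- G q - cc Y^2 x
  have h1 : x * (G * q - cc * Y ^ 2 * x) = cc * (y - Y * x) * (y + Y * x) := by linear_combination hG
  have h2 : |y + Y * x| ≤ 3 * (|Y| * |x|) := by
    have e : y + Y * x = (y - Y * x) + 2 * (Y * x) := by ring
    rw [e]
    refine (abs_add_le _ _).trans ?_
    rw [abs_mul 2, abs_mul Y, abs_of_pos (show (0:ℝ) < 2 by norm_num)]
    have : η2 * |Y| * |x| ≤ 1 * |Y| * |x| := by gcongr
    linarith
  have h3 : |x| * |G * q - cc * Y ^ 2 * x| ≤ |x| * (3 * η2 * (cc * Y ^ 2) * |x|) := by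
    rw [← abs_mul, h1, abs_mul, abs_mul, abs_of_pos hcc]
    calc cc * |y - Y * x| * |y + Y * x| ≤ cc * (η2 * |Y| * |x|) * (3 * (|Y| * |x|)) := by gcongr
      _ = |x| * (3 * η2 * (cc * |Y| ^ 2) * |x|) := by ring
      _ = _ := by rw [sq_abs]
  have h4 := (abs_le.1 (le_of_mul_le_mul_left h3 (abs_pos.2 hx0))).2
  have h5 : D * (x * (q1 - q)) ≤ D * (|x| * (8 * |x|)) := by
    apply mul_le_mul_of_nonneg_left _ hD0
    refine (le_abs_self _).trans ?_
    rw [abs_mul, abs_sub_comm]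
    gcongr
  rw [← hDq] at h4
  have h6 : (G - D * x) * q ≤ D * (|x| * (12 * η2 + 8 * |x|)) := by
    have : 3 * η2 * (D * q1) * |x| ≤ 3 * η2 * (D * 4) * |x| := by gcongr
    nlinarith
  have h7 : D * (|x| * (12 * η2 + 8 * |x|)) ≤ D * (K / N * (12 * η2 + 8 * (K / N))) := by gcongr
  have h8 : K / N * (12 * η2 + 8 * (K / N)) ≤ η / N * δ ^ 2 := by
    have := div_le_div_of_nonneg_right hη hN.le
    calc _ = K * (12 * η2 + 8 * (K / N)) / N := by ring
      _ ≤ _ := this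
      _ = _ := by ring
  have h8' : η / N * δ ^ 2 ≤ η / N * q := by
    apply mul_le_mul_of_nonneg_left hq
    have : 0 ≤ K / N * (12 * η2 + 8 * (K / N)) := by positivity
    have h := this.trans h8
    exact nonneg_of_mul_nonneg_left h (by positivity)
  have h9 : (G - D * x) * q ≤ (D * (η / N)) * q := by
    have := mul_le_mul_of_nonneg_left (h8.trans h8') hD0
    nlinarith
  have := le_of_mul_le_mul_right h9 hqp
  linarith

lemma Sol.window (c' K η : ℝ) (hc0 : 0 ≤ c') (hc1 : c' < 1) (hK : 0 < K) (hη : 0 < η) : ∃ n0 : ℝ, 1 ≤ n0 ∧ ∀ N : ℝ, n0 ≤ N → 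
    ∀ (y y1 : ℝ → ℝ) (E A1 A2 s1 : ℝ), Sol y y1 E A1 A2 s1 → A1 ≤ N ^ 2 → c' ≤ s1 → s1 ≤ c' + K / N → y s1 = 0 →
      ∀ (G : ℝ → ℝ) (cc : ℝ), 0 < cc → G s1 = 0 → 
        (∀ s, -1 < s → s < 1 → (s - s1) * G s * ((1 - s) ^ 2 * (1 + s)) = cc * y s ^ 2) →
      ∃ D > 0, ∀ s ∈ Set.Icc (s1 - K / N) (s1 + K / N), G s ≤ D * ((s - s1) + η / N) := by
  set δ := (1 - c') / 4 with hδd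
  have hδ : 0 < δ := by rw [hδd]; linarith
  set η2 := min 1 (η * δ ^ 2 / (24 * K)) with hη2
  have hηtwo : 0 < η2 := lt_min one_pos (by positivity)
  obtain ⟨n0, hn0, hKn, H⟩ := Sol.lin c' K η2 hc0 hc1 hK hηtwo
  refine ⟨max n0 (16 * K ^ 2 / (η * δ ^ 2)), hn0.trans (le_max_left _ _), ?_⟩
  intro N hN y y1 E A1 A2 s1 S hA1 hcs hs1K hy0 G cc hcc hG0 hG
  have hNn : n0 ≤ N := (le_max_left _ _).trans hN
  have hN0 : 0 < N := by linarith
  have hKN : K / N ≤ δ := le_trans (by gcongr) hKn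
  have hKN0 : 0 < K / N := by positivity
  obtain ⟨hY, hlin⟩ := H N hNn y y1 E A1 A2 s1 S hA1 hcs hs1K hy0
  have hd4 : δ ≤ 1 / 4 := by rw [hδd]; linarith
  have hs12 : s1 ≤ 1 - 3 * δ := by linarith
  have hs10 : 0 ≤ s1 := by linarith
  have hq1 : 0 < (1 - s1) ^ 2 * (1 + s1) := by
    have : 0 < 1 - s1 := by linarith
    positivity
  have hYY : 0 < y1 s1 ^ 2 := by rw [← sq_abs]; positivity
  refine ⟨cc * y1 s1 ^ 2 / ((1 - s1) ^ 2 * (1 + s1)), by positivity, ?_⟩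
  intro s hs
  have b1 : -1/4 ≤ s := by linarith [hs.1]
  have b2 : s ≤ 1 - 2 * δ := by linarith [hs.2]
  by_cases hx0 : s - s1 = 0
  · have : s = s1 := by linarith
    rw [this, hG0]
    have : 0 < η / N := by positivity
    rw [sub_self, zero_add]
    positivity
  refine window_alg (δ := δ) (η2 := η2) (K := K) (q := (1 - s) ^ 2 * (1 + s)) hηtwo.le (min_le_left _ _) hcc hq1 ?_ hδ ?_ ?_ rfl (hlin s hs) (hG s (by linarith) (by linarith)) hx0 hK hN0 
    (abs_le.2 ⟨by linarith [hs.1], by linarith [hs.2]⟩) ?_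
  · have h1 : (1 - s1) ^ 2 ≤ 1 := by nlinarith
    calc (1 - s1) ^ 2 * (1 + s1) ≤ 1 * 2 := by gcongr; linarith
      _ ≤ 4 := by norm_num
  · have h1 : (2 * δ) ^ 2 ≤ (1 - s) ^ 2 := by gcongr; linarith
    calc δ ^ 2 ≤ (2 * δ) ^ 2 * (1/2) := by nlinarith
      _ ≤ _ := by gcongr; linarith
  · have e : (1 - s) ^ 2 * (1 + s) - (1 - s1) ^ 2 * (1 + s1) = (s - s1) * (s ^ 2 + s * s1 + s1 ^ 2 - (s + s1) - 1) := by ring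
    rw [e, abs_mul, mul_comm 8]
    apply mul_le_mul_of_nonneg_left _ (abs_nonneg _)
    have h1 : s ≤ 1 := by linarith
    have h2 : s1 ≤ 1 := by linarith
    rw [abs_le]; constructor <;> nlinarith
  · have h1 : η2 ≤ η * δ ^ 2 / (24 * K) := min_le_right _ _
    have h2 : 16 * K ^ 2 / (η * δ ^ 2) ≤ N := (le_max_right _ _).trans hN
    have h3 : K * (12 * η2) ≤ η * δ ^ 2 / 2 := by
      calc K * (12 * η2) ≤ K * (12 * (η * δ ^ 2 / (24 * K))) := by gcongr
        _ = _ := by field_simp; norm_num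
    have h4 : K * (8 * (K / N)) ≤ η * δ ^ 2 / 2 := by
      rw [div_le_iff₀ (by positivity)] at h2
      have : K * (8 * (K / N)) = 8 * K ^ 2 / N := by ring
      rw [this, div_le_iff₀ hN0]
      nlinarith
    linarith

end Stm

end

section
open Polynomial
namespace Stm

def sOne (μ : ℝ) (ε : Bool) (d : ℕ) : ℝ := sSup {x : ℝ | (gP μ ε d).eval x = 0}

def bHat (μ : ℝ) (ε : Bool) (d : ℕ) (w : ℕ → ℝ) : ℝ[X] := ∑ i ∈ Finset.range d, C (w i) * gP μ ε i

lemma gA_eval (μ : ℝ) (ε : Bool) (d : ℕ) (x : ℝ) : (gA μ ε d).eval x = (if ε then 1 + x else 1) * (gP μ ε d).eval x := by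
  cases ε <;> simp [gA, gP]

lemma sq_rpow_quarter (x : ℝ) (hx : 0 < x) (κ : ℝ) (k : ℕ) (h : 4 * κ = k) : (x ^ κ) ^ 2 = √x ^ k := by
  rw [Real.sqrt_eq_rpow, ← Real.rpow_natCast, ← Real.rpow_natCast, ← Real.rpow_mul hx.le, ← Real.rpow_mul hx.le]
  congr 1
  push_cast
  linarith

lemma G_ident (n : ℕ) (hn : 8 ≤ n) (ε : Bool) (s : ℝ) (h1 : -1 < s) (h2 : s < 1) (P : ℝ) :
    √(1 - s ^ 2) ^ (n - 4) * ((if ε then 1 + s else 1) * P ^ 2) * ((1 - s) ^ 2 * (1 + s)) = 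
      (ee ((n : ℝ) / 4) ((gb (((n:ℝ) - 1) / 2) ε + 1) / 2) s * P) ^ 2 := by
  have a1 : 0 < 1 - s := by linarith
  have a2 : 0 < 1 + s := by linarith
  rw [show 1 - s ^ 2 = (1 - s) * (1 + s) by ring, Real.sqrt_mul a1.le]
  unfold ee
  rw [mul_pow, mul_pow, mul_pow, sq_rpow_quarter (1 - s) a1 _ n (by ring)]
  obtain ⟨m, rfl⟩ : ∃ m, n = m + 4 := ⟨n - 4, by omega⟩
  have e1 : (1 - s) = √(1 - s) ^ 2 := (Real.sq_sqrt a1.le).symm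
  have e2 : (1 + s) = √(1 + s) ^ 2 := (Real.sq_sqrt a2.le).symm
  cases ε
  · rw [sq_rpow_quarter (1 + s) a2 _ (m + 2) (by simp [gb]; ring)]
    simp only [Bool.false_eq_true, if_false, Nat.add_sub_cancel]
    set A := √(1 - s)
    set B := √(1 + s)
    rw [e1, e2]
    ring
  · rw [sq_rpow_quarter (1 + s) a2 _ (m + 4) (by simp [gb]; ring)]
    simp only [if_true, Nat.add_sub_cancel]
    set A := √(1 - s)
    set B := √(1 + s)
    rw [e1, e2]
    ring

lemma g_exists (c' K η : ℝ) (hc0 : 0 ≤ c') (hc1 : c' < 1) (hK : 0 < K) (hη : 0 < η) : ∃ n0 : ℕ, ∀ n : ℕ, n0 ≤ n → ∀ (ε : Bool) (d : ℕ), 1 ≤ d →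
    c' ≤ sOne (((n:ℝ) - 1) / 2) ε d → ∃ w : ℕ → ℝ, (∀ i < d, 0 < w i) ∧ 
      (∀ s, -1 < s → s ≤ sOne (((n:ℝ) - 1) / 2) ε d → (gA (((n:ℝ) - 1) / 2) ε d * bHat (((n:ℝ) - 1) / 2) ε d w).eval s ≤ 0) ∧
      (sOne (((n:ℝ) - 1) / 2) ε d ≤ c' + K / n → ∃ D > 0, ∀ s ∈ Set.Icc (sOne (((n:ℝ) - 1) / 2) ε d - K / n) (sOne (((n:ℝ) - 1) / 2) ε d + K / n),
        √(1 - s ^ 2) ^ (n - 4) * (gA (((n:ℝ) - 1) / 2) ε d * bHat (((n:ℝ) - 1) / 2) ε d w).eval s ≤ D * ((s - sOne (((n:ℝ) - 1) / 2) ε d) + η / n)) := by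
  obtain ⟨n0, hn0, H⟩ := Sol.window c' K η hc0 hc1 hK hη
  refine ⟨max 8 ⌈n0⌉₊, ?_⟩
  intro n hn ε d hd hcs
  have hn8 : 8 ≤ n := (le_max_left _ _).trans hn
  have hnn : n0 ≤ n := Nat.ceil_le.1 ((le_max_right _ _).trans hn)
  have hn8' : (8 : ℝ) ≤ n := by exact_mod_cast hn8
  obtain ⟨h1, h2, h3, w, cc, hw, hcc, hid⟩ := (ttrP (((n:ℝ) - 1) / 2) (by linarith) ε).main d hd
  have hg : ∀ s, (s - sOne (((n:ℝ) - 1) / 2) ε d) * (gA (((n:ℝ) - 1) / 2) ε d * bHat (((n:ℝ) - 1) / 2) ε d w).eval s = 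
      cc * ((if ε then 1 + s else 1) * (gP (((n:ℝ) - 1) / 2) ε d).eval s ^ 2) := by
    intro s
    have h := congrArg (fun q => q.eval s) hid
    rw [eval_mul, gA_eval]
    simp only [eval_mul, eval_sub, eval_X, eval_C] at h
    unfold bHat sOne
    linear_combination ((if ε then 1 + s else 1) * (gP (((n:ℝ) - 1) / 2) ε d).eval s) * h
  have hg0 : (gA (((n:ℝ) - 1) / 2) ε d * bHat (((n:ℝ) - 1) / 2) ε d w).eval (sOne (((n:ℝ) - 1) / 2) ε d) = 0 := by
    rw [eval_mul, gA_eval]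
    unfold sOne
    rw [h2]; ring
  refine ⟨w, hw, ?_, ?_⟩
  · intro s hs hss
    rcases hss.eq_or_lt with h | h
    · rw [h, hg0]
    · have h4 := hg s
      have h5 : 0 ≤ cc * ((if ε then 1 + s else 1) * (gP (((n:ℝ) - 1) / 2) ε d).eval s ^ 2) := by
        have : 0 ≤ (if ε then 1 + s else 1) := by split_ifs <;> linarith
        positivity
      rw [← h4] at h5
      by_contra hcon
      push Not at hcon
      nlinarith
  · intro hsK
    have hsol := sol_gP n (by linarith) ε d hd
    refine H n hnn _ _ _ _ _ _ hsol (by nlinarith) hcs hsK ?_ _ cc hcc ?_ ?_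
    · rw [h2, mul_zero]
    · change _ * (gA (((n:ℝ) - 1) / 2) ε d * bHat (((n:ℝ) - 1) / 2) ε d w).eval (sOne (((n:ℝ) - 1) / 2) ε d) = 0
      rw [hg0, mul_zero]
    · intro s hs1 hs2
      rw [← G_ident n hn8 ε s hs1 hs2]
      have := hg s
      unfold sOne at this
      linear_combination (√(1 - s ^ 2) ^ (n - 4) * ((1 - s) ^ 2 * (1 + s))) * this

/-- nonemptiness of the set defining `levD` -/
lemma exists_root_ge (N : ℝ) (hN : 6 ≤ N) (ε : Bool) (c' : ℝ) (hc0 : 0 ≤ c') (hc1 : c' < 1) : ∃ d : ℕ, 1 ≤ d ∧ c' ≤ sOne ((N - 1) / 2) ε d := by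
  set δ := (1 - c') / 4 with hδd
  have hδ : 0 < δ := by rw [hδd]; linarith
  set C1 := (8 + π ^ 2 / δ ^ 2) / (2 * δ) with hC1
  have hC1p : 0 < C1 := by positivity
  obtain ⟨d, hd⟩ := exists_nat_ge (C1 * N ^ 2)
  refine ⟨d + 1, by omega, ?_⟩
  by_contra hcon
  push Not at hcon
  have S := sol_gP N hN ε (d + 1) (by omega)
  unfold sOne at hcon
  have hb : N / 2 - 2 ≤ gb ((N - 1) / 2) ε ∧ gb ((N - 1) / 2) ε ≤ N / 2 - 1 := by
    cases ε <;> simp [gb] <;> constructor <;> linarith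
  refine S.sturm c' (π / δ) (c' + δ) (by positivity) hc0 hcon.le (S.hpos c' ⟨hcon, hc1⟩ (by linarith)).le (by linarith) ?_ ?_
  · have : π / (π / δ) = δ := by field_simp
    rw [this]
  · intro s hs
    refine le_trans ?_ (Nf_lower (N := N) (δ := δ) (C := C1) (by nlinarith) (by nlinarith) (hc0.trans hs.1) (by linarith [hs.2]) hδ hC1p.le ?_)
    · have e : 2 * δ * C1 = 8 + π ^ 2 / δ ^ 2 := by rw [hC1]; field_simp
      rw [e, div_pow]
      have h1 : 1 ≤ N ^ 2 := by nlinarith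
      have h2 : 0 ≤ π ^ 2 / δ ^ 2 := by positivity
      nlinarith
    · have hd0 : (0 : ℝ) ≤ d := by positivity
      have h1 : 0 ≤ N / 4 * ((gb ((N - 1) / 2) ε + 1) / 2) := by apply mul_nonneg <;> linarith
      push_cast
      nlinarith

end Stm

end

section
open Polynomial
namespace Stm

lemma MLev_data (n : ℕ) (hn : 8 ≤ n) (θ' : ℝ) (hc0 : 0 ≤ cos θ') (hc1 : cos θ' < 1) : ∃ (ε : Bool) (d : ℕ), 1 ≤ d ∧ 
    cos θ' ≤ sOne (((n:ℝ) - 1) / 2) ε d ∧ MLev (n - 1) θ' = (gA (((n:ℝ) - 1) / 2) ε d).eval 1 := by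
  have hn' : (8:ℝ) ≤ n := by exact_mod_cast hn
  have hcast : ((n - 1 : ℕ) : ℝ) = (n:ℝ) - 1 := by rw [Nat.cast_sub (by omega)]; simp
  have hμ : (1:ℝ)/2 < ((n:ℝ) - 1) / 2 := by linarith
  have hT : ∀ d, maxRoot ((((n - 1 : ℕ) : ℝ) - 3) / 2 + 1) ((((n - 1 : ℕ) : ℝ) - 3) / 2 + 1) d = sOne (((n:ℝ) - 1) / 2) true d := by
    intro d
    rw [sOne, ← maxRoot_eq _ hμ, hcast]
    simp only [gb, if_true]
    congr 1 <;> ring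
  have hF : ∀ d, maxRoot ((((n - 1 : ℕ) : ℝ) - 3) / 2 + 1) ((((n - 1 : ℕ) : ℝ) - 3) / 2) d = sOne (((n:ℝ) - 1) / 2) false d := by
    intro d
    rw [sOne, ← maxRoot_eq _ hμ, hcast]
    simp only [gb, Bool.false_eq_true, if_false]
    congr 1 <;> ring
  have hmem : levD (n - 1) θ' ∈ {d : ℕ | 1 ≤ d ∧
    Real.cos θ' ≤ maxRoot ((((n - 1 : ℕ) : ℝ) - 3) / 2 + 1) ((((n - 1 : ℕ) : ℝ) - 3) / 2 + 1) d} := by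
    unfold levD
    apply Nat.sInf_mem
    obtain ⟨d, hd, h⟩ := exists_root_ge n (by linarith) true (cos θ') hc0 hc1
    refine ⟨d, hd, ?_⟩
    rw [hT]; exact h
  obtain ⟨hd, h⟩ := hmem
  rw [hT] at h
  unfold MLev
  rw [hF]
  set d := levD (n - 1) θ'
  have hU : ∀ k, (gU (((n:ℝ) - 1) / 2) k).eval 1 = Nat.choose (k + (n - 1) - 1) (n - 1 - 1) := by
    intro k
    rw [← hcast]
    exact gU_one_choose (n - 1) (by omega) k
  split_ifs with hif
  · refine ⟨true, d, hd, h, ?_⟩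
    rw [gA_eval]
    simp only [gP, if_true, hU]
    norm_num
  · refine ⟨false, d, hd, not_lt.1 hif, ?_⟩
    rw [gA_eval]
    obtain ⟨e, he⟩ : ∃ e, d = e + 1 := ⟨d - 1, by omega⟩
    simp only [gP, Bool.false_eq_true, if_false, one_mul, he, gV, eval_add, hU]
    congr 3
    all_goals omega

end Stm

end

section
namespace Sgn
open Sph

lemma sfun_eq (t u v : ℝ) (hu : u ^ 2 ≤ 1) : sfun t u v = (t - u * v) / √((1 - u ^ 2) * (1 - v ^ 2)) := by
  unfold sfun
  rw [Real.sqrt_mul (by linarith)]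

lemma aux_b {a b v : ℝ} (ha : 0 ≤ a) (ha1 : a ≤ 1) (hb : 0 ≤ b) (hb1 : b ≤ 1) (hv : 0 ≤ v) (hv1 : v ≤ 1) : |-(a + b) * (1 - v ^ 2)| ≤ 2 := by
  have h1 : 0 ≤ 1 - v ^ 2 := by nlinarith
  have h2 : 1 - v ^ 2 ≤ 1 := by nlinarith
  rw [abs_mul, abs_neg, abs_of_nonneg (by linarith), abs_of_nonneg h1]
  calc (a + b) * (1 - v ^ 2) ≤ 2 * 1 := mul_le_mul (by linarith) h2 h1 (by norm_num)
    _ = 2 := by norm_num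

set_option maxHeartbeats 1000000 in
/-- Lipschitz bound. -/
lemma s_lip {q e t u v u0 v0 : ℝ} (hq : q < 1) (he : 0 ≤ e) (ht : |t| ≤ 1) (hu : 0 ≤ u) (huq : u ≤ q) (hv : 0 ≤ v) (hvq : v ≤ q)
    (hu0 : 0 ≤ u0) (huq0 : u0 ≤ q) (hv0 : 0 ≤ v0) (hvq0 : v0 ≤ q) (hue : |u - u0| ≤ 2 * e) (hve : |v - v0| ≤ 2 * e) :
    sfun t u0 v0 - e * (4 / (1 - q ^ 2) + 8 / (1 - q ^ 2) ^ 3) ≤ sfun t u v := by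
  have hq0 : 0 ≤ q := hu.trans huq
  set p := 1 - q ^ 2 with hp
  have hpp : 0 < p := by rw [hp]; nlinarith
  rw [sfun_eq t u v (by nlinarith), sfun_eq t u0 v0 (by nlinarith)]
  have hP : ∀ a b : ℝ, 0 ≤ a → a ≤ q → 0 ≤ b → b ≤ q → p ≤ √((1 - a ^ 2) * (1 - b ^ 2)) := by
    intro a b ha haq hb hbq
    apply Real.le_sqrt_of_sq_le
    have h1 : p ≤ 1 - a ^ 2 := by rw [hp]; nlinarith
    have h2 : p ≤ 1 - b ^ 2 := by rw [hp]; nlinarith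
    nlinarith
  have a1 := hP u v hu huq hv hvq
  have a0 := hP u0 v0 hu0 huq0 hv0 hvq0
  have hu1 : u ≤ 1 := by linarith
  have hv1 : v ≤ 1 := by linarith
  have hu01 : u0 ≤ 1 := by linarith
  have hv01 : v0 ≤ 1 := by linarith
  have sq1 : √((1 - u ^ 2) * (1 - v ^ 2)) ^ 2 = (1 - u ^ 2) * (1 - v ^ 2) := Real.sq_sqrt (mul_nonneg (by nlinarith) (by nlinarith))
  have sq0 : √((1 - u0 ^ 2) * (1 - v0 ^ 2)) ^ 2 = (1 - u0 ^ 2) * (1 - v0 ^ 2) := Real.sq_sqrt (mul_nonneg (by nlinarith) (by nlinarith))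
  set R := √((1 - u ^ 2) * (1 - v ^ 2))
  set R0 := √((1 - u0 ^ 2) * (1 - v0 ^ 2))
  have hRp : 0 < R := by linarith
  have hR0p : 0 < R0 := by linarith
  have huv : |u * v - u0 * v0| ≤ 4 * e := by
    have : u * v - u0 * v0 = (u - u0) * v + u0 * (v - v0) := by ring
    rw [this]
    refine (abs_add_le _ _).trans ?_
    rw [abs_mul, abs_mul, abs_of_nonneg hv, abs_of_nonneg hu0]
    have := mul_le_mul hue hv1 hv (by linarith)
    have := mul_le_mul hu01 hve (abs_nonneg _) zero_le_one
    linarith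
  have hPd : |R - R0| * (2 * p) ≤ 8 * e := by
    have h1 : |R - R0| * (R + R0) ≤ 8 * e := by
      rw [← abs_of_pos (show 0 < R + R0 by linarith), ← abs_mul]
      have : (R - R0) * (R + R0) = (u - u0) * (-(u + u0) * (1 - v ^ 2)) + (v - v0) * (-(v + v0) * (1 - u0 ^ 2)) := by
        linear_combination sq1 - sq0
      rw [this]
      refine (abs_add_le _ _).trans ?_
      rw [abs_mul (u - u0), abs_mul (v - v0)]
      have b1 : |-(u + u0) * (1 - v ^ 2)| ≤ 2 := aux_b hu hu1 hu0 hu01 hv hv1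
      have b2 : |-(v + v0) * (1 - u0 ^ 2)| ≤ 2 := aux_b hv hv1 hv0 hv01 hu0 hu01
      have := mul_le_mul hue b1 (abs_nonneg _) (by linarith)
      have := mul_le_mul hve b2 (abs_nonneg _) (by linarith)
      linarith
    refine le_trans ?_ h1
    gcongr
    linarith
  have ht0 : |t - u0 * v0| ≤ 2 := by
    have := abs_le.1 ht
    rw [abs_le]; constructor <;> nlinarith
  -- difference
  have hdiff : (t - u0 * v0) / R0 - (t - u * v) / R = (u * v - u0 * v0) / R + (t - u0 * v0) * ((R - R0) / (R * R0)) := by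
    field_simp; ring
  have t1 : (u * v - u0 * v0) / R ≤ 4 * e / p := by
    calc (u * v - u0 * v0) / R ≤ 4 * e / R := by
          apply div_le_div_of_nonneg_right _ hRp.le; exact (abs_le.1 huv).2
      _ ≤ 4 * e / p := by gcongr
  have t2 : (t - u0 * v0) * ((R - R0) / (R * R0)) ≤ 8 * e / p ^ 3 := by
    refine (le_abs_self _).trans ?_
    rw [abs_mul, abs_div, abs_of_pos (mul_pos hRp hR0p)]
    calc |t - u0 * v0| * (|R - R0| / (R * R0)) ≤ 2 * (|R - R0| / (p * p)) := by gcongr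
      _ ≤ 8 * e / p ^ 3 := by
        rw [le_div_iff₀ (by positivity)]
        have : 2 * (|R - R0| / (p * p)) * p ^ 3 = |R - R0| * (2 * p) := by field_simp
        rw [this]; exact hPd
  have : e * (4 / p + 8 / p ^ 3) = 4 * e / p + 8 * e / p ^ 3 := by ring
  linarith

lemma inv_sqrt_bound {X Z : ℝ} (hX : 0 < X) (hZ0 : 0 ≤ Z) (hZ : 2 * Z ≤ X ^ 2) : X / √(X ^ 2 - Z) ≤ 1 + Z / X ^ 2 := by
  have h0 : 0 < X ^ 2 - Z := by nlinarith
  rw [div_le_iff₀ (Real.sqrt_pos.2 h0)]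
  rw [← abs_of_pos hX]
  have hz : 0 ≤ Z / |X| ^ 2 := by positivity
  rw [← abs_of_nonneg (show 0 ≤ (1 + Z / |X| ^ 2) * √(|X| ^ 2 - Z) by positivity)]
  apply sq_le_sq.1
  rw [mul_pow, Real.sq_sqrt (by rw [sq_abs]; exact h0.le), sq_abs]
  set z := Z / X ^ 2 with hzd
  rw [sq_abs] at hz
  have e : Z = z * X ^ 2 := by rw [hzd]; field_simp
  have hz2 : z ≤ 1 / 2 := by rw [hzd, div_le_iff₀ (by positivity)]; linarith
  rw [e]
  have : (1 + z) ^ 2 * (X ^ 2 - z * X ^ 2) = X ^ 2 * (1 + z * (1 - z - z ^ 2)) := by ring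
  rw [this]
  have : 0 ≤ z * (1 - z - z ^ 2) := by apply mul_nonneg hz; nlinarith
  nlinarith [sq_nonneg X]

/-- upper bound of the angle function. -/
lemma s_upper {c c' r q e t u v : ℝ} (hc' : 0 ≤ c') (hcc : c' < c) (hc1 : c < 1) (hr : r ^ 2 * (1 - c') = c - c') (ht : t ≤ c) (hq : q < 1) 
    (hu : 0 ≤ u) (huq : u ≤ q) (hv : 0 ≤ v) (hvq : v ≤ q) (huv : |u - v| ≤ 2 * e) (he : 0 ≤ e) (heq : 8 * e ^ 2 ≤ (1 - q ^ 2) ^ 2) :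
    sfun t u v ≤ c' - (1 - c') / (1 - r ^ 2) * (u * v - r ^ 2) + 4 * e ^ 2 / (1 - q ^ 2) ^ 2 := by
  have hq0 : 0 ≤ q := hu.trans huq
  have hp : 0 < 1 - q ^ 2 := by nlinarith
  rw [sfun_eq t u v (by nlinarith)]
  have hw : 1 - q ^ 2 ≤ 1 - u * v := by nlinarith
  set X := 1 - u * v with hX
  have hXp : 0 < X := by linarith
  have hP : (1 - u ^ 2) * (1 - v ^ 2) = X ^ 2 - (u - v) ^ 2 := by rw [hX]; ring
  have hZ : (u - v) ^ 2 ≤ 4 * e ^ 2 := by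
    rw [← sq_abs]
    calc |u - v| ^ 2 ≤ (2 * e) ^ 2 := by gcongr
      _ = _ := by ring
  have hXX : (1 - q ^ 2) ^ 2 ≤ X ^ 2 := by gcongr
  have hP0 : 0 < X ^ 2 - (u - v) ^ 2 := by nlinarith [pow_pos hp 2]
  rw [hP]
  set R := √(X ^ 2 - (u - v) ^ 2) with hR
  have hRp : 0 < R := Real.sqrt_pos.2 hP0
  have hRX : R ≤ X := by
    rw [hR, Real.sqrt_le_left hXp.le]; nlinarith [sq_nonneg (u - v)]
  have hzz : (u - v) ^ 2 / X ^ 2 ≤ 4 * e ^ 2 / (1 - q ^ 2) ^ 2 := by gcongr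
  have h1 : (t - u * v) / R ≤ (c - u * v) / X + 4 * e ^ 2 / (1 - q ^ 2) ^ 2 := by
    refine (div_le_div_of_nonneg_right (show t - u * v ≤ c - u * v by linarith) hRp.le).trans ?_
    have hz0 : 0 ≤ (u - v) ^ 2 / X ^ 2 := by positivity
    rcases le_or_gt 0 (c - u * v) with h | h
    · have h2 : X / R ≤ 1 + (u - v) ^ 2 / X ^ 2 := inv_sqrt_bound hXp (sq_nonneg _) (by linarith)
      have h3 : (c - u * v) / R = (c - u * v) / X * (X / R) := by field_simp
      have h4 : (c - u * v) / X ≤ 1 := by rw [div_le_one hXp, hX]; linarith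
      have h5 : 0 ≤ (c - u * v) / X := by positivity
      rw [h3]
      have := mul_le_mul_of_nonneg_left h2 h5
      have := mul_le_mul_of_nonneg_right h4 hz0
      linarith
    · have : (c - u * v) / R ≤ (c - u * v) / X := by
        rw [div_le_div_iff₀ hRp hXp]; nlinarith
      linarith
  have hr1 : 0 < 1 - r ^ 2 := by
    have : (1 - r ^ 2) * (1 - c') = 1 - c := by linarith
    by_contra hcon
    push Not at hcon
    nlinarith
  have h2 : (c - u * v) / X ≤ c' - (1 - c') / (1 - r ^ 2) * (u * v - r ^ 2) := by
    have e1 : c' - (1 - c') / (1 - r ^ 2) * (u * v - r ^ 2) - (c - u * v) / X = (1 - c') * (u * v - r ^ 2) ^ 2 / ((1 - r ^ 2) * X) := by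
      have e2 : c = r ^ 2 * (1 - c') + c' := by linarith
      have e3 : u * v = 1 - X := by rw [hX]; ring
      rw [e2, e3]
      field_simp
      ring
    have : 0 ≤ (1 - c') * (u * v - r ^ 2) ^ 2 / ((1 - r ^ 2) * X) := by
      apply div_nonneg _ (by positivity)
      apply mul_nonneg (by linarith) (sq_nonneg _)
    linarith
  linarith

end Sgn

end

section
namespace Sgn
open Sph

lemma integrand_eq (k : ℕ) {t u v : ℝ} (ht : -1 < t) (ht1 : t < 1) (hu : u ^ 2 < 1) (hv : v ^ 2 < 1) :
    √(1 - (u ^ 2 + v ^ 2 - 2 * t * u * v) / (1 - t ^ 2)) ^ k = 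
      (1 / √(1 - t ^ 2)) ^ k * (√(1 - u ^ 2) ^ k * √(1 - v ^ 2) ^ k) * √(1 - sfun t u v ^ 2) ^ k := by
  have h1 : 0 < 1 - t ^ 2 := by nlinarith
  have h2 : 0 < 1 - u ^ 2 := by linarith
  have h3 : 0 < 1 - v ^ 2 := by linarith
  have e : 1 - (u ^ 2 + v ^ 2 - 2 * t * u * v) / (1 - t ^ 2) = (1 / (1 - t ^ 2)) * ((1 - u ^ 2) * (1 - v ^ 2)) * (1 - sfun t u v ^ 2) := by
    unfold sfun
    rw [div_pow, mul_pow, Real.sq_sqrt h2.le, Real.sq_sqrt h3.le]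
    field_simp
    ring
  rw [e, Real.sqrt_mul (by positivity), Real.sqrt_mul (by positivity), Real.sqrt_mul h2.le, Real.sqrt_div zero_le_one, Real.sqrt_one]
  rw [← mul_pow, ← mul_pow, ← mul_pow]

lemma phi_integrable {F : ℝ → ℝ} (hFm : Measurable F) (hF0 : ∀ u, 0 ≤ F u) {M : ℝ} (hFM : ∀ u, F u ≤ M) {r e : ℝ}
    (hFs : ∀ u, F u ≠ 0 → |u - r| ≤ e) (k : ℕ) (g : ℝ → ℝ) (hg : Continuous g) : Integrable (fun u => F u * √(1 - u ^ 2) ^ k * g u) := by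
  have hcont : Continuous fun u : ℝ => √(1 - u ^ 2) ^ k * g u := by fun_prop
  obtain ⟨B, hB⟩ := (isCompact_Icc (a := r - e) (b := r + e)).exists_bound_of_continuousOn hcont.continuousOn
  have hIntg : Integrable ((Set.Icc (r - e) (r + e)).indicator fun _ : ℝ => M * B) := 
    (integrable_indicator_iff measurableSet_Icc).2 (integrableOn_const (by simp [Real.volume_Icc]))
  refine hIntg.mono' (by fun_prop) (Eventually.of_forall fun u => ?_)
  by_cases hu : F u = 0
  · simp only [hu, zero_mul, norm_zero]
    apply Set.indicator_nonneg
    intro x hx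
    exact mul_nonneg ((hF0 x).trans (hFM x)) ((norm_nonneg _).trans (hB x hx))
  · have hmem : u ∈ Set.Icc (r - e) (r + e) := by
      have := abs_le.1 (hFs u hu)
      exact ⟨by linarith [this.1], by linarith [this.2]⟩
    rw [Set.indicator_of_mem hmem, mul_assoc, norm_mul, Real.norm_of_nonneg (hF0 u)]
    exact mul_le_mul (hFM u) (hB u hmem) (norm_nonneg _) ((hF0 u).trans (hFM u))

lemma hJ_sign {c c' r q e K η N : ℝ} (n : ℕ) (hn : 5 ≤ n) (hc' : 0 ≤ c') (hcc : c' < c) (hc1 : c < 1) (hr0 : 0 < r) (hr : r ^ 2 * (1 - c') = c - c')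
    (hq : q < 1) (he : 0 ≤ e) (heq : 8 * e ^ 2 ≤ (1 - q ^ 2) ^ 2) (her : e < r) (hrq : r + e ≤ q) (hN : 0 < N)
    (hK1 : e * (4 / (1 - q ^ 2) + 8 / (1 - q ^ 2) ^ 3) ≤ K / N) 
    (hK2 : (1 - c') / (1 - r ^ 2) * (2 * r * e + e ^ 2) + 4 * e ^ 2 / (1 - q ^ 2) ^ 2 ≤ K / N)
    (F : ℝ → ℝ) (hFm : Measurable F) (hF0 : ∀ u, 0 ≤ F u) (M : ℝ) (hFM : ∀ u, F u ≤ M) (hFs : ∀ u, F u ≠ 0 → |u - r| ≤ e)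
    (g : Polynomial ℝ) (s1 : ℝ) (hcs : c' ≤ s1) (hneg : ∀ s, -1 < s → s ≤ s1 → g.eval s ≤ 0) 
    (hwin : s1 ≤ c' + K / N → ∃ D > 0, ∀ s ∈ Set.Icc (s1 - K / N) (s1 + K / N), √(1 - s ^ 2) ^ (n - 4) * g.eval s ≤ D * ((s - s1) + η / N))
    (hmom : (η / N + (1 - c') / (1 - r ^ 2) * e ^ 2 + 4 * e ^ 2 / (1 - q ^ 2) ^ 2) * (∫ u, F u * √(1 - u ^ 2) ^ (n - 4)) ≤ 
      2 * ((1 - c') / (1 - r ^ 2) * r) * ∫ u, F u * √(1 - u ^ 2) ^ (n - 4) * (u - r))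
    (t : ℝ) (ht : -1 < t) (htc : t ≤ c) : 
    ∫ w : ℝ × ℝ, √(1 - (w.1 ^ 2 + w.2 ^ 2 - 2 * t * w.1 * w.2) / (1 - t ^ 2)) ^ (n - 4) * (F w.1 * F w.2 * g.eval (sfun t w.1 w.2)) ≤ 0 := by
  have ht1 : t < 1 := by linarith
  have hsupp : ∀ u, F u ≠ 0 → 0 ≤ u ∧ u ≤ q ∧ u ^ 2 < 1 := by
    intro u hu
    have h := abs_le.1 (hFs u hu)
    have h1 : 0 ≤ u := by linarith [h.1]
    have h2 : u ≤ q := by linarith [h.2]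
    exact ⟨h1, h2, by nlinarith⟩
  set κ := (1 - c') / (1 - r ^ 2) with hκ
  have hr1 : 0 < 1 - r ^ 2 := by
    have : (1 - r ^ 2) * (1 - c') = 1 - c := by linarith
    by_contra hcon
    push Not at hcon
    nlinarith
  have hκ0 : 0 < κ := div_pos (by linarith) hr1
  set Ct := (1 / √(1 - t ^ 2)) ^ (n - 4) with hCt
  have hCt0 : 0 ≤ Ct := by positivity
  set φ : ℝ → ℝ := fun u => F u * √(1 - u ^ 2) ^ (n - 4) with hφ
  have hφ0 : ∀ u, 0 ≤ φ u := fun u => mul_nonneg (hF0 u) (by positivity)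
  have hform : ∀ w : ℝ × ℝ, √(1 - (w.1 ^ 2 + w.2 ^ 2 - 2 * t * w.1 * w.2) / (1 - t ^ 2)) ^ (n - 4) * (F w.1 * F w.2 * g.eval (sfun t w.1 w.2))
      = Ct * (φ w.1 * φ w.2) * (√(1 - sfun t w.1 w.2 ^ 2) ^ (n - 4) * g.eval (sfun t w.1 w.2)) := by
    intro w
    by_cases h1 : F w.1 = 0
    · simp [hφ, h1]
    by_cases h2 : F w.2 = 0
    · simp [hφ, h2]
    rw [integrand_eq (n - 4) ht ht1 (hsupp _ h1).2.2 (hsupp _ h2).2.2]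
    simp only [hφ]
    ring
  simp only [hform]
  have hGneg : ∀ s, s ≤ s1 → √(1 - s ^ 2) ^ (n - 4) * g.eval s ≤ 0 := by
    intro s hs
    by_cases h : -1 < s
    · exact mul_nonpos_of_nonneg_of_nonpos (by positivity) (hneg s h hs)
    · push Not at h
      rw [Real.sqrt_eq_zero_of_nonpos (by nlinarith), zero_pow (by omega), zero_mul]
  by_cases hcase : ∀ u v, F u ≠ 0 → F v ≠ 0 → sfun t u v ≤ s1
  · apply integral_nonpos
    intro w
    by_cases h1 : F w.1 = 0
    · simp [hφ, h1]
    by_cases h2 : F w.2 = 0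
    · simp [hφ, h2]
    exact mul_nonpos_of_nonneg_of_nonpos (mul_nonneg hCt0 (mul_nonneg (hφ0 _) (hφ0 _))) (hGneg _ (hcase _ _ h1 h2))
  · push Not at hcase
    obtain ⟨u0, v0, hu0, hv0, hs0⟩ := hcase
    have hup : ∀ u v, F u ≠ 0 → F v ≠ 0 → sfun t u v ≤ c' - κ * (u * v - r ^ 2) + 4 * e ^ 2 / (1 - q ^ 2) ^ 2 := by
      intro u v hu hv
      have h1 := abs_le.1 (hFs u hu)
      have h2 := abs_le.1 (hFs v hv)
      exact s_upper hc' hcc hc1 hr htc hq (hsupp u hu).1 (hsupp u hu).2.1 (hsupp v hv).1 (hsupp v hv).2.1 (abs_le.2 ⟨by linarith, by linarith⟩) he heq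
    have hup2 : ∀ u v, F u ≠ 0 → F v ≠ 0 → sfun t u v ≤ c' + K / N := by
      intro u v hu hv
      have h := hup u v hu hv
      have h1 := abs_le.1 (hFs u hu)
      have h2 := abs_le.1 (hFs v hv)
      have h3 : r ^ 2 - u * v ≤ 2 * r * e + e ^ 2 := by nlinarith
      have := mul_le_mul_of_nonneg_left h3 hκ0.le
      linarith
    have hs1K : s1 ≤ c' + K / N := (hs0.trans_le (hup2 u0 v0 hu0 hv0)).le
    obtain ⟨D, hD, hGD⟩ := hwin hs1K
    have hlow : ∀ u v, F u ≠ 0 → F v ≠ 0 → s1 - K / N ≤ sfun t u v := by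
      intro u v hu hv
      have h1 := abs_le.1 (hFs u hu)
      have h2 := abs_le.1 (hFs v hv)
      have h3 := abs_le.1 (hFs u0 hu0)
      have h4 := abs_le.1 (hFs v0 hv0)
      have := s_lip hq he (abs_le.2 ⟨ht.le, ht1.le⟩) (hsupp u hu).1 (hsupp u hu).2.1 (hsupp v hv).1 (hsupp v hv).2.1
        (hsupp u0 hu0).1 (hsupp u0 hu0).2.1 (hsupp v0 hv0).1 (hsupp v0 hv0).2.1 (abs_le.2 ⟨by linarith, by linarith⟩) (abs_le.2 ⟨by linarith, by linarith⟩)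
      linarith
    set B0 := η / N + κ * e ^ 2 + 4 * e ^ 2 / (1 - q ^ 2) ^ 2 with hB0
    have hpt : ∀ u v, F u ≠ 0 → F v ≠ 0 → √(1 - sfun t u v ^ 2) ^ (n - 4) * g.eval (sfun t u v) ≤ D * (-(κ * r) * (u - r) - (κ * r) * (v - r) + B0) := by
      intro u v hu hv
      refine (hGD _ ⟨hlow u v hu hv, by linarith [hup2 u v hu hv]⟩).trans ?_
      apply mul_le_mul_of_nonneg_left _ hD.le
      have h := hup u v hu hv
      have e1 : u * v - r ^ 2 = r * (u - r) + r * (v - r) + (u - r) * (v - r) := by ring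
      have e2 : -((u - r) * (v - r)) ≤ e ^ 2 := by
        have := mul_le_mul (hFs u hu) (hFs v hv) (abs_nonneg _) he
        rw [← abs_mul] at this
        have := (abs_le.1 this).1
        linarith
      have e3 := mul_le_mul_of_nonneg_left e2 hκ0.le
      rw [e1] at h
      rw [hB0]
      linarith
    by_cases hIntg : Integrable (fun w : ℝ × ℝ => Ct * (φ w.1 * φ w.2) * (√(1 - sfun t w.1 w.2 ^ 2) ^ (n - 4) * g.eval (sfun t w.1 w.2))) 
    swap
    · rw [integral_undef hIntg]
    have iφ : Integrable φ := by
      have := phi_integrable hFm hF0 hFM hFs (n - 4) (fun _ => 1) continuous_const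
      simpa [hφ] using this
    have iψ : Integrable (fun u => φ u * (u - r)) := phi_integrable hFm hF0 hFM hFs (n - 4) (fun u => u - r) (by fun_prop)
    have j1 := (iψ.mul_prod iφ).const_mul (-(κ * r))
    have j2 := (iφ.mul_prod iψ).const_mul (-(κ * r))
    have j3 := (iφ.mul_prod iφ).const_mul B0
    rw [← Measure.volume_eq_prod] at j1 j2 j3
    have j := ((j1.add j2).add j3).const_mul (Ct * D)
    have hle := integral_mono hIntg j (by
      intro w
      simp only [Pi.add_apply]
      by_cases h1 : F w.1 = 0
      · simp [hφ, h1]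
      by_cases h2 : F w.2 = 0
      · simp [hφ, h2]
      have := mul_le_mul_of_nonneg_left (hpt _ _ h1 h2) (mul_nonneg hCt0 (mul_nonneg (hφ0 w.1) (hφ0 w.2)))
      refine this.trans (le_of_eq ?_)
      ring)
    refine hle.trans ?_
    rw [integral_const_mul]
    apply mul_nonpos_of_nonneg_of_nonpos (mul_nonneg hCt0 hD.le)
    have e1 : ∫ w : ℝ × ℝ, φ w.1 * (w.1 - r) * φ w.2 = (∫ u, φ u * (u - r)) * ∫ u, φ u := integral_prod_mul (fun u => φ u * (u - r)) φ
    have e2 : ∫ w : ℝ × ℝ, φ w.1 * (φ w.2 * (w.2 - r)) = (∫ u, φ u) * ∫ u, φ u * (u - r) := integral_prod_mul φ (fun u => φ u * (u - r))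
    have e3 : ∫ w : ℝ × ℝ, φ w.1 * φ w.2 = (∫ u, φ u) * ∫ u, φ u := integral_prod_mul φ φ
    have hsum : ∫ w : ℝ × ℝ, (((fun w : ℝ × ℝ => -(κ * r) * (φ w.1 * (w.1 - r) * φ w.2)) + fun w : ℝ × ℝ => -(κ * r) * (φ w.1 * (φ w.2 * (w.2 - r)))) + fun w : ℝ × ℝ => B0 * (φ w.1 * φ w.2)) w 
        = -(κ * r) * ((∫ u, φ u * (u - r)) * ∫ u, φ u) + -(κ * r) * ((∫ u, φ u) * ∫ u, φ u * (u - r)) + B0 * ((∫ u, φ u) * ∫ u, φ u) := by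
      rw [integral_add' (j1.add j2) j3, integral_add' j1 j2, integral_const_mul, integral_const_mul, integral_const_mul]
      rw [← e1, ← e2, ← e3]
    refine (le_of_eq hsum).trans ?_
    have hI0 : 0 ≤ ∫ u, φ u := integral_nonneg hφ0
    have := mul_le_mul_of_nonneg_left hmom hI0
    linarith

end Sgn

end

section
namespace Asy
open Topology

lemma J1_eq (A T : ℝ) : ∫ τ in (0:ℝ)..T, τ * exp (A - τ) = exp A * (1 - (T + 1) * exp (-T)) := by
  have h := intervalIntegral.integral_eq_sub_of_hasDerivAt (a := 0) (b := T) (f := fun τ => -(τ + 1) * exp (A - τ)) (f' := fun τ => τ * exp (A - τ)) 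
    (fun τ _ => by
      have h1 : HasDerivAt (fun τ : ℝ => -(τ + 1)) (-1) τ := ((hasDerivAt_id τ).add_const 1).neg
      have h2 : HasDerivAt (fun τ : ℝ => A - τ) (-1) τ := by simpa using (hasDerivAt_id τ).const_sub A
      refine (h1.mul h2.exp).congr_deriv ?_
      ring) (by apply Continuous.intervalIntegrable; fun_prop)
  rw [h, sub_eq_add_neg A T, exp_add]
  simp
  ring

lemma J2_eq (A T : ℝ) : ∫ τ in (0:ℝ)..T, τ ^ 2 * exp (A - τ) = exp A * (2 - (T ^ 2 + 2 * T + 2) * exp (-T)) := by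
  have h := intervalIntegral.integral_eq_sub_of_hasDerivAt (a := 0) (b := T) (f := fun τ => -(τ ^ 2 + 2 * τ + 2) * exp (A - τ)) (f' := fun τ => τ ^ 2 * exp (A - τ)) 
    (fun τ _ => by
      have h1 : HasDerivAt (fun τ : ℝ => -(τ ^ 2 + 2 * τ + 2)) (-(2 * τ + 2)) τ := by
        have := (((hasDerivAt_pow 2 τ).add ((hasDerivAt_id τ).const_mul 2)).add_const 2).neg
        refine HasDerivAt.congr_deriv (f := fun τ : ℝ => -(τ ^ 2 + 2 * τ + 2)) this ?_
        simp
      have h2 : HasDerivAt (fun τ : ℝ => A - τ) (-1) τ := by simpa using (hasDerivAt_id τ).const_sub A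
      refine (h1.mul h2.exp).congr_deriv ?_
      ring) (by apply Continuous.intervalIntegrable; fun_prop)
  rw [h, sub_eq_add_neg A T, exp_add]
  simp
  ring

lemma exp_neg_ten : exp (-10) ≤ 1 / 1024 := by
  have h : (2 : ℝ) ^ 10 ≤ exp 10 := by
    have h1 : (2:ℝ) ≤ exp 1 := by have := add_one_le_exp (1:ℝ); linarith
    calc (2:ℝ) ^ 10 ≤ exp 1 ^ 10 := by gcongr
      _ = exp 10 := by rw [← exp_nat_mul]; norm_num
  rw [exp_neg, inv_eq_one_div]
  apply one_div_le_one_div_of_le (by norm_num)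
  linarith

lemma N1 : 0 < (∫ τ in (0:ℝ)..10, τ ^ 2 * exp (9/5 - τ)) - 9/5 * ∫ τ in (0:ℝ)..10, τ * exp (9/5 - τ) := by
  rw [J1_eq, J2_eq]
  have h := exp_neg_ten
  have h2 := exp_pos (-10)
  have h3 := exp_pos (9/5 : ℝ)
  have : 0 < exp (9/5) * ((2 - (10 ^ 2 + 2 * 10 + 2) * exp (-10)) - 9/5 * (1 - (10 + 1) * exp (-10))) := by
    apply mul_pos h3; linarith
  linarith

lemma N0 : 0 < ∫ τ in (0:ℝ)..10, τ * exp (9/5 - τ) := by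
  rw [J1_eq]
  have h := exp_neg_ten
  have h3 := exp_pos (9/5 : ℝ)
  apply mul_pos h3; linarith

lemma N2 : (∫ τ in (0:ℝ)..10, τ ^ 2 * exp (9/5 - τ)) < (1 / exp 1) * (∫ τ in (0:ℝ)..10, τ * exp (9/5 - τ)) ^ 2 := by
  rw [J1_eq, J2_eq]
  have h := exp_neg_ten
  have h2 := exp_pos (-10)
  have h3 := exp_pos (9/5 : ℝ)
  have h4 : (212/100 : ℝ) ≤ exp (4/5) := by
    have := quadratic_le_exp_of_nonneg (show (0:ℝ) ≤ 4/5 by norm_num); linarith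
  have h5 : exp (9/5) = exp 1 * exp (4/5) := by rw [← exp_add]; norm_num
  have h6 : 1 / exp 1 * (exp (9/5) * (1 - (10 + 1) * exp (-10))) ^ 2 = exp (9/5) * (exp (4/5) * (1 - (10 + 1) * exp (-10)) ^ 2) := by
    rw [h5]; have := exp_pos (1:ℝ); field_simp
  rw [h6]
  apply mul_lt_mul_of_pos_left _ h3
  have h7 : (1 - 11/1024 : ℝ) ^ 2 ≤ (1 - (10 + 1) * exp (-10)) ^ 2 := by
    apply pow_le_pow_left₀ (by norm_num); linarith
  have h8 : (212/100 : ℝ) * (1 - 11/1024 : ℝ) ^ 2 ≤ exp (4/5) * (1 - (10 + 1) * exp (-10)) ^ 2 := by gcongr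
  have : (2:ℝ) < (212/100 : ℝ) * (1 - 11/1024 : ℝ) ^ 2 := by norm_num
  nlinarith

/-- the sample point -/
def uu (r : ℝ) (n : ℕ) (τ : ℝ) : ℝ := r + (τ - 9/5) * ((1 - r ^ 2) / (r * n))

def PP (r : ℝ) (n : ℕ) (τ : ℝ) : ℝ := √(1 - uu r n τ ^ 2) / √(1 - r ^ 2)

lemma ratio_eq (r : ℝ) (hr0 : 0 < r) (hr1 : r < 1) (n : ℕ) (hn : 1 ≤ n) (τ : ℝ) :
    (1 - uu r n τ ^ 2) / (1 - r ^ 2) = 1 + (-(2 * (τ - 9/5)) / n - (τ - 9/5) ^ 2 * (1 - r ^ 2) / r ^ 2 / n ^ 2) := by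
  have h1 : 0 < 1 - r ^ 2 := by nlinarith
  have h2 : (n:ℝ) ≠ 0 := by positivity
  unfold uu
  field_simp
  ring

lemma ratio_tendsto (r : ℝ) (hr0 : 0 < r) (hr1 : r < 1) (τ : ℝ) :
    Tendsto (fun n : ℕ => (1 - uu r n τ ^ 2) / (1 - r ^ 2)) atTop (𝓝 1) := by
  have h1 : 0 < 1 - r ^ 2 := by nlinarith
  have hh : Tendsto (fun n : ℕ => (1 - r ^ 2) / r / (n:ℝ)) atTop (𝓝 0) := tendsto_const_div_atTop_nhds_zero_nat _
  have : Tendsto (fun n : ℕ => (1 - (r + (τ - 9/5) * ((1 - r ^ 2) / r / (n:ℝ))) ^ 2) / (1 - r ^ 2)) atTop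
      (𝓝 ((1 - (r + (τ - 9/5) * 0) ^ 2) / (1 - r ^ 2))) :=
    (tendsto_const_nhds.sub ((tendsto_const_nhds.add (hh.const_mul _)).pow 2)).div_const _
  have e : (1 - (r + (τ - 9/5) * 0) ^ 2) / (1 - r ^ 2) = 1 := by
    rw [mul_zero, add_zero, div_self h1.ne']
  rw [e] at this
  refine this.congr fun n => ?_
  unfold uu
  rw [div_div]

lemma PP_pow_tendsto (r : ℝ) (hr0 : 0 < r) (hr1 : r < 1) (τ : ℝ) : Tendsto (fun n : ℕ => PP r n τ ^ n) atTop (𝓝 (exp (9/5 - τ))) := by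
  have h1 : 0 < 1 - r ^ 2 := by nlinarith
  have hg : Tendsto (fun n : ℕ => (n:ℝ) * (-(2 * (τ - 9/5)) / n - (τ - 9/5) ^ 2 * (1 - r ^ 2) / r ^ 2 / n ^ 2)) atTop (𝓝 (-(2 * (τ - 9/5)))) := by
    have : Tendsto (fun n : ℕ => -(2 * (τ - 9/5)) - (τ - 9/5) ^ 2 * (1 - r ^ 2) / r ^ 2 / (n:ℝ)) atTop (𝓝 (-(2 * (τ - 9/5)) - 0)) :=
      tendsto_const_nhds.sub (tendsto_const_div_atTop_nhds_zero_nat _)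
    rw [sub_zero] at this
    refine this.congr' ?_
    filter_upwards [eventually_ge_atTop 1] with n hn
    have h2 : (n:ℝ) ≠ 0 := by positivity
    field_simp
  have h2 := Real.tendsto_one_add_pow_exp_of_tendsto hg
  have h3 := (continuous_sqrt.tendsto _).comp h2
  have e : √(exp (-(2 * (τ - 9/5)))) = exp (9/5 - τ) := by
    rw [← exp_half]; congr 1; ring
  rw [e] at h3
  refine h3.congr' ?_
  have hpos := (ratio_tendsto r hr0 hr1 τ).eventually (lt_mem_nhds (show (0:ℝ) < 1 by norm_num))
  filter_upwards [eventually_ge_atTop 1, hpos] with n hn hp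
  simp only [Function.comp]
  rw [← ratio_eq r hr0 hr1 n hn]
  unfold PP
  rw [← Real.sqrt_div' _ h1.le]
  rw [Real.sqrt_eq_iff_mul_self_eq (by positivity) (by positivity), ← mul_pow, Real.mul_self_sqrt hp.le]

lemma PP_tendsto (r : ℝ) (hr0 : 0 < r) (hr1 : r < 1) (τ : ℝ) : Tendsto (fun n : ℕ => PP r n τ) atTop (𝓝 1) := by
  have h1 : 0 < 1 - r ^ 2 := by nlinarith
  have h := (continuous_sqrt.tendsto _).comp (ratio_tendsto r hr0 hr1 τ)
  rw [Real.sqrt_one] at h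
  refine h.congr ?_
  intro n
  simp only [Function.comp, PP]
  rw [← Real.sqrt_div' _ h1.le]

lemma PP_sub_tendsto (r : ℝ) (hr0 : 0 < r) (hr1 : r < 1) (τ : ℝ) (k : ℕ) :
    Tendsto (fun n : ℕ => PP r n τ ^ (n - k)) atTop (𝓝 (exp (9/5 - τ))) := by
  have hp := PP_tendsto r hr0 hr1 τ
  have h := (PP_pow_tendsto r hr0 hr1 τ).div (hp.pow k) (by simp)
  simp only [one_pow, div_one] at h
  refine h.congr' ?_
  filter_upwards [eventually_ge_atTop k, hp.eventually (lt_mem_nhds (show (0:ℝ) < 1 by norm_num))] with n hn hpp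
  simp only [Pi.div_apply]
  rw [div_eq_iff (by positivity), ← pow_add, Nat.sub_add_cancel hn]

lemma PP_nonneg (r : ℝ) (n : ℕ) (τ : ℝ) : 0 ≤ PP r n τ := by unfold PP; positivity

lemma PP_le (r : ℝ) (hr0 : 0 < r) (hr1 : r < 1) (n : ℕ) (hn : 1 ≤ n) (τ : ℝ) (hτ : 0 ≤ τ) :
    PP r n τ ≤ exp (4 / n) := by
  have h1 : 0 < 1 - r ^ 2 := by nlinarith
  have h0 : (0:ℝ) < n := by positivity
  unfold PP
  rw [← Real.sqrt_div' _ h1.le, ratio_eq r hr0 hr1 n hn]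
  apply Real.sqrt_le_iff.2 ⟨by positivity, ?_⟩
  have h2 : 0 ≤ (τ - 9/5) ^ 2 * (1 - r ^ 2) / r ^ 2 / n ^ 2 := by positivity
  have h3 : -(2 * (τ - 9/5)) / (n:ℝ) ≤ 4 / n := by gcongr; linarith
  have h4 := add_one_le_exp (4 / (n:ℝ))
  have h5 : 0 < 4 / (n:ℝ) := by positivity
  nlinarith

lemma PP_pow_le (r : ℝ) (hr0 : 0 < r) (hr1 : r < 1) (n : ℕ) (hn : 1 ≤ n) (τ : ℝ) (hτ : 0 ≤ τ) (k : ℕ) :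
    PP r n τ ^ (n - k) ≤ exp 4 := by
  have h0 : (0:ℝ) < n := by positivity
  calc PP r n τ ^ (n - k) ≤ exp (4 / n) ^ (n - k) := pow_le_pow_left₀ (PP_nonneg _ _ _) (PP_le r hr0 hr1 n hn τ hτ) _
    _ ≤ exp (4 / n) ^ n := pow_le_pow_right₀ (one_le_exp (by positivity)) (Nat.sub_le _ _)
    _ = exp 4 := by rw [← exp_nat_mul]; congr 1; field_simp

lemma PP_cont (r : ℝ) (n : ℕ) : Continuous (PP r n) := by
  unfold PP uu; fun_prop

lemma int_tendsto (r : ℝ) (hr0 : 0 < r) (hr1 : r < 1) (k : ℕ) (f : ℝ → ℝ) (hf : Continuous f) :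
    Tendsto (fun n : ℕ => ∫ τ in (0:ℝ)..10, f τ * PP r n τ ^ (n - k)) atTop (𝓝 (∫ τ in (0:ℝ)..10, f τ * exp (9/5 - τ))) := by
  apply intervalIntegral.tendsto_integral_filter_of_dominated_convergence (fun τ => |f τ| * exp 4)
  · refine Eventually.of_forall fun n => ?_
    have := PP_cont r n
    exact (by fun_prop : Continuous fun τ => f τ * PP r n τ ^ (n - k)).aestronglyMeasurable
  · filter_upwards [eventually_ge_atTop 1] with n hn
    refine Eventually.of_forall fun τ hτ => ?_
    rw [Set.uIoc_of_le (by norm_num)] at hτ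
    rw [norm_mul, Real.norm_eq_abs, Real.norm_of_nonneg (pow_nonneg (PP_nonneg _ _ _) _)]
    exact mul_le_mul_of_nonneg_left (PP_pow_le r hr0 hr1 n hn τ hτ.1.le k) (abs_nonneg _)
  · apply Continuous.intervalIntegrable; fun_prop
  · exact Eventually.of_forall fun τ _ => (PP_sub_tendsto r hr0 hr1 τ k).const_mul _

end Asy

end

section
namespace Asy
open Topology

def hh (r : ℝ) (n : ℕ) : ℝ := (1 - r ^ 2) / (r * n)

lemma hh_pos (r : ℝ) (hr0 : 0 < r) (hr1 : r < 1) (n : ℕ) (hn : 1 ≤ n) : 0 < hh r n := by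
  have h1 : 0 < 1 - r ^ 2 := by nlinarith
  have h0 : (0:ℝ) < n := by positivity
  unfold hh; positivity

lemma uu_eq (r : ℝ) (n : ℕ) (τ : ℝ) : uu r n τ = hh r n * τ + uu r n 0 := by
  unfold uu hh; ring

def FF (r : ℝ) (n : ℕ) (u : ℝ) : ℝ :=
  (Set.Icc (uu r n 0) (uu r n 10)).indicator (fun u => u - uu r n 0) u

lemma FF_meas (r : ℝ) (n : ℕ) : Measurable (FF r n) :=
  Measurable.indicator (by fun_prop) measurableSet_Icc

lemma FF_nonneg (r : ℝ) (n : ℕ) (u : ℝ) : 0 ≤ FF r n u := by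
  unfold FF
  apply Set.indicator_nonneg
  intro u hu
  linarith [hu.1]

lemma FF_le (r : ℝ) (n : ℕ) (u : ℝ) : FF r n u ≤ |uu r n 10 - uu r n 0| := by
  unfold FF
  rw [Set.indicator_apply]
  split_ifs with h
  · exact le_trans (by linarith [h.2]) (le_abs_self _)
  · positivity

lemma FF_supp (r : ℝ) (hr0 : 0 < r) (hr1 : r < 1) (n : ℕ) (hn : 1 ≤ n) (u : ℝ) (hu : FF r n u ≠ 0) :
    |u - r| ≤ 10 * hh r n := by
  have h := hh_pos r hr0 hr1 n hn
  have hm : u ∈ Set.Icc (uu r n 0) (uu r n 10) := by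
    by_contra h'
    exact hu (Set.indicator_of_notMem h' _)
  have e : ∀ τ, uu r n τ = r + (τ - 9/5) * hh r n := fun τ => rfl
  rw [Set.mem_Icc, e, e] at hm
  rw [abs_le]
  constructor <;> nlinarith [hm.1, hm.2]

lemma sub_int (r : ℝ) (hr0 : 0 < r) (hr1 : r < 1) (n : ℕ) (hn : 1 ≤ n) (G : ℝ → ℝ) :
    (∫ u, (Set.Icc (uu r n 0) (uu r n 10)).indicator G u) = hh r n * ∫ τ in (0:ℝ)..10, G (uu r n τ) := by
  have h := hh_pos r hr0 hr1 n hn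
  have hle : uu r n 0 ≤ uu r n 10 := by rw [uu_eq r n 10]; linarith
  rw [integral_indicator measurableSet_Icc, integral_Icc_eq_integral_Ioc, ← intervalIntegral.integral_of_le hle]
  have e := intervalIntegral.smul_integral_comp_mul_add (a := 0) (b := 10) G (hh r n) (uu r n 0)
  rw [← uu_eq, ← uu_eq] at e
  rw [← e, smul_eq_mul]
  congr 1
  apply intervalIntegral.integral_congr
  intro τ _
  simp only [← uu_eq]

lemma sq_pow (r : ℝ) (hr0 : 0 < r) (hr1 : r < 1) (n m : ℕ) (τ : ℝ) :
    √(1 - uu r n τ ^ 2) ^ m = √(1 - r ^ 2) ^ m * PP r n τ ^ m := by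
  have h1 : 0 < 1 - r ^ 2 := by nlinarith
  rw [← mul_pow, PP, mul_div_cancel₀]
  exact (Real.sqrt_pos.2 h1).ne'

lemma I1_eq (r : ℝ) (hr0 : 0 < r) (hr1 : r < 1) (n : ℕ) (hn : 1 ≤ n) (m : ℕ) :
    (∫ u, FF r n u * √(1 - u ^ 2) ^ m) = hh r n ^ 2 * √(1 - r ^ 2) ^ m * ∫ τ in (0:ℝ)..10, τ * PP r n τ ^ m := by
  have := sub_int r hr0 hr1 n hn (fun u => (u - uu r n 0) * √(1 - u ^ 2) ^ m)
  have e : (fun u => FF r n u * √(1 - u ^ 2) ^ m) = 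
      (Set.Icc (uu r n 0) (uu r n 10)).indicator (fun u => (u - uu r n 0) * √(1 - u ^ 2) ^ m) := by
    funext u
    simp only [FF, Set.indicator_apply]
    split_ifs <;> simp
  rw [e, this, ← intervalIntegral.integral_const_mul, ← intervalIntegral.integral_const_mul]
  apply intervalIntegral.integral_congr
  intro τ _
  simp only
  rw [sq_pow r hr0 hr1, uu_eq r n τ]
  ring

lemma I1'_eq (r : ℝ) (hr0 : 0 < r) (hr1 : r < 1) (n : ℕ) (hn : 1 ≤ n) (m : ℕ) :
    (∫ u, FF r n u * √(1 - u ^ 2) ^ m * (u - r)) = hh r n ^ 3 * √(1 - r ^ 2) ^ m * ∫ τ in (0:ℝ)..10, (τ * (τ - 9/5)) * PP r n τ ^ m := by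
  have := sub_int r hr0 hr1 n hn (fun u => (u - uu r n 0) * √(1 - u ^ 2) ^ m * (u - r))
  have e : (fun u => FF r n u * √(1 - u ^ 2) ^ m * (u - r)) = 
      (Set.Icc (uu r n 0) (uu r n 10)).indicator (fun u => (u - uu r n 0) * √(1 - u ^ 2) ^ m * (u - r)) := by
    funext u
    simp only [FF, Set.indicator_apply]
    split_ifs <;> simp
  rw [e, this, ← intervalIntegral.integral_const_mul, ← intervalIntegral.integral_const_mul]
  apply intervalIntegral.integral_congr
  intro τ _
  simp only
  have e2 : uu r n 0 = r - 9/5 * hh r n := by unfold uu hh; ring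
  rw [sq_pow r hr0 hr1, uu_eq r n τ, e2]
  ring

lemma I2_eq (r : ℝ) (hr0 : 0 < r) (hr1 : r < 1) (n : ℕ) (hn : 1 ≤ n) (m : ℕ) :
    (∫ u, √(1 - u ^ 2) ^ m * FF r n u) = hh r n ^ 2 * √(1 - r ^ 2) ^ m * ∫ τ in (0:ℝ)..10, τ * PP r n τ ^ m := by
  rw [← I1_eq r hr0 hr1 n hn]
  simp only [mul_comm]

lemma I3_eq (r : ℝ) (hr0 : 0 < r) (hr1 : r < 1) (n : ℕ) (hn : 1 ≤ n) (m : ℕ) :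
    (∫ u, √(1 - u ^ 2) ^ m * FF r n u ^ 2) = hh r n ^ 3 * √(1 - r ^ 2) ^ m * ∫ τ in (0:ℝ)..10, τ ^ 2 * PP r n τ ^ m := by
  have := sub_int r hr0 hr1 n hn (fun u => √(1 - u ^ 2) ^ m * (u - uu r n 0) ^ 2)
  have e : (fun u => √(1 - u ^ 2) ^ m * FF r n u ^ 2) = 
      (Set.Icc (uu r n 0) (uu r n 10)).indicator (fun u => √(1 - u ^ 2) ^ m * (u - uu r n 0) ^ 2) := by
    funext u
    simp only [FF, Set.indicator_apply]
    split_ifs <;> simp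
  rw [e, this, ← intervalIntegral.integral_const_mul, ← intervalIntegral.integral_const_mul]
  apply intervalIntegral.integral_congr
  intro τ _
  simp only
  rw [sq_pow r hr0 hr1, uu_eq r n τ]
  ring

lemma rpow_sqrt (x : ℝ) (hx : 0 ≤ x) (n : ℕ) (hn : 3 ≤ n) : x ^ (((n:ℝ) - 3) / 2) = √x ^ (n - 3) := by
  rw [Real.sqrt_eq_rpow, ← Real.rpow_natCast, ← Real.rpow_mul hx]
  congr 1
  rw [Nat.cast_sub hn]; push_cast; ring

lemma tot_eq (n : ℕ) (hn : 4 ≤ n) : (∫ t in (-1:ℝ)..1, (1 - t ^ 2) ^ (((n:ℝ) - 3) / 2)) = ∫ u : ℝ, √(1 - u ^ 2) ^ (n - 3) := by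
  have e : ∫ u : ℝ, √(1 - u ^ 2) ^ (n - 3) = ∫ u in Set.Ioc (-1:ℝ) 1, √(1 - u ^ 2) ^ (n - 3) := by
    rw [setIntegral_eq_integral_of_forall_compl_eq_zero]
    intro x hx
    have : 1 - x ^ 2 ≤ 0 := by
      by_contra h
      apply hx
      push Not at h
      constructor <;> nlinarith
    rw [Real.sqrt_eq_zero_of_nonpos this, zero_pow (by omega)]
  rw [e, ← intervalIntegral.integral_of_le (by norm_num)]
  apply intervalIntegral.integral_congr
  intro t ht
  rw [Set.uIcc_of_le (by norm_num)] at ht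
  simp only
  rw [rpow_sqrt _ (by nlinarith [ht.1, ht.2]) n (by omega)]

lemma tot_pos (n : ℕ) (hn : 4 ≤ n) : 0 < ∫ t in (-1:ℝ)..1, (1 - t ^ 2) ^ (((n:ℝ) - 3) / 2) := by
  have hn' : (4:ℝ) ≤ n := by exact_mod_cast hn
  apply intervalIntegral.intervalIntegral_pos_of_pos_on
  · apply Continuous.intervalIntegrable
    exact Continuous.rpow_const (by fun_prop) (fun _ => Or.inr (by linarith))
  · intro t ht
    apply Real.rpow_pos_of_pos
    nlinarith [ht.1, ht.2]
  · norm_num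

lemma cap_nonneg (n : ℕ) (r : ℝ) (hr0 : 0 < r) (hr1 : r < 1) : 0 ≤ ∫ t in r..1, (1 - t ^ 2) ^ (((n:ℝ) - 3) / 2) := by
  apply intervalIntegral.integral_nonneg hr1.le
  intro t ht
  apply Real.rpow_nonneg
  nlinarith [ht.1, ht.2]

lemma cap_le (n : ℕ) (hn : 4 ≤ n) (r : ℝ) (hr0 : 0 < r) (hr1 : r < 1) :
    (∫ t in r..1, (1 - t ^ 2) ^ (((n:ℝ) - 3) / 2)) ≤ hh r n * √(1 - r ^ 2) ^ (n - 3) * (n / (n - 1)) := by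
  have hn' : (4:ℝ) ≤ n := by exact_mod_cast hn
  have h1 : 0 < 1 - r ^ 2 := by nlinarith
  have hc : Continuous fun t : ℝ => (1 - t ^ 2) ^ (((n:ℝ) - 3) / 2) :=
    Continuous.rpow_const (by fun_prop) (fun _ => Or.inr (by linarith))
  have hI := intervalIntegral.integral_eq_sub_of_hasDerivAt (a := r) (b := 1)
    (f := fun t : ℝ => -((1 - t ^ 2) ^ (((n:ℝ) - 1) / 2)) / (r * (n - 1)))
    (f' := fun t : ℝ => t / r * (1 - t ^ 2) ^ (((n:ℝ) - 3) / 2))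
    (fun t _ => by
      have a1 : HasDerivAt (fun t : ℝ => 1 - t ^ 2) (-(2 * t)) t := by
        refine ((hasDerivAt_pow 2 t).const_sub 1).congr_deriv ?_
        simp
      have a2 := ((a1.rpow_const (p := ((n:ℝ) - 1) / 2) (Or.inr (by linarith))).neg).div_const (r * (n - 1))
      refine a2.congr_deriv ?_
      have e : ((n:ℝ) - 1) / 2 - 1 = (n - 3) / 2 := by ring
      rw [e]
      have : (n:ℝ) - 1 ≠ 0 := by linarith
      field_simp) (by apply Continuous.intervalIntegrable; fun_prop)
  have hle : (∫ t in r..1, (1 - t ^ 2) ^ (((n:ℝ) - 3) / 2)) ≤ ∫ t in r..1, t / r * (1 - t ^ 2) ^ (((n:ℝ) - 3) / 2) := by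
    apply intervalIntegral.integral_mono_on hr1.le
    · exact hc.intervalIntegrable _ _
    · apply Continuous.intervalIntegrable; fun_prop
    · intro t ht
      have : 0 ≤ (1 - t ^ 2) ^ (((n:ℝ) - 3) / 2) := by
        apply Real.rpow_nonneg
        nlinarith [ht.1, ht.2]
      have h2 : 1 ≤ t / r := by rw [le_div_iff₀ hr0]; linarith [ht.1]
      nlinarith
  refine hle.trans (le_of_eq ?_)
  rw [hI, ← rpow_sqrt _ h1.le n (by omega)]
  have e : ((n:ℝ) - 1) / 2 = (n - 3) / 2 + 1 := by ring
  rw [e, Real.rpow_add h1, Real.rpow_one]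
  have z : ((1:ℝ) - 1 ^ 2) ^ (((n:ℝ) - 3) / 2 + 1) = 0 := by
    rw [one_pow, sub_self, Real.zero_rpow (by linarith)]
  rw [z]
  have : (n:ℝ) - 1 ≠ 0 := by linarith
  have : (n:ℝ) ≠ 0 := by linarith
  unfold hh
  field_simp
  ring

end Asy

end

namespace Asy
open Topology

lemma hh_eq (r : ℝ) (n : ℕ) : hh r n = (1 - r ^ 2) / r / n := by unfold hh; rw [div_div]

lemma lim_b : (∫ τ in (0:ℝ)..10, (τ * (τ - 9/5)) * exp (9/5 - τ)) =
    (∫ τ in (0:ℝ)..10, τ ^ 2 * exp (9/5 - τ)) - 9/5 * ∫ τ in (0:ℝ)..10, τ * exp (9/5 - τ) := by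
  rw [← intervalIntegral.integral_const_mul, ← intervalIntegral.integral_sub]
  · apply intervalIntegral.integral_congr
    intro τ _
    simp only
    ring
  · apply Continuous.intervalIntegrable; fun_prop
  · apply Continuous.intervalIntegrable; fun_prop

lemma params (c' r : ℝ) (hc1 : c' < 1) (hr0 : 0 < r) (hr1 : r < 1) :
    ∃ K > 0, ∃ η > 0, ∀ᶠ n : ℕ in atTop,
      8 * (10 * hh r n) ^ 2 ≤ (1 - ((1 + r) / 2) ^ 2) ^ 2 ∧ 10 * hh r n < r ∧ r + 10 * hh r n ≤ (1 + r) / 2 ∧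
      10 * hh r n * (4 / (1 - ((1 + r) / 2) ^ 2) + 8 / (1 - ((1 + r) / 2) ^ 2) ^ 3) ≤ K / n ∧
      (1 - c') / (1 - r ^ 2) * (2 * r * (10 * hh r n) + (10 * hh r n) ^ 2) + 4 * (10 * hh r n) ^ 2 / (1 - ((1 + r) / 2) ^ 2) ^ 2 ≤ K / n ∧
      (η / n + (1 - c') / (1 - r ^ 2) * (10 * hh r n) ^ 2 + 4 * (10 * hh r n) ^ 2 / (1 - ((1 + r) / 2) ^ 2) ^ 2) * 
        (∫ u, FF r n u * √(1 - u ^ 2) ^ (n - 4)) ≤ 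
      2 * ((1 - c') / (1 - r ^ 2) * r) * ∫ u, FF r n u * √(1 - u ^ 2) ^ (n - 4) * (u - r) := by
  have h1 : 0 < 1 - r ^ 2 := by nlinarith
  set p := 1 - ((1 + r) / 2) ^ 2 with hp
  have hp0 : 0 < p := by rw [hp]; nlinarith
  set L := (1 - r ^ 2) / r with hL
  have hL0 : 0 < L := by positivity
  set κ := (1 - c') / (1 - r ^ 2) with hκ
  have hκ0 : 0 < κ := by apply div_pos <;> linarith
  set J1 := ∫ τ in (0:ℝ)..10, τ * exp (9/5 - τ) with hJ1
  set B := ∫ τ in (0:ℝ)..10, (τ * (τ - 9/5)) * exp (9/5 - τ) with hB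
  have hJ10 : 0 < J1 := N0
  have hB0 : 0 < B := by rw [hB, lim_b]; exact N1
  have lim0 : Tendsto (fun n : ℕ => 10 * hh r n) atTop (𝓝 0) := by
    have := (tendsto_const_div_atTop_nhds_zero_nat L).const_mul 10
    rw [mul_zero] at this
    refine this.congr fun n => ?_
    rw [hh_eq]
  have e1 : ∀ᶠ n : ℕ in atTop, 8 * (10 * hh r n) ^ 2 < p ^ 2 := by
    have := (lim0.pow 2).const_mul 8
    apply this.eventually (gt_mem_nhds _)
    simp; positivity
  have e2 := lim0.eventually (gt_mem_nhds hr0)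
  have e3 := lim0.eventually (gt_mem_nhds (show (0:ℝ) < (1 - r) / 2 by linarith))
  set η := κ * r * L * B / J1 with hη
  refine ⟨10 * L * (4 / p + 8 / p ^ 3) + κ * (2 * r * (10 * L) + (10 * L) ^ 2) + 4 * (10 * L) ^ 2 / p ^ 2, by positivity,
    η, by positivity, ?_⟩
  have la := int_tendsto r hr0 hr1 4 (fun τ => τ) continuous_id
  have lb := int_tendsto r hr0 hr1 4 (fun τ => τ * (τ - 9/5)) (by fun_prop)
  have e4 : ∀ᶠ n : ℕ in atTop, (η + (κ * (10 * L) ^ 2 + 4 * (10 * L) ^ 2 / p ^ 2) / n) * (∫ τ in (0:ℝ)..10, τ * PP r n τ ^ (n - 4)) <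
      2 * (κ * r) * L * ∫ τ in (0:ℝ)..10, (τ * (τ - 9/5)) * PP r n τ ^ (n - 4) := by
    have t1 := ((tendsto_const_nhds (x := η)).add
      (tendsto_const_div_atTop_nhds_zero_nat (κ * (10 * L) ^ 2 + 4 * (10 * L) ^ 2 / p ^ 2))).mul la
    have t2 := lb.const_mul (2 * (κ * r) * L)
    apply t1.eventually_lt t2
    rw [add_zero, ← hJ1, ← hB, hη, div_mul_cancel₀ _ hJ10.ne']
    have : 0 < κ * r * L * B := by positivity
    linarith
  filter_upwards [e1, e2, e3, e4, eventually_ge_atTop 1] with n f1 f2 f3 f4 hn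
  have hn0 : (1:ℝ) ≤ n := by exact_mod_cast hn
  have hn1 : (0:ℝ) < n := by linarith
  have hhe : hh r n = L / n := hh_eq r n
  have hsq : L ^ 2 / (n:ℝ) ^ 2 ≤ L ^ 2 / n := by
    apply div_le_div_of_nonneg_left (by positivity) hn1
    nlinarith
  refine ⟨f1.le, f2, by linarith, ?_, ?_, ?_⟩
  · rw [hhe]
    have : 10 * (L / n) * (4 / p + 8 / p ^ 3) = (10 * L * (4 / p + 8 / p ^ 3)) / n := by ring
    rw [this]
    gcongr
    have : 0 ≤ κ * (2 * r * (10 * L) + (10 * L) ^ 2) := by positivity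
    have : 0 ≤ 4 * (10 * L) ^ 2 / p ^ 2 := by positivity
    linarith
  · rw [hhe]
    have e : κ * (2 * r * (10 * (L / n)) + (10 * (L / n)) ^ 2) + 4 * (10 * (L / n)) ^ 2 / p ^ 2 =
        κ * (2 * r * (10 * L)) / n + (100 * κ + 400 / p ^ 2) * (L ^ 2 / n ^ 2) := by field_simp; ring
    rw [e]
    have g1 : (100 * κ + 400 / p ^ 2) * (L ^ 2 / n ^ 2) ≤ (100 * κ + 400 / p ^ 2) * (L ^ 2 / n) := by gcongr
    have g2 : (10 * L * (4 / p + 8 / p ^ 3) + κ * (2 * r * (10 * L) + (10 * L) ^ 2) + 4 * (10 * L) ^ 2 / p ^ 2) / n =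
      10 * L * (4 / p + 8 / p ^ 3) / n + κ * (2 * r * (10 * L)) / n + (100 * κ + 400 / p ^ 2) * (L ^ 2 / n) := by ring
    rw [g2]
    have : 0 ≤ 10 * L * (4 / p + 8 / p ^ 3) / n := by positivity
    linarith
  · rw [I1_eq r hr0 hr1 n hn, I1'_eq r hr0 hr1 n hn, hhe]
    set a := ∫ τ in (0:ℝ)..10, τ * PP r n τ ^ (n - 4)
    set b := ∫ τ in (0:ℝ)..10, (τ * (τ - 9/5)) * PP r n τ ^ (n - 4)
    have hS : 0 < √(1 - r ^ 2) ^ (n - 4) := pow_pos (Real.sqrt_pos.2 h1) _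
    set S := √(1 - r ^ 2) ^ (n - 4)
    have := mul_le_mul_of_nonneg_left f4.le (show 0 ≤ L ^ 2 * S / (n:ℝ) ^ 3 by positivity)
    calc _ = L ^ 2 * S / (n:ℝ) ^ 3 * ((η + (κ * (10 * L) ^ 2 + 4 * (10 * L) ^ 2 / p ^ 2) / n) * a) := by
          field_simp
          ring
      _ ≤ _ := this
      _ = _ := by field_simp

lemma final_ineq (r : ℝ) (hr0 : 0 < r) (hr1 : r < 1) : ∀ᶠ n : ℕ in atTop,
    0 < (∫ τ in (0:ℝ)..10, τ * PP r n τ ^ (n - 3)) ∧ 0 ≤ (∫ τ in (0:ℝ)..10, τ ^ 2 * PP r n τ ^ (n - 3)) ∧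
    (∫ τ in (0:ℝ)..10, τ ^ 2 * PP r n τ ^ (n - 3)) * ((n:ℝ) / (n - 1)) ≤ 
      1 / exp 1 * (∫ τ in (0:ℝ)..10, τ * PP r n τ ^ (n - 3)) ^ 2 := by
  have la := int_tendsto r hr0 hr1 3 (fun τ => τ) continuous_id
  have lb := int_tendsto r hr0 hr1 3 (fun τ => τ ^ 2) (by fun_prop)
  have lr : Tendsto (fun n : ℕ => (n:ℝ) / (n - 1)) atTop (𝓝 1) := by
    have h : Tendsto (fun n : ℕ => 1 / (1 - 1 / (n:ℝ))) atTop (𝓝 (1 / (1 - 0))) :=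
      tendsto_const_nhds.div (tendsto_const_nhds.sub (tendsto_const_div_atTop_nhds_zero_nat 1)) (by norm_num)
    rw [sub_zero, div_one] at h
    refine h.congr' ?_
    filter_upwards [eventually_ge_atTop 2] with n hn
    have hn0 : (2:ℝ) ≤ n := by exact_mod_cast hn
    have : (n:ℝ) - 1 ≠ 0 := by linarith
    field_simp
  have t2 := (lb.mul lr).eventually_lt ((la.pow 2).const_mul (1 / exp 1)) (by rw [mul_one]; exact N2)
  filter_upwards [la.eventually (lt_mem_nhds N0), t2] with n h1 h2
  refine ⟨h1, ?_, h2.le⟩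
  apply intervalIntegral.integral_nonneg (by norm_num)
  intro τ _
  have := PP_nonneg r n τ
  positivity

end Asy

open Polynomial in
lemma bHat_pos_one (μ : ℝ) (hμ : 1/2 < μ) (ε : Bool) (d : ℕ) (hd : 1 ≤ d) (w : ℕ → ℝ) (hw : ∀ i < d, 0 < w i) :
    0 < (Stm.bHat μ ε d w).eval 1 := by
  unfold Stm.bHat
  rw [eval_finsetSum]
  apply Finset.sum_pos
  · intro i hi
    rw [eval_mul, eval_C]
    exact mul_pos (hw i (Finset.mem_range.1 hi)) (gP_pos_one μ hμ ε i)
  · exact ⟨0, Finset.mem_range.2 hd⟩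

lemma main_eventually
    (θ θ' : ℝ) (hθ0 : 0 < θ) (hθθ' : θ < θ') (hθ' : θ' ≤ π / 2) :
    ∀ᶠ n : ℕ in atTop, 0 ≤ (Mcode n θ : ℝ) * capMass n θ θ' / MLev (n - 1) θ' ∧
      (Mcode n θ : ℝ) * capMass n θ θ' / MLev (n - 1) θ' ≤ 1 / Real.exp 1 := by
  have hpi := Real.pi_pos
  have hc0 : 0 ≤ cos θ' := Real.cos_nonneg_of_mem_Icc ⟨by linarith, hθ'⟩
  have hcc : cos θ' < cos θ := Real.cos_lt_cos_of_nonneg_of_le_pi hθ0.le (by linarith) hθθ'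
  have hc1 : cos θ < 1 := by
    have := Real.cos_lt_cos_of_nonneg_of_le_pi le_rfl (by linarith : θ ≤ π) hθ0
    rwa [Real.cos_zero] at this
  have hc1' : cos θ' < 1 := hcc.trans hc1
  set r := √((cos θ - cos θ') / (1 - cos θ')) with hrdef
  have harg : 0 < (cos θ - cos θ') / (1 - cos θ') := div_pos (by linarith) (by linarith)
  have hr0 : 0 < r := Real.sqrt_pos.2 harg
  have hrsq : r ^ 2 = (cos θ - cos θ') / (1 - cos θ') := Real.sq_sqrt harg.le
  have hr : r ^ 2 * (1 - cos θ') = cos θ - cos θ' := by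
    rw [hrsq, div_mul_cancel₀]; linarith
  have hr1 : r < 1 := by
    by_contra h
    push Not at h
    have : 1 ≤ r ^ 2 := one_le_pow₀ h
    nlinarith
  obtain ⟨K, hK, η, hη, hpar⟩ := Asy.params (cos θ') r hc1' hr0 hr1
  obtain ⟨n0, hn0⟩ := Stm.g_exists (cos θ') K η hc0 hc1' hK hη
  filter_upwards [hpar, Asy.final_ineq r hr0 hr1, eventually_ge_atTop n0, eventually_ge_atTop 8] with n hp hf hnn hn8
  obtain ⟨p1, p2, p3, p4, p5, p6⟩ := hp
  obtain ⟨f1, f2, f3⟩ := hf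
  obtain ⟨ε, d, hd, hs, hM⟩ := Stm.MLev_data n hn8 θ' hc0 hc1'
  obtain ⟨w, hw, hneg, hwin⟩ := hn0 n hnn ε d hd hs
  have hn8' : (8:ℝ) ≤ n := by exact_mod_cast hn8
  have hμ : 1/2 < ((n:ℝ) - 1) / 2 := by linarith
  have hcast : ((n - 1 : ℕ) : ℝ) / 2 = ((n:ℝ) - 1) / 2 := by
    rw [Nat.cast_sub (by omega)]; simp
  have hB1 := bHat_pos_one _ hμ ε d hd w hw
  have hMpos : 0 < MLev (n - 1) θ' := by
    rw [hM, Stm.gA_eval]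
    have := gP_pos_one _ hμ ε d
    cases ε <;> simp <;> linarith
  set B1 := (Stm.bHat (((n:ℝ) - 1) / 2) ε d w).eval 1 with hB1d
  have hg1 : (gA (((n:ℝ) - 1) / 2) ε d * Stm.bHat (((n:ℝ) - 1) / 2) ε d w).eval 1 = MLev (n - 1) θ' * B1 := by
    rw [Polynomial.eval_mul, ← hM]
  have hhp := Asy.hh_pos r hr0 hr1 n (by omega)
  have h1r : 0 < 1 - r ^ 2 := by nlinarith
  have hω : 0 < √(1 - r ^ 2) ^ (n - 3) := pow_pos (Real.sqrt_pos.2 h1r) _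
  have hJ0 : 0 < ∫ u : ℝ, √(1 - u ^ 2) ^ (n - 3) := by
    rw [← Asy.tot_eq n (by omega)]; exact Asy.tot_pos n (by omega)
  set J0 := ∫ u : ℝ, √(1 - u ^ 2) ^ (n - 3) with hJ0d
  set a := ∫ τ in (0:ℝ)..10, τ * Asy.PP r n τ ^ (n - 3) with had
  set b := ∫ τ in (0:ℝ)..10, τ ^ 2 * Asy.PP r n τ ^ (n - 3) with hbd
  set h := Asy.hh r n with hhd
  set ω := √(1 - r ^ 2) ^ (n - 3) with hωd
  have key : ∀ A : Finset (EuclideanSpace ℝ (Fin n)), (∀ x ∈ A, ‖x‖ = 1) → 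
      (∀ x ∈ A, ∀ y ∈ A, x ≠ y → ⟪x, y⟫ ≤ Real.cos θ) → (A.card : ℝ) ≤ MLev (n - 1) θ' * b * J0 / (h * ω * a ^ 2) := by
    intro A hA1 hAc
    have hcb := Sph.code_bound (E := EuclideanSpace ℝ (Fin n)) (n := n) (by omega) (by simp) (Asy.FF r n) (Asy.FF_meas r n)
      (Asy.FF_nonneg r n) _ (Asy.FF_le r n) (fun u hu => by
        have := abs_le.1 (Asy.FF_supp r hr0 hr1 n (by omega) u hu)
        constructor <;> linarith [this.1, this.2])
      (gA (((n:ℝ) - 1) / 2) ε d * Stm.bHat (((n:ℝ) - 1) / 2) ε d w) B1 (cos θ) hc1 A hA1 hAc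
      (fun z f v hz hvz hv => by
        have := LP_main (n := n) (by omega) z hz f v hvz hv ε d w hw
        rw [hcast] at this
        exact this)
      (fun t ht htc => Sgn.hJ_sign (c' := cos θ') (r := r) (q := (1 + r) / 2) (e := 10 * h) (K := K) (η := η) (N := n) n (by omega)
        hc0 hcc hc1 hr0 hr (by linarith) (by positivity) p1 p2 p3 (by linarith) p4 p5 (Asy.FF r n) (Asy.FF_meas r n)
        (Asy.FF_nonneg r n) _ (Asy.FF_le r n) (Asy.FF_supp r hr0 hr1 n (by omega)) _ _ hs hneg hwin p6 t ht htc)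
      hB1.le (by rw [hg1]; positivity)
    rw [Asy.I2_eq r hr0 hr1 n (by omega), Asy.I3_eq r hr0 hr1 n (by omega), hg1, ← had, ← hbd, ← hhd, ← hωd, ← hJ0d] at hcb
    rw [le_div_iff₀ (by positivity)]
    have hpos : 0 < B1 * h ^ 3 * ω := by positivity
    apply le_of_mul_le_mul_left _ hpos
    calc _ = B1 * A.card * (h ^ 2 * ω * a) ^ 2 := by ring
      _ ≤ _ := hcb
      _ = _ := by ring
  have hMc : (Mcode n θ : ℝ) ≤ MLev (n - 1) θ' * b * J0 / (h * ω * a ^ 2) := by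
    have hmem := Nat.sSup_mem (s := {N : ℕ | ∃ A : Finset (EuclideanSpace ℝ (Fin n)), A.card = N ∧
      (∀ x ∈ A, ‖x‖ = 1) ∧ ∀ x ∈ A, ∀ y ∈ A, x ≠ y → ⟪x, y⟫ ≤ Real.cos θ}) ⟨0, ∅, by simp⟩ 
      ⟨⌊MLev (n - 1) θ' * b * J0 / (h * ω * a ^ 2)⌋₊, by
        rintro N ⟨A, rfl, hA1, hAc⟩
        exact Nat.le_floor (key A hA1 hAc)⟩
    obtain ⟨A, hAN, hA1, hAc⟩ := hmem
    have := key A hA1 hAc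
    rw [hAN] at this
    exact this
  have hcap : capMass n θ θ' ≤ h * ω * (n / (n - 1)) / J0 := by
    unfold capMass
    rw [← hrdef, Asy.tot_eq n (by omega), ← hJ0d]
    gcongr
    exact Asy.cap_le n (by omega) r hr0 hr1
  have hcap0 : 0 ≤ capMass n θ θ' := by
    unfold capMass
    rw [← hrdef, Asy.tot_eq n (by omega), ← hJ0d]
    exact div_nonneg (Asy.cap_nonneg n r hr0 hr1) hJ0.le
  refine ⟨by positivity, ?_⟩
  rw [div_le_iff₀ hMpos]
  have hX0 : 0 ≤ MLev (n - 1) θ' * b * J0 / (h * ω * a ^ 2) := by positivity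
  calc (Mcode n θ : ℝ) * capMass n θ θ' ≤ MLev (n - 1) θ' * b * J0 / (h * ω * a ^ 2) * (h * ω * (n / (n - 1)) / J0) :=
        mul_le_mul hMc hcap hcap0 hX0
    _ = (b * (n / (n - 1))) / a ^ 2 * MLev (n - 1) θ' := by
        have : (n:ℝ) - 1 ≠ 0 := by linarith
        field_simp
    _ ≤ _ := by
        apply mul_le_mul_of_nonneg_right _ hMpos.le
        rw [div_le_iff₀ (by positivity)]
        exact f3

/-- For fixed `0 < θ < θ' ≤ π/2`,
`M(n,θ) ≤ (1+o(1))·e⁻¹·M_Lev(n-1,θ')/μ_n(θ,θ')`; equivalently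
`limsup_{n→∞} M(n,θ)·μ_n(θ,θ')/M_Lev(n-1,θ') ≤ 1/e`. -/
theorem spherical_code_bound_improvement
    (θ θ' : ℝ) (hθ0 : 0 < θ) (hθθ' : θ < θ') (hθ' : θ' ≤ π / 2) :
    limsup (fun n : ℕ => (Mcode n θ : ℝ) * capMass n θ θ' / MLev (n - 1) θ') atTop ≤
      1 / Real.exp 1 := by
  have h := main_eventually θ θ' hθ0 hθθ' hθ'
  exact limsup_le_of_le
    (IsCoboundedUnder.of_frequently_ge (a := 0) (h.mono fun _ hx => hx.1).frequently)
    (h.mono fun _ hx => hx.2)
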